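/- Let μ ∈ {1,-1}, s₀ > 0, u₀ ∈ H^{s₀}(𝕋), and let η : ℝ → ℝ be smooth and compactly supported. For τ ∈ (0,1] let u_τ ∈ C(ℝ, H^{s₀}(𝕋)) be the mild solution of the projected equation with datum u₀. Then for every s₁ with 0 ≤ s₁ < s₀ there exists C > 0 (depending on u₀, s₀, s₁, η but not on τ) such that for every τ ∈ (0,1], sup_{t' ∈ [0,4τ]} ‖(η(nτ) u_τ(nτ + t'))_{n∈ℤ}‖_{X^{s₁,3/8}_τ} ≤ C. -/

import Mathlib

noncomputable section

open MeasureTheory Complex Filter Topology AddCircle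
open scoped ENNReal

abbrev Torus := AddCircle (2 * Real.pi)

instance : Fact (0 < 2 * Real.pi) := ⟨by positivity⟩

/-- Japanese bracket `⟨x⟩ = (1+|x|²)^{1/2}`. -/
def jbr (x : ℝ) : ℝ := Real.sqrt (1 + x ^ 2)

/-- The Sobolev `H^s` norm on the torus, via Fourier coefficients. -/
def hsNorm (s : ℝ) (f : Torus → ℂ) : ℝ :=
  Real.sqrt (∑' k : ℤ, jbr k ^ (2 * s) * ‖fourierCoeff f k‖ ^ 2)

/-- Membership in `H^s(𝕋)` (as a function): square integrable with finite `H^s` norm. -/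
def InHs (s : ℝ) (f : Torus → ℂ) : Prop :=
  MemLp f 2 haarAddCircle ∧ Summable fun k : ℤ => jbr k ^ (2 * s) * ‖fourierCoeff f k‖ ^ 2

/-- The frequency cutoff `Π_τ`, keeping the Fourier modes `|k| ≤ τ^{-1/2}`. -/
def projC (τ : ℝ) (f : Torus → ℂ) : Torus → ℂ := fun x =>
  ∑' k : ℤ, if |(k : ℝ)| ≤ τ ^ (-(1 : ℝ) / 2) then fourierCoeff f k * fourier k x else 0

/-- The free Schrödinger group `e^{it∂_x²}`, given by the Fourier multiplier `e^{-itk²}`. -/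
def schrod (t : ℝ) (f : Torus → ℂ) : Torus → ℂ := fun x =>
  ∑' k : ℤ, Complex.exp (-Complex.I * t * (k : ℂ) ^ 2) * fourierCoeff f k * fourier k x

/-- Continuity on `I` with values in `L²(𝕋)`. -/
def ContL2On (I : Set ℝ) (u : ℝ → Torus → ℂ) : Prop :=
  (∀ t ∈ I, MemLp (u t) 2 haarAddCircle) ∧
  ∀ t ∈ I, Tendsto (fun t' => eLpNorm (u t' - u t) 2 haarAddCircle) (nhdsWithin t I) (nhds 0)

/-- Continuity on `I` with values in `H^s(𝕋)`. -/
def ContHsOn (s : ℝ) (I : Set ℝ) (u : ℝ → Torus → ℂ) : Prop :=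
  (∀ t ∈ I, InHs s (u t)) ∧
  ∀ t ∈ I, Tendsto (fun t' => hsNorm s (u t' - u t)) (nhdsWithin t I) (nhds 0)

/-- The cubic nonlinearity `|f|² f` (pointwise). -/
def cubic (f : Torus → ℂ) : Torus → ℂ := fun x => (‖f x‖ : ℂ) ^ 2 * f x

/-- The filtered cubic nonlinearity `Π_τ(|Π_τ f|² Π_τ f)`. -/
def projCubic (τ : ℝ) (f : Torus → ℂ) : Torus → ℂ := projC τ (cubic (projC τ f))

/-- `v` is the (global-in-time) mild solution of the projected equation
`i∂_t v = -∂_x² v - μ Π_τ(|Π_τ v|² Π_τ v)`, `v(0) = Π_τ u₀`. -/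
def IsProjSolution (μ τ : ℝ) (u₀ : Torus → ℂ) (v : ℝ → Torus → ℂ) : Prop :=
  ContL2On Set.univ v ∧
  ∀ t : ℝ, ∀ x : Torus,
    v t x = schrod t (projC τ u₀) x
      + Complex.I * μ * ∫ s in (0 : ℝ)..t, schrod (t - s) (projCubic τ (v s)) x

/-- The cubic NLS `i∂_t u = -∂_x² u - μ |u|² u` holds in the sense of space-time
distributions on `(0,T) × 𝕋` (tested against `ψ(t) e^{-ikx}`). -/
def DistribSolOn (μ T : ℝ) (u : ℝ → Torus → ℂ) : Prop :=
  ∀ k : ℤ, ∀ ψ : ℝ → ℂ, ContDiff ℝ (⊤ : ℕ∞) ψ → tsupport ψ ⊆ Set.Ioo 0 T →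
    -Complex.I * ∫ t : ℝ, deriv ψ t * fourierCoeff (u t) k
      = (k : ℂ) ^ 2 * ∫ t : ℝ, ψ t * fourierCoeff (u t) k
        - (μ : ℂ) * ∫ t : ℝ, ψ t * fourierCoeff (cubic (u t)) k

/-- `u ∈ L⁴((0,T) × 𝕋)`. -/
def SpaceTimeL4 (T : ℝ) (u : ℝ → Torus → ℂ) : Prop :=
  MemLp (fun p : ℝ × Torus => u p.1 p.2) 4
    ((volume.restrict (Set.Ioo 0 T)).prod haarAddCircle)

/-- Space-time Fourier transform `ṽ(σ,k)` of `v : ℝ × 𝕋 → ℂ`. -/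
def stFT (v : ℝ → Torus → ℂ) (σ : ℝ) (k : ℤ) : ℂ :=
  ∫ t : ℝ, Complex.exp (-Complex.I * σ * t) * fourierCoeff (v t) k

/-- The (continuous) Bourgain `X^{s,b}` norm, valued in `ℝ≥0∞`. -/
def XcNorm (s b : ℝ) (v : ℝ → Torus → ℂ) : ℝ≥0∞ :=
  (∫⁻ σ : ℝ, ∑' k : ℤ,
      ENNReal.ofReal ((1 + |(k : ℝ)|) ^ (2 * s) * (1 + |σ + (k : ℝ) ^ 2|) ^ (2 * b)
        * ‖stFT v σ k‖ ^ 2)) ^ (1 / 2 : ℝ)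

/-- The restriction norm `‖u‖_{X^{s,b}(T)}` is bounded by `M`: some extension of `u`
from `(0,T)` has `X^{s,b}` norm at most `M`. -/
def XresBounded (s b T : ℝ) (u : ℝ → Torus → ℂ) (M : ℝ≥0∞) : Prop :=
  ∃ v : ℝ → Torus → ℂ, (∀ t ∈ Set.Ioo 0 T, v t = u t) ∧ XcNorm s b v ≤ M

/-- `u` is a Bourgain-class solution of cubic NLS on `[0,T]` with datum `u₀`. -/
def IsNLSSolution (μ T : ℝ) (u₀ : Torus → ℂ) (u : ℝ → Torus → ℂ) : Prop :=
  ContL2On (Set.Icc 0 T) u ∧ SpaceTimeL4 T u ∧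
  (∃ b ∈ Set.Ioo (1 / 2 : ℝ) (5 / 8 : ℝ), ∃ v : ℝ → Torus → ℂ,
      (∀ t ∈ Set.Ioo 0 T, v t = u t) ∧ XcNorm 0 b v < ⊤) ∧
  u 0 = u₀ ∧ DistribSolOn μ T u

/-- One step of the pointwise nonlinear flow `e^{iμτ|Π_τ f|²} Π_τ f`. -/
def lieFlow (μ τ : ℝ) (f : Torus → ℂ) : Torus → ℂ := fun x =>
  Complex.exp (Complex.I * μ * τ * (‖projC τ f x‖ : ℂ) ^ 2) * projC τ f x

/-- The filtered Lie splitting scheme `u⁰ = Π_τ u₀`,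
`u^{n+1} = e^{iτ∂_x²} Π_τ (e^{iμτ|Π_τ uⁿ|²} Π_τ uⁿ)`. -/
def lieScheme (μ τ : ℝ) (u₀ : Torus → ℂ) : ℕ → Torus → ℂ
  | 0 => projC τ u₀
  | n + 1 => schrod τ (projC τ (lieFlow μ τ (lieScheme μ τ u₀ n)))

/-- `d_τ(σ) = (e^{iτσ}-1)/τ`. -/
def dtau (τ σ : ℝ) : ℂ := (Complex.exp (Complex.I * τ * σ) - 1) / τ

/-- The discrete Bourgain `X^{s,b}_τ` norm of a sequence of functions on the torus. -/
def XdNorm (τ s b : ℝ) (u : ℤ → Torus → ℂ) : ℝ :=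
  Real.sqrt (∫ σ in Set.Ioc (-(Real.pi / τ)) (Real.pi / τ),
    ∑' k : ℤ, jbr k ^ (2 * s) * jbr ‖dtau τ (σ - (k : ℝ) ^ 2)‖ ^ (2 * b) *
      ‖(τ : ℂ) * ∑' m : ℤ, fourierCoeff (u m) k * Complex.exp (Complex.I * m * τ * σ)‖ ^ 2)

/-- The discrete space-time Lebesgue norm `‖(u_n)‖_{ℓ^p_τ L^q}`. -/
def lpLqNorm (τ p q : ℝ) (u : ℤ → Torus → ℂ) : ℝ :=
  (τ * ∑' n : ℤ, (eLpNorm (u n) (ENNReal.ofReal q) haarAddCircle).toReal ^ p) ^ (1 / p)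

/-!
Write `w t = e^{-it∂_x²} u_τ(t)` for the profile of the solution in the interaction picture. On
time intervals of bounded length, the `L⁴` Strichartz estimate on the torus and a continuation
argument bound `w` in `H^{s₁}`, uniformly in the frequency cutoff, and show that it is
`1/2`-Hölder continuous in time; the loss from `s₀` to `s₁` pays for summing the translation
differences of `w` that measure fractional smoothness.

The discrete norm only sees the profile: after the change of variables `y = τ (σ - k²)` all modes
live on one torus, so that `‖(u_n)‖_{X^{s,b}_τ}` is the `L²` norm of the vector-valued Fourier
series with coefficients `⟨∂_x⟩^s w(nτ)`, weighted by `⟨d_τ⟩^{2b}`. Up to a constant this weight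
is at most `1 + Σ_j (2^j τ)^{-2b} |e^{i 2^j y} - 1|²` over the dyadic scales `2^j τ ≤ 1`. By
Plancherel each term is a sum of increments of `w` over times `2^j τ`, of size `(2^j τ)^{1-2b}` by
the Hölder bound, and these form a convergent geometric series since `b < 1/2`.
-/

namespace ProjectedNLS

/-! ### Integrals over space-time slabs -/

/-- The product of Lebesgue measure on the time interval `(a, b]` and normalized Haar measure on
the torus. -/
def slab (a b : ℝ) : Measure (ℝ × Torus) :=
  (volume.restrict (Set.Ioc a b)).prod haarAddCircle

theorem integrable_haarAddCircle_of_continuous {F : Type*} [NormedAddCommGroup F]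
    {f : Torus → F} (hf : Continuous f) : Integrable f haarAddCircle :=
  integrableOn_univ.mp (hf.continuousOn.integrableOn_compact isCompact_univ)

theorem integrable_slab_of_continuous {F : Type*} [NormedAddCommGroup F]
    {f : ℝ × Torus → F} (hf : Continuous f) (a b : ℝ) : Integrable f (slab a b) := by
  have restrict_eq : slab a b =
      ((volume : Measure ℝ).prod haarAddCircle).restrict (Set.Ioc a b ×ˢ Set.univ) := by
    rw [slab, ← Measure.prod_restrict, Measure.restrict_univ]
  rw [restrict_eq]
  exact (hf.continuousOn.integrableOn_compact (isCompact_Icc.prod isCompact_univ)).mono_set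
    (Set.prod_mono_left Set.Ioc_subset_Icc_self)

theorem integral_slab_eq_intervalIntegral {F : Type*} [NormedAddCommGroup F] [NormedSpace ℝ F]
    {f : ℝ × Torus → F} (hf : Continuous f) {a b : ℝ} (hab : a ≤ b) :
    ∫ p, f p ∂slab a b = ∫ t in a..b, ∫ x, f (t, x) ∂haarAddCircle := by
  rw [slab, integral_prod _ (integrable_slab_of_continuous hf a b),
    intervalIntegral.integral_of_le hab]

theorem slab_add_slab {a b c : ℝ} (hab : a ≤ b) (hbc : b ≤ c) :
    slab a b + slab b c = slab a c := by
  rw [slab, slab, slab, ← Measure.add_prod,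
    ← Measure.restrict_union (Set.Ioc_disjoint_Ioc_of_le le_rfl) measurableSet_Ioc,
    Set.Ioc_union_Ioc_eq_Ioc hab hbc]

theorem integral_slab_add {f : ℝ × Torus → ℝ} (hf : Continuous f) {a b c : ℝ}
    (hab : a ≤ b) (hbc : b ≤ c) :
    ∫ p, f p ∂slab a b + ∫ p, f p ∂slab b c = ∫ p, f p ∂slab a c := by
  rw [← slab_add_slab hab hbc, integral_add_measure (integrable_slab_of_continuous hf a b)
    (integrable_slab_of_continuous hf b c)]

theorem integral_slab_mono {f g : ℝ × Torus → ℝ} (hf : Continuous f) (hg : Continuous g)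
    {a b : ℝ} (h : ∀ t ∈ Set.Icc a b, ∀ x, f (t, x) ≤ g (t, x)) :
    ∫ p, f p ∂slab a b ≤ ∫ p, g p ∂slab a b := by
  refine integral_mono_ae (integrable_slab_of_continuous hf a b)
    (integrable_slab_of_continuous hg a b) ?_
  refine Measure.ae_prod_iff_ae_ae (measurableSet_le hf.measurable hg.measurable) |>.mpr ?_
  filter_upwards [ae_restrict_mem measurableSet_Ioc] with t ht
  exact Eventually.of_forall (h t (Set.Ioc_subset_Icc_self ht))

theorem integral_slab_const (c : ℝ) {a b : ℝ} (hab : a ≤ b) :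
    ∫ _, c ∂slab a b = c * (b - a) := by
  rw [integral_slab_eq_intervalIntegral continuous_const hab]
  simp [mul_comm]

/-! ### Plane waves and free evolutions -/

theorem norm_fourier (k : ℤ) (x : Torus) : ‖fourier k x‖ = 1 :=
  Circle.norm_coe _

theorem integral_fourier (k : ℤ) :
    ∫ x : Torus, fourier k x ∂haarAddCircle = if k = 0 then 1 else 0 := by
  simpa [fourierCoeff, Pi.single_apply, eq_comm] using
    congrFun (fourierCoeff_fourier (T := 2 * Real.pi) k) 0

theorem norm_exp_neg_I_mul_ofReal_mul_ofReal (t v : ℝ) : ‖exp (-I * t * v)‖ = 1 := by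
  rw [show -I * (t : ℂ) * v = ((-t * v : ℝ) : ℂ) * I by push_cast; ring, norm_exp_ofReal_mul_I]

/-- The solution `(t, x) ↦ exp (i (k x - k² t))` of the free Schrödinger equation. -/
def planeWave (k : ℤ) (p : ℝ × Torus) : ℂ :=
  exp (-I * p.1 * (k : ℂ) ^ 2) * fourier k p.2

theorem norm_planeWave (k : ℤ) (p : ℝ × Torus) : ‖planeWave k p‖ = 1 := by
  have := norm_exp_neg_I_mul_ofReal_mul_ofReal p.1 ((k : ℝ) ^ 2)
  push_cast at this
  rw [planeWave, norm_mul, this, norm_fourier, one_mul]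

@[fun_prop]
theorem continuous_planeWave (k : ℤ) : Continuous (planeWave k) := by
  unfold planeWave; fun_prop

theorem conj_planeWave (k : ℤ) (p : ℝ × Torus) :
    starRingEnd ℂ (planeWave k p) = exp (I * p.1 * (k : ℂ) ^ 2) * fourier (-k) p.2 := by
  simp [planeWave, ← exp_conj]

/-- Interaction-picture Fourier coefficients, indexed by a finite frequency set and carrying the
`ℓ²` norm. -/
abbrev Profile (S : Finset ℤ) := EuclideanSpace ℂ S

variable {S : Finset ℤ}

/-- The free Schrödinger evolution, evaluated at `p = (t, x)`, of the trigonometric polynomial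
with coefficients `z`. -/
def freeWave (z : Profile S) (p : ℝ × Torus) : ℂ :=
  ∑ k : S, z k * planeWave k p

theorem continuous_freeWave_comp {X : Type*} [TopologicalSpace X] {z : X → Profile S}
    {p : X → ℝ × Torus} (hz : Continuous z) (hp : Continuous p) :
    Continuous fun x => freeWave (z x) (p x) := by
  unfold freeWave; fun_prop

theorem continuous_freeWave_path {z : ℝ → Profile S} (hz : Continuous z) :
    Continuous fun p : ℝ × Torus => freeWave (z p.1) p :=
  continuous_freeWave_comp (hz.comp continuous_fst) continuous_id

theorem continuous_freeWave_const (z : Profile S) : Continuous (freeWave z) :=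
  continuous_freeWave_path (continuous_const (y := z))

theorem freeWave_add (z w : Profile S) (p : ℝ × Torus) :
    freeWave (z + w) p = freeWave z p + freeWave w p := by
  simp [freeWave, add_mul, Finset.sum_add_distrib]

theorem freeWave_sub (z w : Profile S) (p : ℝ × Torus) :
    freeWave (z - w) p = freeWave z p - freeWave w p := by
  simp [freeWave, sub_mul, Finset.sum_sub_distrib]

theorem norm_freeWave_le_sum (z : Profile S) (p : ℝ × Torus) :
    ‖freeWave z p‖ ≤ ∑ k : S, ‖z k‖ :=
  norm_sum_le_of_le _ fun k _ => by rw [norm_mul, norm_planeWave, mul_one]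

theorem norm_freeWave_le_card_mul (z : Profile S) (p : ℝ × Torus) :
    ‖freeWave z p‖ ≤ S.card * ‖z‖ := by
  calc ‖freeWave z p‖ ≤ ∑ k : S, ‖z k‖ := norm_freeWave_le_sum z p
    _ ≤ ∑ _k : S, ‖z‖ := Finset.sum_le_sum fun k _ => PiLp.norm_apply_le z k
    _ = S.card * ‖z‖ := by simp

/-! ### The `L⁴` Strichartz estimate on short time slabs -/

theorem norm_integral_exp_neg_I_mul_le (a v : ℝ) {l : ℝ} (hl : 0 ≤ l) :
    ‖∫ t in a..a + l, exp (-I * t * v)‖ ≤ 2 * l / (1 + l * |v| / 2) := by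
  have hpos : 0 < 1 + l * |v| / 2 := by positivity
  rcases le_or_gt (l * |v| / 2) 1 with hsmall | hlarge
  · calc ‖∫ t in a..a + l, exp (-I * t * v)‖ ≤ 1 * |a + l - a| :=
          intervalIntegral.norm_integral_le_of_norm_le_const fun t _ =>
            (norm_exp_neg_I_mul_ofReal_mul_ofReal t v).le
      _ = l := by rw [one_mul, add_sub_cancel_left, abs_of_nonneg hl]
      _ ≤ 2 * l / (1 + l * |v| / 2) := by rw [le_div_iff₀ hpos]; nlinarith
  · have hv : v ≠ 0 := by rintro rfl; norm_num at hlarge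
    have hprim : ∫ t in a..a + l, exp (-I * t * v) =
        (exp (-I * (a + l : ℝ) * v) - exp (-I * a * v)) / (-I * v) := by
      simp_rw [mul_right_comm (-I) _ (v : ℂ)]
      exact integral_exp_mul_complex (by simpa using hv)
    calc ‖∫ t in a..a + l, exp (-I * t * v)‖
        = ‖exp (-I * (a + l : ℝ) * v) - exp (-I * a * v)‖ / |v| := by rw [hprim]; simp
      _ ≤ (1 + 1) / |v| := by
          gcongr
          refine (norm_sub_le _ _).trans_eq ?_
          rw [norm_exp_neg_I_mul_ofReal_mul_ofReal, norm_exp_neg_I_mul_ofReal_mul_ofReal]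
      _ ≤ 2 * l / (1 + l * |v| / 2) := by
          rw [div_le_div_iff₀ (abs_pos.mpr hv) hpos]; nlinarith

theorem sum_range_one_div_one_add_sq_le {m : ℝ} (hm : 0 < m) (N : ℕ) :
    ∑ n ∈ Finset.range N, 1 / (1 + m ^ 2 * ((n : ℝ) + 1) ^ 2)
      ≤ 2 / m * (1 - 1 / (1 + m * N)) := by
  induction N with
  | zero => simp
  | succ N ih =>
    have telescoping_term : 1 / (1 + m ^ 2 * ((N : ℝ) + 1) ^ 2)
        ≤ 2 / m * (1 / (1 + m * N) - 1 / (1 + m * (N + 1))) := by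
      have closed_form : 2 / m * (1 / (1 + m * N) - 1 / (1 + m * (N + 1)))
          = 2 / ((1 + m * N) * (1 + m * (N + 1))) := by
        field_simp
        ring
      rw [closed_form, div_le_div_iff₀ (by positivity) (by positivity)]
      have : 0 ≤ m * N := by positivity
      nlinarith [sq_nonneg (m * (N + 1) - 1)]
    rw [Finset.sum_range_succ]
    push_cast
    linarith

theorem sum_int_one_div_one_add_sq_le {m : ℝ} (hm : 0 < m) (Q : Finset ℤ) :
    ∑ n ∈ Q, 1 / (1 + m ^ 2 * (n : ℝ) ^ 2) ≤ 1 + 4 / m := by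
  obtain ⟨N, hN⟩ : ∃ N : ℕ, Q ⊆ Finset.Icc (-N : ℤ) N :=
    ⟨Q.sup Int.natAbs, fun n hn => Finset.mem_Icc.mpr <| abs_le.mp <| by
      rw [Int.abs_eq_natAbs]; exact_mod_cast Finset.le_sup (f := Int.natAbs) hn⟩
  have hrange := sum_range_one_div_one_add_sq_le hm N
  have htail : 0 ≤ 2 / m * (1 / (1 + m * N)) := by positivity
  calc ∑ n ∈ Q, 1 / (1 + m ^ 2 * (n : ℝ) ^ 2)
      ≤ ∑ n ∈ Finset.Icc (-N : ℤ) N, 1 / (1 + m ^ 2 * (n : ℝ) ^ 2) :=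
        Finset.sum_le_sum_of_subset_of_nonneg hN fun _ _ _ => by positivity
    _ = 2 * ∑ n ∈ Finset.range N, 1 / (1 + m ^ 2 * ((n : ℝ) + 1) ^ 2) + 1 := by
        rw [Finset.sum_Icc_of_even_eq_range fun n => by simp, Finset.sum_range_succ']
        simp
        ring
    _ ≤ 1 + 4 / m := by
        rw [show 4 / m = 2 * (2 / m) by ring]; linarith

theorem sum_int_div_one_add_mul_sq_le {l : ℝ} (hl : 0 < l) (hl1 : l ≤ 1) (Q : Finset ℤ) :
    ∑ n ∈ Q, 2 * l / (1 + l * (n : ℝ) ^ 2) ≤ 10 * √l := by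
  have hsum := sum_int_one_div_one_add_sq_le (Real.sqrt_pos.mpr hl) Q
  rw [Real.sq_sqrt hl.le] at hsum
  have hl_le : l ≤ √l := Real.le_sqrt_of_sq_le (by nlinarith)
  calc ∑ n ∈ Q, 2 * l / (1 + l * (n : ℝ) ^ 2)
      = 2 * l * ∑ n ∈ Q, 1 / (1 + l * (n : ℝ) ^ 2) := by
        rw [Finset.mul_sum]; exact Finset.sum_congr rfl fun _ _ => (mul_one_div _ _).symm
    _ ≤ 2 * l * (1 + 4 / √l) := by gcongr
    _ = 2 * l + 8 * √l := by
        rw [show 2 * l * (1 + 4 / √l) = 2 * l + 8 * (l / √l) by ring, Real.div_sqrt]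
    _ ≤ 10 * √l := by linarith

/-- The phase `p₁² + p₂² - q₁² - q₂²` of the four-wave interaction `(p₁, p₂) → (q₁, q₂)`. -/
def fourWavePhase (p q : ℤ × ℤ) : ℤ :=
  p.1 ^ 2 + p.2 ^ 2 - (q.1 ^ 2 + q.2 ^ 2)

theorem fourWavePhase_eq_neg_two_mul {p q : ℤ × ℤ} (h : p.1 + p.2 = q.1 + q.2) :
    fourWavePhase p q = -(2 * (q.1 - p.1) * (q.1 - p.2)) := by
  rw [fourWavePhase, show q.2 = p.1 + p.2 - q.1 by linarith]; ring

/-- An upper bound for the four-wave interaction integral over a time slab of length `l`. -/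
def resonanceKernel (l : ℝ) (p q : ℤ × ℤ) : ℝ :=
  if p.1 + p.2 = q.1 + q.2 then 2 * l / (1 + l * |(fourWavePhase p q : ℝ)| / 2) else 0

theorem resonanceKernel_nonneg {l : ℝ} (hl : 0 ≤ l) (p q : ℤ × ℤ) :
    0 ≤ resonanceKernel l p q := by
  unfold resonanceKernel; split_ifs <;> positivity

theorem resonanceKernel_comm (l : ℝ) (p q : ℤ × ℤ) :
    resonanceKernel l p q = resonanceKernel l q p := by
  simp only [resonanceKernel, fourWavePhase, eq_comm (a := p.1 + p.2)]
  push_cast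
  rw [abs_sub_comm]

theorem resonanceKernel_le {l : ℝ} (hl : 0 ≤ l) {p q : ℤ × ℤ} (h : p.1 + p.2 = q.1 + q.2) :
    resonanceKernel l p q ≤ 2 * l / (1 + l * ((q.1 - p.1 : ℤ) : ℝ) ^ 2)
      + 2 * l / (1 + l * ((q.1 - p.2 : ℤ) : ℝ) ^ 2) := by
  rw [resonanceKernel, if_pos h, fourWavePhase_eq_neg_two_mul h]
  generalize q.1 - p.1 = m, q.1 - p.2 = n
  have habs : l * |((-(2 * m * n) : ℤ) : ℝ)| / 2 = l * (|(m : ℝ)| * |(n : ℝ)|) := by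
    push_cast; rw [abs_neg, abs_mul, abs_mul, abs_two]; ring
  rw [habs, ← sq_abs (m : ℝ), ← sq_abs (n : ℝ)]
  rcases le_total |(m : ℝ)| |(n : ℝ)| with hmn | hnm
  · refine le_add_of_le_of_nonneg ?_ (by positivity)
    rw [sq]; gcongr
  · refine le_add_of_nonneg_of_le (by positivity) ?_
    rw [sq]; gcongr

theorem sum_resonanceKernel_le {l : ℝ} (hl : 0 < l) (hl1 : l ≤ 1) (p : ℤ × ℤ)
    (Q : Finset (ℤ × ℤ)) : ∑ q ∈ Q, resonanceKernel l p q ≤ 20 * √l := by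
  set R := Q.filter fun q => p.1 + p.2 = q.1 + q.2
  have sum_shift_le (c : ℤ) :
      ∑ q ∈ R, 2 * l / (1 + l * ((q.1 - c : ℤ) : ℝ) ^ 2) ≤ 10 * √l := by
    have hinj : Set.InjOn (fun q : ℤ × ℤ => q.1 - c) R := fun x hx y hy hxy => by
      have hx := (Finset.mem_filter.mp hx).2
      have hy := (Finset.mem_filter.mp hy).2
      exact Prod.ext (by grind) (by grind)
    rw [← Finset.sum_image (f := fun n : ℤ => 2 * l / (1 + l * (n : ℝ) ^ 2)) hinj]
    exact sum_int_div_one_add_mul_sq_le hl hl1 _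
  calc ∑ q ∈ Q, resonanceKernel l p q = ∑ q ∈ R, resonanceKernel l p q := by
        simp only [R, Finset.sum_filter]
        exact Finset.sum_congr rfl fun q _ => by unfold resonanceKernel; split_ifs <;> rfl
    _ ≤ ∑ q ∈ R, (2 * l / (1 + l * ((q.1 - p.1 : ℤ) : ℝ) ^ 2)
          + 2 * l / (1 + l * ((q.1 - p.2 : ℤ) : ℝ) ^ 2)) :=
        Finset.sum_le_sum fun q hq => resonanceKernel_le hl.le (Finset.mem_filter.mp hq).2
    _ ≤ 20 * √l := by
        rw [Finset.sum_add_distrib]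
        linarith [sum_shift_le p.1, sum_shift_le p.2]

theorem planeWave_mul_mul_conj (p q : ℤ × ℤ) (y : ℝ × Torus) :
    planeWave p.1 y * planeWave p.2 y * starRingEnd ℂ (planeWave q.1 y * planeWave q.2 y) =
      exp (-I * y.1 * (fourWavePhase p q : ℝ)) * fourier (p.1 + p.2 - (q.1 + q.2)) y.2 := by
  rw [map_mul, conj_planeWave, conj_planeWave, planeWave, planeWave,
    show p.1 + p.2 - (q.1 + q.2) = p.1 + p.2 + (-q.1 + -q.2) by ring,
    fourier_add, fourier_add, fourier_add,
    show -I * y.1 * ((fourWavePhase p q : ℝ) : ℂ) = -I * y.1 * (p.1 : ℂ) ^ 2 +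
      -I * y.1 * (p.2 : ℂ) ^ 2 + I * y.1 * (q.1 : ℂ) ^ 2 + I * y.1 * (q.2 : ℂ) ^ 2 by
        simp only [fourWavePhase]; push_cast; ring,
    exp_add, exp_add, exp_add]
  ring

theorem norm_integral_fourWave_le (p q : ℤ × ℤ) (a : ℝ) {l : ℝ} (hl : 0 ≤ l) :
    ‖∫ y, planeWave p.1 y * planeWave p.2 y *
      starRingEnd ℂ (planeWave q.1 y * planeWave q.2 y) ∂slab a (a + l)‖
      ≤ resonanceKernel l p q := by
  simp_rw [planeWave_mul_mul_conj]
  rw [integral_slab_eq_intervalIntegral (by fun_prop) (by linarith)]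
  simp_rw [integral_const_mul, integral_fourier, sub_eq_zero]
  rw [intervalIntegral.integral_mul_const, resonanceKernel]
  split_ifs
  · simpa using norm_integral_exp_neg_I_mul_le a (fourWavePhase p q) hl
  · simp

theorem ofReal_norm_freeWave_pow_four (z : Profile S) (y : ℝ × Torus) :
    ((‖freeWave z y‖ ^ 4 : ℝ) : ℂ) = ∑ p : S × S, ∑ q : S × S,
      z p.1 * z p.2 * starRingEnd ℂ (z q.1 * z q.2) *
        (planeWave p.1 y * planeWave p.2 y *
          starRingEnd ℂ (planeWave q.1 y * planeWave q.2 y)) := by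
  have hsq : freeWave z y ^ 2 =
      ∑ p : S × S, z p.1 * z p.2 * (planeWave p.1 y * planeWave p.2 y) := by
    rw [sq, freeWave, Finset.sum_mul_sum, Fintype.sum_prod_type]
    exact Finset.sum_congr rfl fun i _ => Finset.sum_congr rfl fun j _ => by ring
  calc ((‖freeWave z y‖ ^ 4 : ℝ) : ℂ) = freeWave z y ^ 2 * starRingEnd ℂ (freeWave z y ^ 2) := by
        rw [mul_conj, normSq_eq_norm_sq, norm_pow]; push_cast; ring
    _ = _ := by
        rw [hsq, map_sum, Finset.sum_mul_sum]
        refine Finset.sum_congr rfl fun p _ => Finset.sum_congr rfl fun q _ => ?_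
        simp only [map_mul]
        ring

theorem integral_norm_freeWave_pow_four_le_sum (z : Profile S) (a : ℝ) {l : ℝ} (hl : 0 ≤ l) :
    ∫ y, ‖freeWave z y‖ ^ 4 ∂slab a (a + l) ≤
      ∑ p : S × S, ∑ q : S × S, resonanceKernel l (p.1, p.2) (q.1, q.2) *
        (‖z p.1 * z p.2‖ * ‖z q.1 * z q.2‖) := by
  refine (Real.le_norm_self _).trans ?_
  rw [← norm_real, ← integral_complex_ofReal]
  simp_rw [ofReal_norm_freeWave_pow_four]
  rw [integral_finsetSum _ fun p _ => integrable_slab_of_continuous (by fun_prop) a (a + l)]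
  refine norm_sum_le_of_le _ fun p _ => ?_
  rw [integral_finsetSum _ fun q _ => integrable_slab_of_continuous (by fun_prop) a (a + l)]
  refine norm_sum_le_of_le _ fun q _ => ?_
  rw [integral_const_mul, norm_mul, norm_mul, RCLike.norm_conj, mul_comm]
  gcongr
  exact norm_integral_fourWave_le ((p.1 : ℤ), (p.2 : ℤ)) ((q.1 : ℤ), (q.2 : ℤ)) a hl

theorem schur_test {ι : Type*} [Fintype ι] {K : ι → ι → ℝ} {C : ℝ} (hK : ∀ i j, 0 ≤ K i j)
    (hsymm : ∀ i j, K i j = K j i) (hrow : ∀ i, ∑ j, K i j ≤ C) (u : ι → ℝ) :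
    ∑ i, ∑ j, K i j * (u i * u j) ≤ C * ∑ i, u i ^ 2 := by
  have hdiag : ∑ i, ∑ j, K i j * u i ^ 2 ≤ C * ∑ i, u i ^ 2 := by
    rw [Finset.mul_sum]
    refine Finset.sum_le_sum fun i _ => ?_
    rw [← Finset.sum_mul]
    gcongr
    exact hrow i
  have hswap : ∑ i, ∑ j, K i j * u j ^ 2 = ∑ i, ∑ j, K i j * u i ^ 2 := by
    rw [Finset.sum_comm]; simp_rw [fun i j => hsymm j i]
  calc ∑ i, ∑ j, K i j * (u i * u j)
      ≤ ∑ i, ∑ j, (K i j * u i ^ 2 + K i j * u j ^ 2) / 2 := by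
        refine Finset.sum_le_sum fun i _ => Finset.sum_le_sum fun j _ => ?_
        nlinarith [mul_nonneg (hK i j) (sq_nonneg (u i - u j))]
    _ = (∑ i, ∑ j, K i j * u i ^ 2 + ∑ i, ∑ j, K i j * u j ^ 2) / 2 := by
        simp_rw [← Finset.sum_div, Finset.sum_add_distrib]
    _ ≤ C * ∑ i, u i ^ 2 := by rw [hswap]; linarith

theorem sum_norm_mul_sq (z : Profile S) : ∑ p : S × S, ‖z p.1 * z p.2‖ ^ 2 = ‖z‖ ^ 4 := by
  calc ∑ p : S × S, ‖z p.1 * z p.2‖ ^ 2 = (∑ i, ‖z i‖ ^ 2) * ∑ i, ‖z i‖ ^ 2 := by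
        simp_rw [Finset.sum_mul_sum, Fintype.sum_prod_type, norm_mul, mul_pow]
    _ = ‖z‖ ^ 4 := by rw [← EuclideanSpace.norm_sq_eq z]; ring

theorem integral_norm_freeWave_pow_four_le (z : Profile S) (a : ℝ) {l : ℝ} (hl : 0 < l)
    (hl1 : l ≤ 1) : ∫ y, ‖freeWave z y‖ ^ 4 ∂slab a (a + l) ≤ 20 * √l * ‖z‖ ^ 4 := by
  have hrow (p : S × S) :
      ∑ q : S × S, resonanceKernel l (p.1, p.2) (q.1, q.2) ≤ 20 * √l := by
    have hinj : Function.Injective fun q : S × S => ((q.1 : ℤ), (q.2 : ℤ)) :=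
      Subtype.val_injective.prodMap Subtype.val_injective
    simpa using sum_resonanceKernel_le hl hl1 (p.1, p.2) (Finset.univ.map ⟨_, hinj⟩)
  calc ∫ y, ‖freeWave z y‖ ^ 4 ∂slab a (a + l)
      ≤ ∑ p : S × S, ∑ q : S × S, resonanceKernel l (p.1, p.2) (q.1, q.2) *
          (‖z p.1 * z p.2‖ * ‖z q.1 * z q.2‖) :=
        integral_norm_freeWave_pow_four_le_sum z a hl.le
    _ ≤ 20 * √l * ∑ p : S × S, ‖z p.1 * z p.2‖ ^ 2 :=
        schur_test (fun _ _ => resonanceKernel_nonneg hl.le _ _)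
          (fun _ _ => resonanceKernel_comm l _ _) hrow _
    _ = 20 * √l * ‖z‖ ^ 4 := by rw [sum_norm_mul_sq]

/-! ### Half-Hölder profiles in space-time `L⁴` -/

/-- Hölder continuity of exponent `1/2` on `[a, b]` with constant `L`. -/
def HalfHolderOn {E : Type*} [NormedAddCommGroup E] (D : ℝ → E) (a b L : ℝ) : Prop :=
  ∀ ⦃s t⦄, a ≤ s → s ≤ t → t ≤ b → ‖D t - D s‖ ≤ L * √(t - s)

namespace HalfHolderOn

variable {E : Type*} [NormedAddCommGroup E] {D : ℝ → E} {a b L : ℝ}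

theorem mono (h : HalfHolderOn D a b L) {a' b' : ℝ} (ha : a ≤ a') (hb : b' ≤ b) :
    HalfHolderOn D a' b' L :=
  fun _ _ has hst htb => h (ha.trans has) hst (htb.trans hb)

theorem sub_const (h : HalfHolderOn D a b L) (c : E) : HalfHolderOn (fun t => D t - c) a b L :=
  fun _ _ has hst htb => by simpa using h has hst htb

theorem norm_le_of_eq_zero (h : HalfHolderOn D a b L) (hL : 0 ≤ L) (ha : D a = 0) {t : ℝ}
    (hat : a ≤ t) (htb : t ≤ b) : ‖D t‖ ≤ L * √(b - a) := by
  calc ‖D t‖ = ‖D t - D a‖ := by rw [ha, sub_zero]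
    _ ≤ L * √(t - a) := h le_rfl hat htb
    _ ≤ L * √(b - a) := by gcongr

end HalfHolderOn

theorem add_pow_four_le {x y : ℝ} (hx : 0 ≤ x) (hy : 0 ≤ y) :
    (x + y) ^ 4 ≤ 4 * x ^ 4 + 151 * y ^ 4 := by
  rcases le_total y (2 / 5 * x) with hyx | hxy
  · calc (x + y) ^ 4 ≤ (x + 2 / 5 * x) ^ 4 := by gcongr
      _ = 2401 / 625 * x ^ 4 := by ring
      _ ≤ 4 * x ^ 4 + 151 * y ^ 4 := by nlinarith [pow_nonneg hx 4, pow_nonneg hy 4]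
  · calc (x + y) ^ 4 ≤ (5 / 2 * y + y) ^ 4 := by gcongr; linarith
      _ = 2401 / 16 * y ^ 4 := by ring
      _ ≤ 4 * x ^ 4 + 151 * y ^ 4 := by nlinarith [pow_nonneg hx 4, pow_nonneg hy 4]

theorem continuous_norm_freeWave_pow_four {z : ℝ → Profile S} (hz : Continuous z) :
    Continuous fun p : ℝ × Torus => ‖freeWave (z p.1) p‖ ^ 4 :=
  (continuous_freeWave_path hz).norm.pow 4

theorem integral_norm_freeWave_pow_four_le_add {z : ℝ → Profile S} (hz : Continuous z)
    (ζ : Profile S) (a b : ℝ) :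
    ∫ p, ‖freeWave (z p.1) p‖ ^ 4 ∂slab a b ≤
      4 * ∫ p, ‖freeWave (z p.1 - ζ) p‖ ^ 4 ∂slab a b
        + 151 * ∫ p, ‖freeWave ζ p‖ ^ 4 ∂slab a b := by
  have hdiff := continuous_norm_freeWave_pow_four (z := fun t => z t - ζ) (by fun_prop)
  have hζ : Continuous fun p => ‖freeWave ζ p‖ ^ 4 := (continuous_freeWave_const ζ).norm.pow 4
  rw [← integral_const_mul, ← integral_const_mul,
    ← integral_add (integrable_slab_of_continuous (hdiff.const_mul 4) a b)
      (integrable_slab_of_continuous (hζ.const_mul 151) a b)]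
  refine integral_slab_mono (continuous_norm_freeWave_pow_four hz)
    ((hdiff.const_mul 4).add (hζ.const_mul 151)) fun t _ x => ?_
  refine le_trans ?_ (add_pow_four_le (norm_nonneg _) (norm_nonneg _))
  gcongr
  calc ‖freeWave (z t) (t, x)‖ = ‖freeWave (z t - ζ) (t, x) + freeWave ζ (t, x)‖ := by
        rw [← freeWave_add, sub_add_cancel]
    _ ≤ _ := norm_add_le _ _

/-- The `L⁴` bound, over slabs of length `l`, for half-Hölder profiles that vanish at the initial
time. -/
def HalfHolderStrichartz (S : Finset ℤ) (l : ℝ) : Prop :=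
  ∀ ⦃z : ℝ → Profile S⦄ ⦃a L : ℝ⦄, Continuous z → 0 ≤ L → HalfHolderOn z a (a + l) L → z a = 0 →
    ∫ p, ‖freeWave (z p.1) p‖ ^ 4 ∂slab a (a + l) ≤ 5000 * L ^ 4 * l ^ 2 * √l

theorem halfHolderStrichartz_of_small {l : ℝ} (hl : 0 ≤ l) (hsmall : (S.card : ℝ) ^ 4 * √l ≤ 5000) :
    HalfHolderStrichartz S l := by
  intro z a L hz hL hH hza
  have pointwise_le (t : ℝ) (ht : t ∈ Set.Icc a (a + l)) (x : Torus) :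
      ‖freeWave (z t) (t, x)‖ ^ 4 ≤ (S.card * (L * √l)) ^ 4 := by
    have hzt := hH.norm_le_of_eq_zero hL hza ht.1 ht.2
    rw [add_sub_cancel_left] at hzt
    gcongr
    exact (norm_freeWave_le_card_mul _ _).trans (by gcongr)
  calc ∫ p, ‖freeWave (z p.1) p‖ ^ 4 ∂slab a (a + l)
      ≤ ∫ _, (S.card * (L * √l)) ^ 4 ∂slab a (a + l) :=
        integral_slab_mono (continuous_norm_freeWave_pow_four hz) continuous_const pointwise_le
    _ = (S.card * (L * √l)) ^ 4 * √l ^ 2 := by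
        rw [integral_slab_const _ (by linarith), Real.sq_sqrt hl, add_sub_cancel_left]
    _ = S.card ^ 4 * √l * (L ^ 4 * (√l ^ 2) ^ 2 * √l) := by ring
    _ ≤ 5000 * (L ^ 4 * l ^ 2 * √l) := by rw [Real.sq_sqrt hl]; gcongr
    _ = 5000 * L ^ 4 * l ^ 2 * √l := by ring

/-- The constant is reproduced because `(1 + 4) * 2 ^ (-5 / 2) < 1`. -/
theorem HalfHolderStrichartz.of_half {l : ℝ} (hl : 0 < l) (hl1 : l ≤ 1)
    (hhalf : HalfHolderStrichartz S (l / 2)) : HalfHolderStrichartz S l := by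
  intro z a L hz hL hH hza
  set m := a + l / 2 with hm
  have hml : m + l / 2 = a + l := by rw [hm]; ring
  set X := L ^ 4 * l ^ 2 * √(l / 2) with hX
  have first_half : ∫ p, ‖freeWave (z p.1) p‖ ^ 4 ∂slab a m ≤ 1250 * X := by
    refine (hhalf hz hL (hH.mono le_rfl (by linarith)) hza).trans_eq ?_
    rw [hX]; ring
  have second_half_increment :
      ∫ p, ‖freeWave (z p.1 - z m) p‖ ^ 4 ∂slab m (a + l) ≤ 1250 * X := by
    have := hhalf (z := fun t => z t - z m) (a := m) (by fun_prop) hL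
      ((hH.sub_const (z m)).mono (by linarith) (by linarith)) (sub_self _)
    rw [hml] at this
    refine this.trans_eq ?_
    rw [hX]; ring
  have second_half_free : ∫ p, ‖freeWave (z m) p‖ ^ 4 ∂slab m (a + l) ≤ 5 * X := by
    have hzm : ‖z m‖ ≤ L * √(l / 2) := by
      have := (hH.mono le_rfl (by linarith)).norm_le_of_eq_zero hL hza
        (show a ≤ m by linarith) le_rfl
      rwa [hm, add_sub_cancel_left] at this
    calc _ ≤ 20 * √(l / 2) * ‖z m‖ ^ 4 := by
          have := integral_norm_freeWave_pow_four_le (z m) m (half_pos hl) (by linarith)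
          rwa [hml] at this
      _ ≤ 20 * √(l / 2) * (L * √(l / 2)) ^ 4 := by gcongr
      _ = 20 * √(l / 2) * (L ^ 4 * (√(l / 2) ^ 2) ^ 2) := by ring
      _ = 5 * X := by rw [Real.sq_sqrt (by positivity), hX]; ring
  have hX_le : 1.413 * X ≤ L ^ 4 * l ^ 2 * √l := by
    have hsqrt : 1.413 * √(l / 2) ≤ √l := Real.le_sqrt_of_sq_le (by
      rw [mul_pow, Real.sq_sqrt (by positivity)]; linarith)
    calc 1.413 * X = L ^ 4 * l ^ 2 * (1.413 * √(l / 2)) := by rw [hX]; ring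
      _ ≤ _ := by gcongr
  have hX0 : 0 ≤ X := by positivity
  have second_half := integral_norm_freeWave_pow_four_le_add hz (z m) m (a + l)
  rw [← integral_slab_add (continuous_norm_freeWave_pow_four hz) (show a ≤ m by linarith)
    (show m ≤ a + l by linarith)]
  linarith

theorem halfHolderStrichartz {l : ℝ} (hl : 0 < l) (hl1 : l ≤ 1) : HalfHolderStrichartz S l := by
  have htendsto : Tendsto (fun n : ℕ => (S.card : ℝ) ^ 4 * √(l / 2 ^ n)) atTop (𝓝 0) := by
    have hpow : Tendsto (fun n : ℕ => l / 2 ^ n) atTop (𝓝 0) :=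
      tendsto_const_nhds.div_atTop (tendsto_pow_atTop_atTop_of_one_lt one_lt_two)
    simpa using hpow.sqrt.const_mul ((S.card : ℝ) ^ 4)
  obtain ⟨n, hn⟩ := (htendsto.eventually_le_const (by norm_num : (0 : ℝ) < 5000)).exists
  induction n generalizing l with
  | zero => exact halfHolderStrichartz_of_small hl.le (by simpa using hn)
  | succ n ih =>
    refine HalfHolderStrichartz.of_half hl hl1 (ih (half_pos hl) (by linarith) ?_ ?_)
    · simpa only [div_div, ← pow_succ'] using (tendsto_add_atTop_iff_nat 1).mpr htendsto
    · rwa [div_div, ← pow_succ']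

theorem HalfHolderOn.integral_norm_freeWave_pow_four_le {z : ℝ → Profile S} (hz : Continuous z)
    {a l L : ℝ} (hl : 0 < l) (hl1 : l ≤ 1) (hL : 0 ≤ L) (hH : HalfHolderOn z a (a + l) L) :
    ∫ p, ‖freeWave (z p.1) p‖ ^ 4 ∂slab a (a + l) ≤ 20000 * √l * (‖z a‖ + √l * L) ^ 4 := by
  have increment := halfHolderStrichartz hl hl1 (z := fun t => z t - z a) (by fun_prop) hL
    (hH.sub_const (z a)) (sub_self _)
  have free := ProjectedNLS.integral_norm_freeWave_pow_four_le (z a) a hl hl1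
  have split := integral_norm_freeWave_pow_four_le_add hz (z a) a (a + l)
  have hsum : ‖z a‖ ^ 4 + (√l * L) ^ 4 ≤ (‖z a‖ + √l * L) ^ 4 :=
    pow_add_pow_le (norm_nonneg _) (by positivity) (by norm_num)
  calc _ ≤ 4 * (5000 * L ^ 4 * l ^ 2 * √l) + 151 * (20 * √l * ‖z a‖ ^ 4) := by linarith
    _ = √l * (20000 * (L ^ 4 * l ^ 2) + 3020 * ‖z a‖ ^ 4) := by ring
    _ = √l * (20000 * (√l * L) ^ 4 + 3020 * ‖z a‖ ^ 4) := by
        nth_rw 2 [← Real.sq_sqrt hl.le]; ring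
    _ ≤ √l * (20000 * (‖z a‖ + √l * L) ^ 4) := by
        gcongr; linarith [pow_nonneg (norm_nonneg (z a)) 4]
    _ = _ := by ring

theorem integral_slab_mul_le {f g : ℝ × Torus → ℝ} (hf : Continuous f) (hg : Continuous g)
    {a b A B : ℝ} (hA : 0 ≤ A) (hB : 0 ≤ B) (hfA : ∫ p, f p ^ 2 ∂slab a b ≤ A ^ 2)
    (hgB : ∫ p, g p ^ 2 ∂slab a b ≤ B ^ 2) : ∫ p, f p * g p ∂slab a b ≤ A * B := by
  have memLp_two {h : ℝ × Torus → ℝ} (hh : Continuous h) :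
      MemLp h (ENNReal.ofReal 2) (slab a b) := by
    rw [ENNReal.ofReal_ofNat]
    exact (memLp_two_iff_integrable_sq hh.aestronglyMeasurable).mpr
      (integrable_slab_of_continuous (hh.pow 2) a b)
  calc ∫ p, f p * g p ∂slab a b ≤ ∫ p, ‖f p‖ * ‖g p‖ ∂slab a b :=
        integral_slab_mono (hf.mul hg) (hf.norm.mul hg.norm) fun t _ x =>
          (Real.le_norm_self _).trans_eq (norm_mul _ _)
    _ ≤ (∫ p, ‖f p‖ ^ (2 : ℝ) ∂slab a b) ^ (1 / 2 : ℝ) *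
          (∫ p, ‖g p‖ ^ (2 : ℝ) ∂slab a b) ^ (1 / 2 : ℝ) :=
        integral_mul_norm_le_Lp_mul_Lq Real.HolderConjugate.two_two (memLp_two hf) (memLp_two hg)
    _ = √(∫ p, f p ^ 2 ∂slab a b) * √(∫ p, g p ^ 2 ∂slab a b) := by
        simp only [Real.sqrt_eq_rpow, Real.rpow_two, Real.norm_eq_abs, sq_abs]
    _ ≤ A * B := by
        gcongr
        · exact Real.sqrt_le_iff.mpr ⟨hA, hfA⟩
        · exact Real.sqrt_le_iff.mpr ⟨hB, hgB⟩

theorem integral_slab_mul_sq_le {f g : ℝ × Torus → ℝ} (hf : Continuous f) (hg : Continuous g)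
    {a b Y A B : ℝ} (hY : 0 ≤ Y) (hfA : ∫ p, f p ^ 4 ∂slab a b ≤ Y * A ^ 4)
    (hgB : ∫ p, g p ^ 4 ∂slab a b ≤ Y * B ^ 4) :
    ∫ p, (f p * g p) ^ 2 ∂slab a b ≤ (√Y * (A * B)) ^ 2 := by
  have hYsq := Real.sq_sqrt hY
  calc ∫ p, (f p * g p) ^ 2 ∂slab a b = ∫ p, f p ^ 2 * g p ^ 2 ∂slab a b := by
        simp_rw [mul_pow]
    _ ≤ √Y * A ^ 2 * (√Y * B ^ 2) := by
        refine integral_slab_mul_le (hf.pow 2) (hg.pow 2) (by positivity) (by positivity) ?_ ?_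
        · simpa only [Pi.pow_apply, ← pow_mul, mul_pow, hYsq] using hfA
        · simpa only [Pi.pow_apply, ← pow_mul, mul_pow, hYsq] using hgB
    _ = (√Y * (A * B)) ^ 2 := by ring

theorem integral_slab_mul_mul_mul_le {f₁ f₂ f₃ f₄ : ℝ × Torus → ℝ} (h₁ : Continuous f₁)
    (h₂ : Continuous f₂) (h₃ : Continuous f₃) (h₄ : Continuous f₄) {a b Y m₁ m₂ m₃ m₄ : ℝ}
    (hY : 0 ≤ Y) (hm₁ : 0 ≤ m₁) (hm₂ : 0 ≤ m₂) (hm₃ : 0 ≤ m₃) (hm₄ : 0 ≤ m₄)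
    (hf₁ : ∫ p, f₁ p ^ 4 ∂slab a b ≤ Y * m₁ ^ 4) (hf₂ : ∫ p, f₂ p ^ 4 ∂slab a b ≤ Y * m₂ ^ 4)
    (hf₃ : ∫ p, f₃ p ^ 4 ∂slab a b ≤ Y * m₃ ^ 4) (hf₄ : ∫ p, f₄ p ^ 4 ∂slab a b ≤ Y * m₄ ^ 4) :
    ∫ p, f₁ p * f₂ p * (f₃ p * f₄ p) ∂slab a b ≤ Y * (m₁ * m₂ * m₃ * m₄) := by
  calc ∫ p, f₁ p * f₂ p * (f₃ p * f₄ p) ∂slab a b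
      ≤ √Y * (m₁ * m₂) * (√Y * (m₃ * m₄)) :=
        integral_slab_mul_le (h₁.mul h₂) (h₃.mul h₄) (by positivity) (by positivity)
          (integral_slab_mul_sq_le h₁ h₂ hY hf₁ hf₂) (integral_slab_mul_sq_le h₃ h₄ hY hf₃ hf₄)
    _ = Y * (m₁ * m₂ * m₃ * m₄) := by
        linear_combination (m₁ * m₂ * m₃ * m₄) * Real.mul_self_sqrt hY

/-! ### The profile equation -/

/-- The pointwise cubic nonlinearity `c ↦ |c|² c`. -/
def cubicMap (c : ℂ) : ℂ := (‖c‖ : ℂ) ^ 2 * c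

@[fun_prop]
theorem continuous_cubicMap : Continuous cubicMap := by
  unfold cubicMap; fun_prop

theorem cubicMap_zero : cubicMap 0 = 0 := by simp [cubicMap]

theorem norm_cubicMap (c : ℂ) : ‖cubicMap c‖ = ‖c‖ ^ 3 := by
  simp [cubicMap]; ring

theorem cubicMap_mul_conj_self (c : ℂ) :
    cubicMap c * starRingEnd ℂ c = ((‖c‖ ^ 4 : ℝ) : ℂ) := by
  rw [cubicMap, mul_assoc, mul_conj, normSq_eq_norm_sq]; push_cast; ring

theorem norm_cubicMap_sub_le (a b : ℂ) :
    ‖cubicMap a - cubicMap b‖ ≤ (‖a‖ * ‖a‖ + ‖a‖ * ‖b‖ + ‖b‖ * ‖b‖) * ‖a - b‖ := by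
  have hsplit : cubicMap a - cubicMap b =
      (‖a‖ : ℂ) ^ 2 * (a - b) + ((‖a‖ ^ 2 - ‖b‖ ^ 2 : ℝ) : ℂ) * b := by
    simp only [cubicMap]; push_cast; ring
  have hsq : |‖a‖ ^ 2 - ‖b‖ ^ 2| ≤ (‖a‖ + ‖b‖) * ‖a - b‖ := by
    rw [sq_sub_sq, abs_mul, abs_of_nonneg (by positivity)]
    gcongr
    exact abs_norm_sub_norm_le a b
  calc ‖cubicMap a - cubicMap b‖ ≤ ‖a‖ ^ 2 * ‖a - b‖ + |‖a‖ ^ 2 - ‖b‖ ^ 2| * ‖b‖ := by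
        rw [hsplit]
        refine (norm_add_le _ _).trans_eq ?_
        rw [norm_mul, norm_mul, norm_pow, norm_real, norm_real, norm_norm, Real.norm_eq_abs]
    _ ≤ ‖a‖ ^ 2 * ‖a - b‖ + (‖a‖ + ‖b‖) * ‖a - b‖ * ‖b‖ := by gcongr
    _ = _ := by ring

/-- The cubic nonlinearity in the interaction picture: the coefficients of `|u|² u` along the
plane waves, where `u` is the free wave with profile `z`. -/
def profileNonlinearity (z : Profile S) (t : ℝ) : Profile S :=
  WithLp.toLp 2 fun k : S =>
    ∫ x, cubicMap (freeWave z (t, x)) * starRingEnd ℂ (planeWave k (t, x)) ∂haarAddCircle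

/-- The equation `w' = iμ N(w, t)` satisfied by `w(t) = e^{-it∂ₓ²} u(t)`. -/
def IsProfileSolution (μ : ℝ) (w : ℝ → Profile S) : Prop :=
  ∀ t, HasDerivAt w ((I * μ) • profileNonlinearity (w t) t) t

theorem inner_profileNonlinearity (g z : Profile S) (t : ℝ) :
    inner ℂ g (profileNonlinearity z t) =
      ∫ x, cubicMap (freeWave z (t, x)) * starRingEnd ℂ (freeWave g (t, x)) ∂haarAddCircle := by
  have hcont (k : S) : Continuous fun x =>
      starRingEnd ℂ (g k) *
        (cubicMap (freeWave z (t, x)) * starRingEnd ℂ (planeWave k (t, x))) := by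
    have := continuous_freeWave_const z
    fun_prop
  have hexpand (x : Torus) :
      cubicMap (freeWave z (t, x)) * starRingEnd ℂ (freeWave g (t, x)) = ∑ k : S,
        starRingEnd ℂ (g k) *
          (cubicMap (freeWave z (t, x)) * starRingEnd ℂ (planeWave k (t, x))) := by
    rw [freeWave.eq_def g, map_sum, Finset.mul_sum]
    exact Finset.sum_congr rfl fun k _ => by rw [map_mul]; ring
  simp_rw [hexpand]
  rw [integral_finsetSum _ fun k _ => integrable_haarAddCircle_of_continuous (hcont k)]
  simp only [PiLp.inner_apply, RCLike.inner_apply, profileNonlinearity, integral_const_mul]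
  exact Finset.sum_congr rfl fun k _ => mul_comm _ _

theorem isProfileSolution_zero (μ : ℝ) : IsProfileSolution μ fun _ => (0 : Profile S) := by
  intro t
  have : profileNonlinearity (0 : Profile S) t = 0 := by
    ext k; simp [profileNonlinearity, freeWave, cubicMap_zero]
  simpa [this] using hasDerivAt_const t (0 : Profile S)

theorem le_of_sq_le_mul_self {d K : ℝ} (hK : 0 ≤ K) (h : d ^ 2 ≤ K * d) : d ≤ K := by
  nlinarith

theorem norm_profileNonlinearity_le (z : Profile S) (t : ℝ) :
    ‖profileNonlinearity z t‖ ≤ (S.card * ‖z‖) ^ 3 * S.card := by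
  set N := profileNonlinearity z t with hN
  have hinner : ‖inner ℂ N N‖ ≤ (S.card * ‖z‖) ^ 3 * (S.card * ‖N‖) := by
    nth_rw 2 [hN]
    rw [inner_profileNonlinearity]
    have pointwise_le (x : Torus) :
        ‖cubicMap (freeWave z (t, x)) * starRingEnd ℂ (freeWave N (t, x))‖
          ≤ (S.card * ‖z‖) ^ 3 * (S.card * ‖N‖) := by
      rw [norm_mul, norm_cubicMap, RCLike.norm_conj]
      gcongr <;> exact norm_freeWave_le_card_mul _ _
    simpa using norm_integral_le_of_norm_le_const (μ := haarAddCircle)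
      (Eventually.of_forall pointwise_le)
  rw [inner_self_eq_norm_sq_to_K, norm_pow, RCLike.norm_ofReal, abs_norm] at hinner
  exact le_of_sq_le_mul_self (by positivity) (hinner.trans_eq (by ring))

theorem integral_norm_cubicMap_sub_mul_le {f₁ f₂ g : ℝ × Torus → ℂ} (h₁ : Continuous f₁)
    (h₂ : Continuous f₂) (hg : Continuous g) {a b Y m D δ : ℝ} (hY : 0 ≤ Y) (hm : 0 ≤ m)
    (hD : 0 ≤ D) (hδ : 0 ≤ δ) (hf₁ : ∫ p, ‖f₁ p‖ ^ 4 ∂slab a b ≤ Y * m ^ 4)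
    (hf₂ : ∫ p, ‖f₂ p‖ ^ 4 ∂slab a b ≤ Y * m ^ 4)
    (hf : ∫ p, ‖f₁ p - f₂ p‖ ^ 4 ∂slab a b ≤ Y * D ^ 4)
    (hgδ : ∫ p, ‖g p‖ ^ 4 ∂slab a b ≤ Y * δ ^ 4) :
    ∫ p, ‖cubicMap (f₁ p) - cubicMap (f₂ p)‖ * ‖g p‖ ∂slab a b ≤ 3 * Y * m ^ 2 * D * δ := by
  have quadrilinear_le {e₁ e₂ : ℝ × Torus → ℂ} (c₁ : Continuous e₁) (c₂ : Continuous e₂)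
      (he₁ : ∫ p, ‖e₁ p‖ ^ 4 ∂slab a b ≤ Y * m ^ 4)
      (he₂ : ∫ p, ‖e₂ p‖ ^ 4 ∂slab a b ≤ Y * m ^ 4) :
      ∫ p, ‖e₁ p‖ * ‖e₂ p‖ * (‖f₁ p - f₂ p‖ * ‖g p‖) ∂slab a b ≤ Y * (m * m * D * δ) :=
    integral_slab_mul_mul_mul_le c₁.norm c₂.norm (h₁.sub h₂).norm hg.norm hY hm hm hD hδ
      he₁ he₂ hf hgδ
  have integrable {f : ℝ × Torus → ℝ} (hf : Continuous f) : Integrable f (slab a b) :=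
    integrable_slab_of_continuous hf a b
  calc ∫ p, ‖cubicMap (f₁ p) - cubicMap (f₂ p)‖ * ‖g p‖ ∂slab a b
      ≤ ∫ p, (‖f₁ p‖ * ‖f₁ p‖ * (‖f₁ p - f₂ p‖ * ‖g p‖) +
          ‖f₁ p‖ * ‖f₂ p‖ * (‖f₁ p - f₂ p‖ * ‖g p‖) +
          ‖f₂ p‖ * ‖f₂ p‖ * (‖f₁ p - f₂ p‖ * ‖g p‖)) ∂slab a b := by
        refine integral_mono (integrable (by fun_prop)) (integrable (by fun_prop)) fun p => ?_
        refine (mul_le_mul_of_nonneg_right (norm_cubicMap_sub_le _ _) (norm_nonneg _)).trans_eq ?_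
        ring
    _ ≤ 3 * Y * m ^ 2 * D * δ := by
        rw [integral_add (integrable (by fun_prop)) (integrable (by fun_prop)),
          integral_add (integrable (by fun_prop)) (integrable (by fun_prop))]
        linarith [quadrilinear_le h₁ h₁ hf₁ hf₁, quadrilinear_le h₁ h₂ hf₁ hf₂,
          quadrilinear_le h₂ h₂ hf₂ hf₂]

namespace IsProfileSolution

variable {μ : ℝ} {w w₁ w₂ : ℝ → Profile S}

theorem continuous (hw : IsProfileSolution μ w) : Continuous w :=
  continuous_iff_continuousAt.mpr fun t => (hw t).continuousAt

theorem continuous_freeWave (hw : IsProfileSolution μ w) :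
    Continuous fun p : ℝ × Torus => freeWave (w p.1) p :=
  continuous_freeWave_path hw.continuous

theorem norm_eq (hw : IsProfileSolution μ w) (t : ℝ) : ‖w t‖ = ‖w 0‖ := by
  have hderiv (r : ℝ) : HasDerivAt (fun t => ‖w t‖ ^ 2) 0 r := by
    let : InnerProductSpace ℝ (Profile S) := InnerProductSpace.rclikeToReal ℂ (Profile S)
    refine (hw r).norm_sq.congr_deriv ?_
    rw [real_inner_eq_re_inner ℂ, inner_smul_right, inner_profileNonlinearity]
    simp_rw [cubicMap_mul_conj_self]
    rw [integral_complex_ofReal]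
    simp
  have := is_const_of_deriv_eq_zero (fun r => (hderiv r).differentiableAt)
    (fun r => (hderiv r).deriv) t 0
  exact (sq_eq_sq₀ (norm_nonneg _) (norm_nonneg _)).mp this

theorem norm_sub_le (hμ : |μ| ≤ 1) (hw : IsProfileSolution μ w) (s t : ℝ) :
    ‖w t - w s‖ ≤ (S.card * ‖w 0‖) ^ 3 * S.card * |t - s| := by
  refine Convex.norm_image_sub_le_of_norm_hasDerivWithin_le
    (fun r _ => (hw r).hasDerivWithinAt) (fun r _ => ?_) convex_univ (Set.mem_univ s)
    (Set.mem_univ t)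
  calc ‖(I * μ) • profileNonlinearity (w r) r‖ = |μ| * ‖profileNonlinearity (w r) r‖ := by
        rw [norm_smul, norm_mul, norm_I, one_mul, norm_real, Real.norm_eq_abs]
    _ ≤ 1 * ((S.card * ‖w r‖) ^ 3 * S.card) := by gcongr; exact norm_profileNonlinearity_le _ _
    _ = _ := by rw [one_mul, hw.norm_eq r]

theorem inner_sub_eq_integral (hw : IsProfileSolution μ w) (g : Profile S) {s t : ℝ}
    (hst : s ≤ t) : inner ℂ g (w t - w s) = I * μ *
      ∫ p, cubicMap (freeWave (w p.1) p) * starRingEnd ℂ (freeWave g p) ∂slab s t := by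
  have hcont : Continuous fun p : ℝ × Torus =>
      cubicMap (freeWave (w p.1) p) * starRingEnd ℂ (freeWave g p) := by
    have := hw.continuous_freeWave
    have := continuous_freeWave_const g
    fun_prop
  have hinner : Continuous fun r => ∫ x,
      cubicMap (freeWave (w r) (r, x)) * starRingEnd ℂ (freeWave g (r, x)) ∂haarAddCircle := by
    simpa using continuous_parametric_integral_of_continuous (μ := haarAddCircle)
      (f := fun r x => cubicMap (freeWave (w r) (r, x)) * starRingEnd ℂ (freeWave g (r, x)))
      hcont isCompact_univ
  have hderiv (r : ℝ) : HasDerivAt (fun r => inner ℂ g (w r)) (I * μ * ∫ x,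
      cubicMap (freeWave (w r) (r, x)) * starRingEnd ℂ (freeWave g (r, x)) ∂haarAddCircle) r := by
    refine ((hasDerivAt_const r g).inner ℂ (hw r)).congr_deriv ?_
    rw [inner_zero_left, add_zero, inner_smul_right, inner_profileNonlinearity]
  rw [inner_sub_right, ← intervalIntegral.integral_eq_sub_of_hasDerivAt (fun r _ => hderiv r)
    ((hinner.const_mul _).intervalIntegrable _ _), intervalIntegral.integral_const_mul,
    integral_slab_eq_intervalIntegral hcont hst]

theorem norm_sq_increment_le (hμ : |μ| ≤ 1) (h₁ : IsProfileSolution μ w₁)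
    (h₂ : IsProfileSolution μ w₂) {s t : ℝ} (hst : s ≤ t) {d : Profile S}
    (hd : d = w₁ t - w₂ t - (w₁ s - w₂ s)) :
    ‖d‖ ^ 2 ≤ ∫ p, ‖cubicMap (freeWave (w₁ p.1) p) - cubicMap (freeWave (w₂ p.1) p)‖ *
      ‖freeWave d p‖ ∂slab s t := by
  have hU₁ := h₁.continuous_freeWave
  have hU₂ := h₂.continuous_freeWave
  have hUd := continuous_freeWave_const d
  have hinner : inner ℂ d d = I * μ * ∫ p, (cubicMap (freeWave (w₁ p.1) p) -
      cubicMap (freeWave (w₂ p.1) p)) * starRingEnd ℂ (freeWave d p) ∂slab s t := by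
    simp_rw [sub_mul]
    rw [integral_sub (integrable_slab_of_continuous (by fun_prop) s t)
      (integrable_slab_of_continuous (by fun_prop) s t), mul_sub,
      ← h₁.inner_sub_eq_integral d hst, ← h₂.inner_sub_eq_integral d hst, ← inner_sub_right,
      sub_sub_sub_comm, ← hd]
  calc ‖d‖ ^ 2 = ‖inner ℂ d d‖ := by
        rw [inner_self_eq_norm_sq_to_K, norm_pow, RCLike.norm_ofReal, abs_norm]
    _ ≤ 1 * ∫ p, ‖(cubicMap (freeWave (w₁ p.1) p) - cubicMap (freeWave (w₂ p.1) p)) *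
          starRingEnd ℂ (freeWave d p)‖ ∂slab s t := by
        rw [hinner, norm_mul, norm_mul, norm_I, one_mul, norm_real, Real.norm_eq_abs]
        gcongr
        exact norm_integral_le_integral_norm _
    _ = _ := by simp_rw [one_mul, norm_mul, RCLike.norm_conj]

theorem norm_increment_le (hμ : |μ| ≤ 1) (h₁ : IsProfileSolution μ w₁)
    (h₂ : IsProfileSolution μ w₂) {s t Λ₁ Λ₂ L m : ℝ} (hst : s ≤ t) (hst1 : t - s ≤ 1)
    (hΛ₁ : 0 ≤ Λ₁) (hΛ₂ : 0 ≤ Λ₂) (hL : 0 ≤ L) (hH₁ : HalfHolderOn w₁ s t Λ₁)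
    (hH₂ : HalfHolderOn w₂ s t Λ₂) (hH : HalfHolderOn (fun t => w₁ t - w₂ t) s t L)
    (hm₁ : ‖w₁ s‖ + √(t - s) * Λ₁ ≤ m) (hm₂ : ‖w₂ s‖ + √(t - s) * Λ₂ ≤ m) :
    ‖w₁ t - w₂ t - (w₁ s - w₂ s)‖ ≤
      60000 * m ^ 2 * (‖w₁ s - w₂ s‖ + √(t - s) * L) * √(t - s) := by
  rcases hst.eq_or_lt with rfl | hlt
  · simp
  obtain ⟨l, rfl⟩ : ∃ l, t = s + l := ⟨t - s, by ring⟩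
  simp only [add_sub_cancel_left] at *
  have hl : 0 < l := by linarith
  obtain ⟨d, hd⟩ : ∃ d, d = w₁ (s + l) - w₂ (s + l) - (w₁ s - w₂ s) := ⟨_, rfl⟩
  have hm : 0 ≤ m := le_trans (by positivity) hm₁
  have hU₁ : ∫ p, ‖freeWave (w₁ p.1) p‖ ^ 4 ∂slab s (s + l) ≤ 20000 * √l * m ^ 4 :=
    (hH₁.integral_norm_freeWave_pow_four_le h₁.continuous hl hst1 hΛ₁).trans (by gcongr)
  have hU₂ : ∫ p, ‖freeWave (w₂ p.1) p‖ ^ 4 ∂slab s (s + l) ≤ 20000 * √l * m ^ 4 :=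
    (hH₂.integral_norm_freeWave_pow_four_le h₂.continuous hl hst1 hΛ₂).trans (by gcongr)
  have hU := hH.integral_norm_freeWave_pow_four_le (h₁.continuous.fun_sub h₂.continuous) hl hst1 hL
  simp_rw [freeWave_sub] at hU
  have hUd : ∫ p, ‖freeWave d p‖ ^ 4 ∂slab s (s + l) ≤ 20000 * √l * ‖d‖ ^ 4 :=
    (integral_norm_freeWave_pow_four_le d s hl hst1).trans (by gcongr; norm_num)
  rw [← hd]
  refine le_of_sq_le_mul_self (by positivity) ?_
  calc ‖d‖ ^ 2 ≤ ∫ p, ‖cubicMap (freeWave (w₁ p.1) p) - cubicMap (freeWave (w₂ p.1) p)‖ *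
        ‖freeWave d p‖ ∂slab s (s + l) := norm_sq_increment_le hμ h₁ h₂ hst hd
    _ ≤ 3 * (20000 * √l) * m ^ 2 * (‖w₁ s - w₂ s‖ + √l * L) * ‖d‖ :=
        integral_norm_cubicMap_sub_mul_le h₁.continuous_freeWave h₂.continuous_freeWave
          (continuous_freeWave_const d) (by positivity) hm (by positivity) (norm_nonneg d)
          hU₁ hU₂ hU hUd
    _ = _ := by ring

end IsProfileSolution

/-! ### Continuation and continuous dependence on the data -/

/-- The increment estimate satisfied by the difference of two solutions on time intervals of length
at most `T`; it is self-improving as soon as `κ * √T` is small. -/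
def HasIncrementEstimate {E : Type*} [NormedAddCommGroup E] (D : ℝ → E) (κ T : ℝ) : Prop :=
  ∀ ⦃s t Λ⦄, s ≤ t → t - s ≤ T → 0 ≤ Λ → HalfHolderOn D s t Λ →
    ‖D t - D s‖ ≤ κ * (‖D s‖ + √(t - s) * Λ) * √(t - s)

/-- `D` is bounded by `B` on `[-R, R]` and Hölder continuous of exponent `1/2` there, with constant
`B`. -/
structure BoundedHalfHolder {E : Type*} [NormedAddCommGroup E] (D : ℝ → E) (R B : ℝ) : Prop where
  norm_le : ∀ ⦃t⦄, |t| ≤ R → ‖D t‖ ≤ B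
  halfHolderOn : HalfHolderOn D (-R) R B

section Continuation

variable {E : Type*} [NormedAddCommGroup E] {D : ℝ → E} {a b r t T Λ κ L : ℝ}

theorem HalfHolderOn.of_norm_sub_le (hL : 0 ≤ L) (hD : ∀ s t, ‖D t - D s‖ ≤ L * |t - s|)
    (hab : b - a ≤ T) : HalfHolderOn D a b (L * √T) := by
  intro s t has hst htb
  calc ‖D t - D s‖ ≤ L * |t - s| := hD s t
    _ = L * √(t - s) * √(t - s) := by
        rw [abs_of_nonneg (by linarith), mul_assoc, Real.mul_self_sqrt (by linarith)]
    _ ≤ L * √T * √(t - s) := by gcongr; linarith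

theorem HalfHolderOn.norm_sub_le_sqrt_abs (h : HalfHolderOn D a b Λ) (har : a ≤ r) (hrb : r ≤ b)
    (hat : a ≤ t) (htb : t ≤ b) : ‖D t - D r‖ ≤ Λ * √|t - r| := by
  rcases le_total r t with hrt | htr
  · rw [abs_of_nonneg (by linarith)]
    exact h har hrt htb
  · rw [norm_sub_rev, abs_sub_comm, abs_of_nonneg (by linarith)]
    exact h hat htr hrb

theorem HalfHolderOn.norm_le_add (h : HalfHolderOn D a b Λ) (hΛ : 0 ≤ Λ) (hab : b - a ≤ T)
    (har : a ≤ r) (hrb : r ≤ b) (hat : a ≤ t) (htb : t ≤ b) : ‖D t‖ ≤ ‖D r‖ + Λ * √T := by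
  have hincr := h.norm_sub_le_sqrt_abs har hrb hat htb
  have hsqrt : √|t - r| ≤ √T := Real.sqrt_le_sqrt (abs_le.mpr ⟨by linarith, by linarith⟩)
  have : Λ * √|t - r| ≤ Λ * √T := by gcongr
  linarith [norm_sub_norm_le (D t) (D r)]

theorem HalfHolderOn.of_forall_half {c : ℝ} (hc : 0 ≤ c) (hΛ : 0 ≤ Λ) (h : HalfHolderOn D a b Λ)
    (himprove : ∀ Λ', 0 ≤ Λ' → HalfHolderOn D a b Λ' → HalfHolderOn D a b (c + Λ' / 2)) :
    HalfHolderOn D a b (2 * c) := by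
  have iterate (n : ℕ) : HalfHolderOn D a b (2 * c + Λ * (1 / 2) ^ n) := by
    induction n with
    | zero =>
      intro s t has hst htb
      refine (h has hst htb).trans ?_
      gcongr
      linarith
    | succ n ih =>
      convert himprove _ (by positivity) ih using 1
      rw [pow_succ]
      ring
  intro s t has hst htb
  have hlim : Tendsto (fun n : ℕ => (2 * c + Λ * (1 / 2) ^ n) * √(t - s)) atTop
      (𝓝 ((2 * c + Λ * 0) * √(t - s))) :=
    (((tendsto_pow_atTop_nhds_zero_of_lt_one (by norm_num) (by norm_num)).const_mul Λ).const_add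
      _).mul_const _
  rw [mul_zero, add_zero] at hlim
  exact ge_of_tendsto' hlim fun n => iterate n has hst htb

namespace HasIncrementEstimate

theorem halfHolderOn_improve (hD : HasIncrementEstimate D κ T) (hκ : 0 ≤ κ)
    (hκT : 4 * κ * √T ≤ 1) (hab : b - a ≤ T) (har : a ≤ r) (hrb : r ≤ b) (hΛ : 0 ≤ Λ)
    (h : HalfHolderOn D a b Λ) : HalfHolderOn D a b (κ * ‖D r‖ + Λ / 2) := by
  intro s t has hst htb
  refine (hD hst (by linarith) hΛ (h.mono has htb)).trans ?_
  gcongr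
  have hs : ‖D s‖ ≤ ‖D r‖ + Λ * √T := h.norm_le_add hΛ hab har hrb has (hst.trans htb)
  have hsqrt : √(t - s) ≤ √T := Real.sqrt_le_sqrt (by linarith)
  calc κ * (‖D s‖ + √(t - s) * Λ) ≤ κ * (‖D r‖ + Λ * √T + √T * Λ) := by gcongr
    _ = κ * ‖D r‖ + 4 * κ * √T * (Λ / 2) := by ring
    _ ≤ κ * ‖D r‖ + 1 * (Λ / 2) := by gcongr
    _ = κ * ‖D r‖ + Λ / 2 := by ring

theorem halfHolderOn (hD : HasIncrementEstimate D κ T) (hκ : 0 ≤ κ) (hκT : 4 * κ * √T ≤ 1)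
    (hL : 0 ≤ L) (hLip : ∀ s t, ‖D t - D s‖ ≤ L * |t - s|) (hab : b - a ≤ T) (har : a ≤ r)
    (hrb : r ≤ b) : HalfHolderOn D a b (2 * (κ * ‖D r‖)) :=
  .of_forall_half (by positivity) (by positivity) (.of_norm_sub_le hL hLip hab) fun _ hΛ h =>
    hD.halfHolderOn_improve hκ hκT hab har hrb hΛ h

theorem norm_le_two_mul (hD : HasIncrementEstimate D κ T) (hκ : 0 ≤ κ) (hκT : 4 * κ * √T ≤ 1)
    (hL : 0 ≤ L) (hLip : ∀ s t, ‖D t - D s‖ ≤ L * |t - s|) (hrt : |t - r| ≤ T) :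
    ‖D t‖ ≤ 2 * ‖D r‖ := by
  have hlen : max r t - min r t ≤ T := by rwa [max_sub_min_eq_abs]
  have h := hD.halfHolderOn hκ hκT hL hLip hlen (min_le_left r t) (le_max_left r t)
  calc ‖D t‖ ≤ ‖D r‖ + 2 * (κ * ‖D r‖) * √T := h.norm_le_add (by positivity) hlen
        (min_le_left _ _) (le_max_left _ _) (min_le_right _ _) (le_max_right _ _)
    _ = ‖D r‖ + 4 * κ * √T * (‖D r‖ / 2) := by ring
    _ ≤ ‖D r‖ + 1 * (‖D r‖ / 2) := by gcongr
    _ ≤ 2 * ‖D r‖ := by linarith [norm_nonneg (D r)]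

theorem norm_le_two_pow_mul (hD : HasIncrementEstimate D κ T) (hκ : 0 ≤ κ)
    (hκT : 4 * κ * √T ≤ 1) (hL : 0 ≤ L) (hLip : ∀ s t, ‖D t - D s‖ ≤ L * |t - s|) (n : ℕ)
    (ht : |t| ≤ n * T) : ‖D t‖ ≤ 2 ^ n * ‖D 0‖ := by
  induction n generalizing t with
  | zero =>
    obtain rfl : t = 0 := by simpa using ht
    simp
  | succ n ih =>
    have hn : (0 : ℝ) < n + 1 := by positivity
    have hstep : |t / (n + 1)| ≤ T := by
      rw [abs_div, abs_of_pos hn, div_le_iff₀ hn]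
      push_cast at ht
      linarith
    have hrest : |n * (t / (n + 1))| ≤ n * T := by
      rw [abs_mul, Nat.abs_cast]
      gcongr
    have hsplit : t - n * (t / (n + 1)) = t / (n + 1) := by field_simp; ring
    calc ‖D t‖ ≤ 2 * ‖D (n * (t / (n + 1)))‖ :=
          hD.norm_le_two_mul hκ hκT hL hLip (by rwa [hsplit])
      _ ≤ 2 * (2 ^ n * ‖D 0‖) := by gcongr; exact ih hrest
      _ = 2 ^ (n + 1) * ‖D 0‖ := by ring

theorem boundedHalfHolder (hD : HasIncrementEstimate D κ T) (hκ : 0 ≤ κ)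
    (hκT : 4 * κ * √T ≤ 1) (hT : 0 < T) (hL : 0 ≤ L)
    (hLip : ∀ s t, ‖D t - D s‖ ≤ L * |t - s|) {R K : ℝ} {n : ℕ} (hn : R ≤ n * T)
    (hK : 2 ^ n * (1 + 2 * κ + 2 / √T) ≤ K) :
    BoundedHalfHolder D R (K * ‖D 0‖) := by
  have growth (t : ℝ) (ht : |t| ≤ R) : ‖D t‖ ≤ 2 ^ n * ‖D 0‖ :=
    hD.norm_le_two_pow_mul hκ hκT hL hLip n (ht.trans hn)
  have hinv : 0 < 2 / √T := by positivity
  have constant_le {c : ℝ} (hc : c ≤ 1 + 2 * κ + 2 / √T) : c * (2 ^ n * ‖D 0‖) ≤ K * ‖D 0‖ :=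
    calc c * (2 ^ n * ‖D 0‖) ≤ (1 + 2 * κ + 2 / √T) * (2 ^ n * ‖D 0‖) := by gcongr
      _ = 2 ^ n * (1 + 2 * κ + 2 / √T) * ‖D 0‖ := by ring
      _ ≤ K * ‖D 0‖ := by gcongr
  refine ⟨fun t ht => (growth t ht).trans ?_, fun s t hs hst ht => ?_⟩
  · simpa using constant_le (c := 1) (by linarith)
  have hsR := growth s (abs_le.mpr ⟨hs, by linarith⟩)
  have htR := growth t (abs_le.mpr ⟨by linarith, ht⟩)
  rcases le_total (t - s) T with hshort | hlong
  · calc ‖D t - D s‖ ≤ 2 * (κ * ‖D s‖) * √(t - s) :=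
          hD.halfHolderOn hκ hκT hL hLip hshort le_rfl hst le_rfl hst le_rfl
      _ ≤ 2 * (κ * (2 ^ n * ‖D 0‖)) * √(t - s) := by gcongr
      _ = 2 * κ * (2 ^ n * ‖D 0‖) * √(t - s) := by ring
      _ ≤ K * ‖D 0‖ * √(t - s) := by
          gcongr ?_ * _
          exact constant_le (by linarith)
  · calc ‖D t - D s‖ ≤ 2 * (2 ^ n * ‖D 0‖) := by linarith [norm_sub_le (D t) (D s)]
      _ = 2 / √T * (2 ^ n * ‖D 0‖) * √T := by field_simp
      _ ≤ 2 / √T * (2 ^ n * ‖D 0‖) * √(t - s) := by gcongr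
      _ ≤ K * ‖D 0‖ * √(t - s) := by
          gcongr ?_ * _
          exact constant_le (by linarith)

end HasIncrementEstimate

end Continuation

namespace IsProfileSolution

variable {μ M T : ℝ} {w w₁ w₂ : ℝ → Profile S}

theorem norm_sub_le_of_halfHolderOn (hμ : |μ| ≤ 1) (hw : IsProfileSolution μ w) (hM : ‖w 0‖ ≤ M)
    {s t Λ : ℝ} (hst : s ≤ t) (hst1 : t - s ≤ 1) (hΛ : 0 ≤ Λ) (hΛM : √(t - s) * Λ ≤ M)
    (hH : HalfHolderOn w s t Λ) : ‖w t - w s‖ ≤ 480000 * M ^ 3 * √(t - s) := by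
  have hM0 : 0 ≤ M := (norm_nonneg _).trans hM
  have hsum : ‖w s‖ + √(t - s) * Λ ≤ 2 * M := by linarith [hw.norm_eq s]
  have hincr := norm_increment_le hμ hw (isProfileSolution_zero μ) hst hst1 hΛ le_rfl hΛ hH
    (fun _ _ _ _ _ => by simp) (by simpa using hH) hsum (by simpa using hM0)
  simp only [sub_zero] at hincr
  calc ‖w t - w s‖ ≤ 60000 * (2 * M) ^ 2 * (‖w s‖ + √(t - s) * Λ) * √(t - s) := hincr
    _ ≤ 60000 * (2 * M) ^ 2 * (2 * M) * √(t - s) := by gcongr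
    _ = 480000 * M ^ 3 * √(t - s) := by ring

/-- Halving an interval costs a factor `2`, which the smallness of `T` gives back. -/
theorem norm_sub_le_of_length_le (hμ : |μ| ≤ 1) (hw : IsProfileSolution μ w) (hM : ‖w 0‖ ≤ M)
    (hT1 : T ≤ 1) (hT : √T * (960000 * M ^ 2) ≤ 1) {l₀ : ℝ}
    (hbase : ∀ s t, s ≤ t → t - s ≤ l₀ → ‖w t - w s‖ ≤ 960000 * M ^ 3 * √(t - s)) (n : ℕ)
    {s t : ℝ} (hst : s ≤ t) (htT : t - s ≤ T) (hlen : t - s ≤ l₀ * 2 ^ n) :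
    ‖w t - w s‖ ≤ 960000 * M ^ 3 * √(t - s) := by
  have hM0 : 0 ≤ M := (norm_nonneg _).trans hM
  induction n generalizing s t with
  | zero => exact hbase s t hst (by simpa using hlen)
  | succ n ih =>
    rw [pow_succ] at hlen
    have half {a b : ℝ} (hab : a ≤ b) (hba : b - a = (t - s) / 2) :
        ‖w b - w a‖ ≤ 480000 * M ^ 3 * √(t - s) := by
      have hH : HalfHolderOn w a b (960000 * M ^ 3) := fun r r' har hrr' hrb =>
        ih hrr' (by linarith) (by linarith)
      have hsmall : √(b - a) * (960000 * M ^ 3) ≤ M := by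
        calc √(b - a) * (960000 * M ^ 3) ≤ √T * (960000 * M ^ 3) := by gcongr; linarith
          _ = √T * (960000 * M ^ 2) * M := by ring
          _ ≤ 1 * M := by gcongr
          _ = M := one_mul M
      refine (hw.norm_sub_le_of_halfHolderOn hμ hM hab (by linarith) (by positivity) hsmall
        hH).trans ?_
      gcongr 480000 * M ^ 3 * √?_
      linarith
    have hleft := half (a := s) (b := (s + t) / 2) (by linarith) (by ring)
    have hright := half (a := (s + t) / 2) (b := t) (by linarith) (by ring)
    linarith [norm_sub_le_norm_sub_add_norm_sub (w t) (w ((s + t) / 2)) (w s)]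

theorem halfHolderOn (hμ : |μ| ≤ 1) (hw : IsProfileSolution μ w) (hM0 : 0 < M) (hM : ‖w 0‖ ≤ M)
    (hT1 : T ≤ 1) (hT : √T * (960000 * M ^ 2) ≤ 1) {a b : ℝ} (hab : b - a ≤ T) :
    HalfHolderOn w a b (960000 * M ^ 3) := by
  intro s t has hst htb
  set L := (S.card * ‖w 0‖) ^ 3 * S.card
  set l₀ := (960000 * M ^ 3 / (L + 1)) ^ 2 with hl₀
  have hL : 0 ≤ L := by positivity
  have hl₀pos : 0 < l₀ := by positivity
  have hbase (s t : ℝ) (hst : s ≤ t) (hlen : t - s ≤ l₀) :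
      ‖w t - w s‖ ≤ 960000 * M ^ 3 * √(t - s) := by
    refine (HalfHolderOn.of_norm_sub_le hL (hw.norm_sub_le hμ) hlen le_rfl hst le_rfl).trans ?_
    gcongr ?_ * _
    rw [hl₀, Real.sqrt_sq (by positivity), mul_div_assoc', div_le_iff₀ (by positivity)]
    nlinarith [show 0 ≤ 960000 * M ^ 3 by positivity]
  obtain ⟨n, hn⟩ := pow_unbounded_of_one_lt (T / l₀) one_lt_two
  rw [div_lt_iff₀' hl₀pos] at hn
  exact hw.norm_sub_le_of_length_le hμ hM hT1 hT hbase n hst (by linarith) (by linarith)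

theorem hasIncrementEstimate_sub (hμ : |μ| ≤ 1) (h₁ : IsProfileSolution μ w₁)
    (h₂ : IsProfileSolution μ w₂) (hM0 : 0 < M) (hM₁ : ‖w₁ 0‖ ≤ M) (hM₂ : ‖w₂ 0‖ ≤ M) (hT1 : T ≤ 1)
    (hT : √T * (960000 * M ^ 2) ≤ 1) :
    HasIncrementEstimate (fun t => w₁ t - w₂ t) (240000 * M ^ 2) T := by
  intro s t Λ hst htT hΛ hH
  have hsmall : √(t - s) * (960000 * M ^ 3) ≤ M := by
    calc √(t - s) * (960000 * M ^ 3) ≤ √T * (960000 * M ^ 3) := by gcongr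
      _ = √T * (960000 * M ^ 2) * M := by ring
      _ ≤ 1 * M := by gcongr
      _ = M := one_mul M
  have hA : 0 ≤ 960000 * M ^ 3 := by positivity
  refine (norm_increment_le (m := 2 * M) hμ h₁ h₂ hst (by linarith) hA hA hΛ
    (h₁.halfHolderOn hμ hM0 hM₁ hT1 hT htT) (h₂.halfHolderOn hμ hM0 hM₂ hT1 hT htT) hH
    (by linarith [h₁.norm_eq s]) (by linarith [h₂.norm_eq s])).trans_eq (by ring)

theorem norm_sub_sub_sub_le (hμ : |μ| ≤ 1) (h₁ : IsProfileSolution μ w₁)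
    (h₂ : IsProfileSolution μ w₂) (s t : ℝ) : ‖w₁ t - w₂ t - (w₁ s - w₂ s)‖ ≤
      ((S.card * ‖w₁ 0‖) ^ 3 * S.card + (S.card * ‖w₂ 0‖) ^ 3 * S.card) * |t - s| := by
  rw [sub_sub_sub_comm, add_mul]
  exact (_root_.norm_sub_le _ _).trans (add_le_add (h₁.norm_sub_le hμ s t) (h₂.norm_sub_le hμ s t))

end IsProfileSolution

/-- `K` controls differences of any two solutions of mass at most `M ^ 2` on `[-R, R]`, both
uniformly and in the Hölder seminorm, whatever the frequency set. -/
def IsStabilityConstant (M R K : ℝ) : Prop :=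
  ∀ ⦃S : Finset ℤ⦄ ⦃μ : ℝ⦄, |μ| ≤ 1 → ∀ ⦃w₁ w₂ : ℝ → Profile S⦄, IsProfileSolution μ w₁ →
    IsProfileSolution μ w₂ → ‖w₁ 0‖ ≤ M → ‖w₂ 0‖ ≤ M →
      BoundedHalfHolder (fun t => w₁ t - w₂ t) R (K * ‖w₁ 0 - w₂ 0‖)

theorem exists_isStabilityConstant {M : ℝ} (hM : 1 ≤ M) (R : ℝ) :
    ∃ K, 0 ≤ K ∧ IsStabilityConstant M R K := by
  set T := (1 / (960000 * M ^ 2)) ^ 2 with hT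
  have hM2 : 1 ≤ M ^ 2 := one_le_pow₀ hM
  have hsqrt : √T = 1 / (960000 * M ^ 2) := Real.sqrt_sq (by positivity)
  have hTpos : 0 < T := by positivity
  have hT1 : T ≤ 1 := pow_le_one₀ (by positivity) (by rw [div_le_one (by positivity)]; linarith)
  have hTM : √T * (960000 * M ^ 2) ≤ 1 := by rw [hsqrt, one_div_mul_cancel (by positivity)]
  have hn : R ≤ ⌈R / T⌉₊ * T := (div_le_iff₀ hTpos).mp (Nat.le_ceil _)
  refine ⟨2 ^ ⌈R / T⌉₊ * (1 + 2 * (240000 * M ^ 2) + 2 / √T), by positivity, ?_⟩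
  intro S μ hμ w₁ w₂ h₁ h₂ hM₁ hM₂
  exact (h₁.hasIncrementEstimate_sub hμ h₂ (by linarith) hM₁ hM₂ hT1 hTM).boundedHalfHolder
    (by positivity) (by linarith) hTpos (by positivity) (h₁.norm_sub_sub_sub_le hμ h₂) hn le_rfl

/-! ### Fourier multipliers and translations -/

/-- The Fourier multiplier with symbol `m`, acting on profiles. -/
def multiplier (m : ℤ → ℂ) : Profile S →L[ℂ] Profile S :=
  LinearMap.toContinuousLinearMap
    { toFun := fun z => WithLp.toLp 2 fun k : S => m k * z k
      map_add' := fun z w => by ext k; simp [mul_add]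
      map_smul' := fun c z => by ext k; simp [mul_left_comm] }

theorem multiplier_apply (m : ℤ → ℂ) (z : Profile S) (k : S) : multiplier m z k = m k * z k :=
  rfl

theorem norm_multiplier_sq (m : ℤ → ℂ) (z : Profile S) :
    ‖multiplier m z‖ ^ 2 = ∑ k : S, ‖m k‖ ^ 2 * ‖z k‖ ^ 2 := by
  rw [EuclideanSpace.norm_sq_eq]
  exact Finset.sum_congr rfl fun k _ => by rw [multiplier_apply, norm_mul, mul_pow]

theorem multiplier_one (z : Profile S) : multiplier (fun _ => 1) z = z := by
  ext k; rw [multiplier_apply, one_mul]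

theorem multiplier_sub_one (m : ℤ → ℂ) (z : Profile S) :
    multiplier (fun k => m k - 1) z = multiplier m z - z := by
  ext k; simp only [multiplier_apply, PiLp.sub_apply, sub_one_mul]

theorem fourier_apply_add (k : ℤ) (x y : Torus) :
    fourier k (x + y) = fourier k x * fourier k y := by
  simp only [fourier_apply, smul_add, toCircle_add, Circle.coe_mul]

theorem planeWave_add_right (k : ℤ) (t : ℝ) (x y : Torus) :
    planeWave k (t, x + y) = fourier k y * planeWave k (t, x) := by
  simp only [planeWave, fourier_apply_add]; ring

theorem freeWave_multiplier_fourier (y : Torus) (z : Profile S) (t : ℝ) (x : Torus) :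
    freeWave (multiplier (fourier · y) z) (t, x) = freeWave z (t, x + y) :=
  Finset.sum_congr rfl fun k _ => by rw [multiplier_apply, planeWave_add_right]; ring

theorem norm_multiplier_of_norm_eq_one {m : ℤ → ℂ} (hm : ∀ k, ‖m k‖ = 1) (z : Profile S) :
    ‖multiplier m z‖ = ‖z‖ := by
  rw [← sq_eq_sq₀ (norm_nonneg _) (norm_nonneg _), norm_multiplier_sq, EuclideanSpace.norm_sq_eq]
  exact Finset.sum_congr rfl fun k _ => by rw [hm, one_pow, one_mul]

theorem profileNonlinearity_multiplier_fourier (y : Torus) (z : Profile S) (t : ℝ) :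
    profileNonlinearity (multiplier (fourier · y) z) t =
      multiplier (fourier · y) (profileNonlinearity z t) := by
  ext k
  set F : Torus → ℂ := fun x =>
    cubicMap (freeWave z (t, x)) * starRingEnd ℂ (planeWave k (t, x)) with hF
  have hshift (x : Torus) : cubicMap (freeWave (multiplier (fourier · y) z) (t, x)) *
      starRingEnd ℂ (planeWave k (t, x)) = fourier (k : ℤ) y * F (x + y) := by
    have hunit : fourier (k : ℤ) y * starRingEnd ℂ (fourier (k : ℤ) y) = 1 := by
      rw [mul_conj, normSq_eq_norm_sq, norm_fourier, one_pow, ofReal_one]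
    simp only [hF, freeWave_multiplier_fourier, planeWave_add_right, map_mul]
    linear_combination -(cubicMap (freeWave z (t, x + y)) *
      starRingEnd ℂ (planeWave k (t, x))) * hunit
  calc profileNonlinearity (multiplier (fourier · y) z) t k
      = ∫ x, fourier (k : ℤ) y * F (x + y) ∂haarAddCircle := integral_congr_ae (.of_forall hshift)
    _ = fourier (k : ℤ) y * ∫ x, F x ∂haarAddCircle := by
        rw [integral_const_mul, integral_add_right_eq_self F y]

/-- The multiplier with symbol `m` maps `w` to a curve that is bounded and Hölder continuous on
`[-R, R]`, with a constant at most `K` times its size at time `0`. -/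
def Propagates (m : ℤ → ℂ) (w : ℝ → Profile S) (R K : ℝ) : Prop :=
  BoundedHalfHolder (fun t => multiplier m (w t)) R (K * ‖multiplier m (w 0)‖)

section Translation

variable {μ M R K : ℝ} {w : ℝ → Profile S}

theorem IsProfileSolution.translate (hw : IsProfileSolution μ w) (y : Torus) :
    IsProfileSolution μ fun t => multiplier (fourier · y) (w t) := by
  intro t
  refine ((multiplier (fourier · y)).restrictScalars ℝ |>.hasFDerivAt.comp_hasDerivAt t
    (hw t)).congr_deriv ?_
  rw [profileNonlinearity_multiplier_fourier, ContinuousLinearMap.coe_restrictScalars', map_smul]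

theorem IsStabilityConstant.propagates_one (hK : IsStabilityConstant M R K) (hμ : |μ| ≤ 1)
    (hw : IsProfileSolution μ w) (hM : ‖w 0‖ ≤ M) : Propagates (fun _ => 1) w R K := by
  simpa only [Propagates, multiplier_one, sub_zero] using
    hK hμ hw (isProfileSolution_zero μ) hM (by simpa using (norm_nonneg _).trans hM)

theorem IsStabilityConstant.propagates_fourier_sub_one (hK : IsStabilityConstant M R K)
    (hμ : |μ| ≤ 1) (hw : IsProfileSolution μ w) (hM : ‖w 0‖ ≤ M) (y : Torus) :
    Propagates (fun k => fourier k y - 1) w R K := by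
  simpa only [Propagates, multiplier_sub_one] using
    hK hμ (hw.translate y) hw (by rwa [norm_multiplier_of_norm_eq_one (norm_fourier · y)]) hM

end Translation

/-! ### Square functions -/

section SquareFunction

variable {ι : Type*} {I : Finset ι} {c : ι → ℝ} {m : ι → ℤ → ℂ} {n : ℤ → ℂ} {C : ℝ}

theorem sum_norm_multiplier_sq (I : Finset ι) (c : ι → ℝ) (m : ι → ℤ → ℂ) (z : Profile S) :
    ∑ i ∈ I, c i * ‖multiplier (m i) z‖ ^ 2 =
      ∑ k : S, (∑ i ∈ I, c i * ‖m i k‖ ^ 2) * ‖z k‖ ^ 2 := by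
  simp_rw [norm_multiplier_sq, Finset.mul_sum, Finset.sum_mul]
  rw [Finset.sum_comm]
  simp_rw [mul_assoc]

theorem norm_multiplier_sq_le_sum
    (h : ∀ k ∈ S, ‖n k‖ ^ 2 ≤ C * ∑ i ∈ I, c i * ‖m i k‖ ^ 2) (z : Profile S) :
    ‖multiplier n z‖ ^ 2 ≤ C * ∑ i ∈ I, c i * ‖multiplier (m i) z‖ ^ 2 := by
  rw [sum_norm_multiplier_sq, norm_multiplier_sq, Finset.mul_sum]
  refine Finset.sum_le_sum fun k _ => ?_
  rw [← mul_assoc]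
  exact mul_le_mul_of_nonneg_right (h k k.2) (sq_nonneg _)

theorem sum_norm_multiplier_sq_le
    (h : ∀ k ∈ S, ∑ i ∈ I, c i * ‖m i k‖ ^ 2 ≤ C * ‖n k‖ ^ 2) (z : Profile S) :
    ∑ i ∈ I, c i * ‖multiplier (m i) z‖ ^ 2 ≤ C * ‖multiplier n z‖ ^ 2 := by
  rw [sum_norm_multiplier_sq, norm_multiplier_sq, Finset.mul_sum]
  refine Finset.sum_le_sum fun k _ => ?_
  rw [← mul_assoc]
  exact mul_le_mul_of_nonneg_right (h k k.2) (sq_nonneg _)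

theorem BoundedHalfHolder.of_propagates {n' : ℤ → ℂ} {w : ℝ → Profile S} {R K C' : ℝ}
    (hc : ∀ i ∈ I, 0 ≤ c i) (hC : 0 ≤ C) (hC' : 0 ≤ C') (hK : 0 ≤ K)
    (hlower : ∀ k ∈ S, ‖n k‖ ^ 2 ≤ C * ∑ i ∈ I, c i * ‖m i k‖ ^ 2)
    (hupper : ∀ k ∈ S, ∑ i ∈ I, c i * ‖m i k‖ ^ 2 ≤ C' * ‖n' k‖ ^ 2)
    (hm : ∀ i ∈ I, Propagates (m i) w R K) :
    BoundedHalfHolder (fun t => multiplier n (w t)) R (√(C * C') * K * ‖multiplier n' (w 0)‖) := by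
  have transfer (z : Profile S) {r : ℝ} (hr : 0 ≤ r)
      (hz : ∀ i ∈ I, ‖multiplier (m i) z‖ ≤ K * ‖multiplier (m i) (w 0)‖ * r) :
      ‖multiplier n z‖ ≤ √(C * C') * K * ‖multiplier n' (w 0)‖ * r := by
    refine le_of_sq_le_sq ?_ (by positivity)
    calc ‖multiplier n z‖ ^ 2 ≤ C * ∑ i ∈ I, c i * ‖multiplier (m i) z‖ ^ 2 :=
          norm_multiplier_sq_le_sum hlower z
      _ ≤ C * ∑ i ∈ I, c i * (K * ‖multiplier (m i) (w 0)‖ * r) ^ 2 := by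
          gcongr with i hi
          exacts [hc i hi, hz i hi]
      _ = C * ((K * r) ^ 2 * ∑ i ∈ I, c i * ‖multiplier (m i) (w 0)‖ ^ 2) := by
          congr 1
          rw [Finset.mul_sum]
          exact Finset.sum_congr rfl fun i _ => by ring
      _ ≤ C * ((K * r) ^ 2 * (C' * ‖multiplier n' (w 0)‖ ^ 2)) := by
          gcongr
          exact sum_norm_multiplier_sq_le hupper _
      _ = (√(C * C') * K * ‖multiplier n' (w 0)‖ * r) ^ 2 := by
          simp only [mul_pow, Real.sq_sqrt (mul_nonneg hC hC')]; ring
  refine ⟨fun t ht => ?_, fun r t hr hrt ht => ?_⟩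
  · simpa using transfer (w t) zero_le_one fun i hi => by simpa using (hm i hi).norm_le ht
  · have := transfer (w t - w r) (Real.sqrt_nonneg (t - r)) fun i hi => by
      simpa only [map_sub] using (hm i hi).halfHolderOn hr hrt ht
    simpa only [map_sub] using this

end SquareFunction

/-! ### Sobolev norms below the first derivative -/

theorem one_le_jbr (x : ℝ) : 1 ≤ jbr x :=
  Real.one_le_sqrt.mpr (by linarith [sq_nonneg x])

theorem jbr_sq (x : ℝ) : jbr x ^ 2 = 1 + x ^ 2 :=
  Real.sq_sqrt (by positivity)

theorem jbr_rpow_two_mul (x s : ℝ) : jbr x ^ (2 * s) = (1 + x ^ 2) ^ s := by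
  rw [Real.rpow_mul (by linarith [one_le_jbr x]), Real.rpow_two, jbr_sq]

theorem jbr_rpow_sq (x s : ℝ) : (jbr x ^ s) ^ 2 = jbr x ^ (2 * s) := by
  rw [mul_comm, Real.rpow_mul (by linarith [one_le_jbr x]), Real.rpow_two]

/-- The symbol `⟨k⟩ ^ s` of the isomorphism of `H^s` onto `L²`. -/
def sobolevSymbol (s : ℝ) (k : ℤ) : ℂ := (jbr k ^ s : ℝ)

theorem norm_sobolevSymbol (s : ℝ) (k : ℤ) : ‖sobolevSymbol s k‖ = jbr k ^ s :=
  (norm_real _).trans (Real.norm_of_nonneg (Real.rpow_nonneg (Real.sqrt_nonneg _) s))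

theorem norm_sobolevSymbol_sq (s : ℝ) (k : ℤ) :
    ‖sobolevSymbol s k‖ ^ 2 = (1 + (k : ℝ) ^ 2) ^ s := by
  rw [norm_sobolevSymbol, jbr_rpow_sq, jbr_rpow_two_mul]

theorem norm_fourier_coe_sub_one_sq (k : ℤ) (y : ℝ) :
    ‖fourier k (y : Torus) - 1‖ ^ 2 = 2 - 2 * Real.cos (k * y) := by
  have hexp : fourier k (y : Torus) = exp ((k * y : ℝ) * I) := by
    rw [fourier_coe_apply]
    congr 1
    push_cast
    field_simp
  rw [hexp, ← normSq_eq_norm_sq, normSq_apply]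
  simp only [sub_re, sub_im, exp_ofReal_mul_I_re, exp_ofReal_mul_I_im, one_re, one_im]
  linear_combination Real.sin_sq_add_cos_sq (k * y)

theorem norm_fourier_coe_sub_one_sq_le (k : ℤ) (y : ℝ) {s : ℝ} (hs0 : 0 ≤ s) (hs1 : s ≤ 1) :
    ‖fourier k (y : Torus) - 1‖ ^ 2 ≤ 4 * ((k * y) ^ 2) ^ s := by
  rw [norm_fourier_coe_sub_one_sq]
  rcases le_total (((k : ℝ) * y) ^ 2) 1 with hle | hge
  · have hpow := Real.self_le_rpow_of_le_one (sq_nonneg ((k : ℝ) * y)) hle hs1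
    linarith [Real.one_sub_sq_div_two_le_cos (x := k * y), sq_nonneg ((k : ℝ) * y)]
  · linarith [Real.one_le_rpow hge hs0, Real.neg_one_le_cos (k * y)]

/-- Symbols whose squares, with the weights `dyadicCoeff s`, add up to an approximation of
`⟨k⟩ ^ (2 * s)`: the identity, followed by the differences with the translates by `π / 2 / 2 ^ j`.
Each of them maps a solution to a difference of two solutions. -/
def dyadicSymbol : ℕ → ℤ → ℂ
  | 0, _ => 1
  | j + 1, k => fourier k ((Real.pi / 2 / 2 ^ j : ℝ) : Torus) - 1

/-- The weight of `dyadicSymbol` in the square function of order `s`. -/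
def dyadicCoeff (s : ℝ) : ℕ → ℝ
  | 0 => 1
  | j + 1 => 4 ^ (s * j)

theorem dyadicCoeff_nonneg (s : ℝ) : ∀ i, 0 ≤ dyadicCoeff s i
  | 0 => zero_le_one
  | _ + 1 => Real.rpow_nonneg (by norm_num) _

theorem two_le_norm_dyadicSymbol_sq {k : ℤ} {j : ℕ} (hj : 2 ^ j ≤ |(k : ℝ)|)
    (hj' : |(k : ℝ)| ≤ 2 ^ (j + 1)) : 2 ≤ ‖dyadicSymbol (j + 1) k‖ ^ 2 := by
  have hangle : |(k : ℝ) * (Real.pi / 2 / 2 ^ j)| = |(k : ℝ)| / 2 ^ j * (Real.pi / 2) := by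
    rw [abs_mul, abs_of_nonneg (by positivity : 0 ≤ Real.pi / 2 / 2 ^ j)]; ring
  have hlow : 1 ≤ |(k : ℝ)| / 2 ^ j := (one_le_div (by positivity)).mpr hj
  have hhigh : |(k : ℝ)| / 2 ^ j ≤ 2 :=
    (div_le_iff₀ (by positivity)).mpr (by linarith [pow_succ (2 : ℝ) j])
  have hcos : Real.cos (k * (Real.pi / 2 / 2 ^ j)) ≤ 0 := by
    rw [← Real.cos_abs, hangle]
    apply Real.cos_nonpos_of_pi_div_two_le_of_le <;> nlinarith [Real.pi_pos]
  rw [dyadicSymbol, norm_fourier_coe_sub_one_sq]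
  linarith

theorem norm_sobolevSymbol_sq_le_sum_dyadic {s : ℝ} (hs : 0 ≤ s) {J : ℕ} {k : ℤ}
    (hk : |(k : ℝ)| < 2 ^ J) : ‖sobolevSymbol s k‖ ^ 2 ≤
      8 ^ s * ∑ i ∈ Finset.range (J + 1), dyadicCoeff s i * ‖dyadicSymbol i k‖ ^ 2 := by
  have hterm (i : ℕ) (hi : i < J + 1) : dyadicCoeff s i * ‖dyadicSymbol i k‖ ^ 2 ≤
      ∑ i ∈ Finset.range (J + 1), dyadicCoeff s i * ‖dyadicSymbol i k‖ ^ 2 :=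
    Finset.single_le_sum (f := fun i => dyadicCoeff s i * ‖dyadicSymbol i k‖ ^ 2)
      (fun i _ => mul_nonneg (dyadicCoeff_nonneg s i) (sq_nonneg _)) (Finset.mem_range.mpr hi)
  have h8 : 1 ≤ (8 : ℝ) ^ s := Real.one_le_rpow (by norm_num) hs
  rw [norm_sobolevSymbol_sq]
  rcases eq_or_ne k 0 with rfl | hk0
  · have hzero : dyadicCoeff s 0 * ‖dyadicSymbol 0 (0 : ℤ)‖ ^ 2 = 1 := by
      simp [dyadicCoeff, dyadicSymbol]
    simpa using one_le_mul_of_one_le_of_one_le h8 (hzero.ge.trans (hterm 0 J.succ_pos))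
  have hk1 : 1 ≤ |(k : ℝ)| := by exact_mod_cast Int.one_le_abs hk0
  obtain ⟨j, hj, hj'⟩ := exists_nat_pow_near hk1 one_lt_two
  have hjJ : j < J := (pow_lt_pow_iff_right₀ one_lt_two).mp (hj.trans_lt hk)
  have hkj : 1 + (k : ℝ) ^ 2 ≤ 8 * 4 ^ (j : ℝ) := by
    have : (k : ℝ) ^ 2 ≤ (2 ^ (j + 1)) ^ 2 := by rw [← sq_abs (k : ℝ)]; gcongr
    have h4 : ((2 : ℝ) ^ (j + 1)) ^ 2 = 4 * 4 ^ j := by rw [← pow_mul, mul_comm, pow_mul]; ring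
    rw [Real.rpow_natCast]
    nlinarith [sq_abs (k : ℝ)]
  calc (1 + (k : ℝ) ^ 2) ^ s ≤ (8 * 4 ^ (j : ℝ)) ^ s := by gcongr
    _ = 8 ^ s * 4 ^ (s * j) := by
        rw [Real.mul_rpow (by norm_num) (by positivity), ← Real.rpow_mul (by norm_num), mul_comm s]
    _ ≤ 8 ^ s * (dyadicCoeff s (j + 1) * ‖dyadicSymbol (j + 1) k‖ ^ 2) := by
        gcongr
        exact le_mul_of_one_le_right (by positivity)
          (one_le_two.trans (two_le_norm_dyadicSymbol_sq hj hj'.le))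
    _ ≤ _ := by gcongr; exact hterm (j + 1) (by omega)

theorem dyadicCoeff_succ_mul_norm_dyadicSymbol_sq_le {s s' : ℝ} (hs0 : 0 ≤ s') (hs1 : s' ≤ 1)
    (j : ℕ) (k : ℤ) : dyadicCoeff s (j + 1) * ‖dyadicSymbol (j + 1) k‖ ^ 2 ≤
      16 * ‖sobolevSymbol s' k‖ ^ 2 * (4 ^ (s - s')) ^ j := by
  have hangle : ((k : ℝ) * (Real.pi / 2 / 2 ^ j)) ^ 2 ≤ (1 + (k : ℝ) ^ 2) * 4 * 4 ^ (-(j : ℝ)) := by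
    have hpi : (Real.pi / 2) ^ 2 ≤ 4 := by nlinarith [Real.pi_le_four, Real.pi_pos]
    calc ((k : ℝ) * (Real.pi / 2 / 2 ^ j)) ^ 2 = (k : ℝ) ^ 2 * (Real.pi / 2) ^ 2 * (4 ^ j)⁻¹ := by
          rw [show (4 : ℝ) ^ j = (2 ^ j) ^ 2 by rw [← pow_mul, mul_comm, pow_mul]; norm_num]
          ring
      _ ≤ (1 + (k : ℝ) ^ 2) * 4 * (4 ^ j)⁻¹ := by gcongr; linarith
      _ = _ := by rw [Real.rpow_neg (by norm_num), Real.rpow_natCast]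
  have hsymbol : ‖dyadicSymbol (j + 1) k‖ ^ 2 ≤
      4 * (‖sobolevSymbol s' k‖ ^ 2 * 4 * 4 ^ (-(s' * j))) := by
    calc ‖dyadicSymbol (j + 1) k‖ ^ 2 ≤ 4 * (((k : ℝ) * (Real.pi / 2 / 2 ^ j)) ^ 2) ^ s' :=
          norm_fourier_coe_sub_one_sq_le k _ hs0 hs1
      _ ≤ 4 * ((1 + (k : ℝ) ^ 2) * 4 * 4 ^ (-(j : ℝ))) ^ s' := by gcongr
      _ = 4 * (‖sobolevSymbol s' k‖ ^ 2 * 4 ^ s' * 4 ^ (-(s' * j))) := by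
          rw [Real.mul_rpow (by positivity) (by positivity), Real.mul_rpow (by positivity)
            (by positivity), ← Real.rpow_mul (by norm_num), neg_mul, mul_comm (j : ℝ),
            norm_sobolevSymbol_sq]
      _ ≤ _ := by
          gcongr
          exact (Real.rpow_le_rpow_of_exponent_le (by norm_num) hs1).trans_eq (Real.rpow_one 4)
  have hpow : (4 : ℝ) ^ (s * j) * 4 ^ (-(s' * j)) = (4 ^ (s - s')) ^ j := by
    rw [← Real.rpow_add (by norm_num), ← Real.rpow_natCast, ← Real.rpow_mul (by norm_num)]
    ring_nf
  calc dyadicCoeff s (j + 1) * ‖dyadicSymbol (j + 1) k‖ ^ 2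
      ≤ 4 ^ (s * j) * (4 * (‖sobolevSymbol s' k‖ ^ 2 * 4 * 4 ^ (-(s' * j)))) := by
        rw [dyadicCoeff]; gcongr
    _ = _ := by rw [← hpow]; ring

theorem sum_dyadic_le {s s' : ℝ} (hs0 : 0 ≤ s') (hs1 : s' ≤ 1) (hss : s < s') (J : ℕ) (k : ℤ) :
    ∑ i ∈ Finset.range (J + 1), dyadicCoeff s i * ‖dyadicSymbol i k‖ ^ 2 ≤
      (1 + 16 * (1 - 4 ^ (s - s'))⁻¹) * ‖sobolevSymbol s' k‖ ^ 2 := by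
  set q : ℝ := 4 ^ (s - s')
  have hq0 : 0 ≤ q := by positivity
  have hq1 : q < 1 := Real.rpow_lt_one_of_one_lt_of_neg (by norm_num) (by linarith)
  have hgeom : ∑ j ∈ Finset.range J, q ^ j ≤ (1 - q)⁻¹ := by
    rw [← tsum_geometric_of_lt_one hq0 hq1]
    exact (summable_geometric_of_lt_one hq0 hq1).sum_le_tsum _ fun _ _ => by positivity
  have hone : 1 ≤ ‖sobolevSymbol s' k‖ ^ 2 := by
    rw [norm_sobolevSymbol_sq]
    exact Real.one_le_rpow (by linarith [sq_nonneg (k : ℝ)]) hs0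
  rw [Finset.sum_range_succ']
  calc _ ≤ ∑ j ∈ Finset.range J, 16 * ‖sobolevSymbol s' k‖ ^ 2 * q ^ j +
          ‖sobolevSymbol s' k‖ ^ 2 := by
        refine add_le_add (Finset.sum_le_sum fun j _ =>
          dyadicCoeff_succ_mul_norm_dyadicSymbol_sq_le hs0 hs1 j k) ?_
        simpa [dyadicCoeff, dyadicSymbol] using hone
    _ ≤ 16 * ‖sobolevSymbol s' k‖ ^ 2 * (1 - q)⁻¹ + ‖sobolevSymbol s' k‖ ^ 2 := by
        rw [← Finset.mul_sum]; gcongr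
    _ = _ := by ring

/-- `K` bounds the `H^s` norm of solutions on `[-R, R]`, and their Hölder seminorm in `H^s`, by the
`H^s'` norm of the datum, for data of mass at most `M ^ 2`. -/
def IsSobolevConstant (s s' M R K : ℝ) : Prop :=
  ∀ ⦃S : Finset ℤ⦄ ⦃μ : ℝ⦄, |μ| ≤ 1 → ∀ ⦃w : ℝ → Profile S⦄, IsProfileSolution μ w → ‖w 0‖ ≤ M →
    BoundedHalfHolder (fun t => multiplier (sobolevSymbol s) (w t)) R
      (K * ‖multiplier (sobolevSymbol s') (w 0)‖)

theorem exists_isSobolevConstant_of_le_one {s s' M : ℝ} (hs : 0 ≤ s) (hss : s < s') (hs1 : s' ≤ 1)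
    (hM : 1 ≤ M) (R : ℝ) : ∃ K, 0 ≤ K ∧ IsSobolevConstant s s' M R K := by
  obtain ⟨K, hK, hstab⟩ := exists_isStabilityConstant hM R
  have hC : 0 ≤ 1 + 16 * (1 - (4 : ℝ) ^ (s - s'))⁻¹ := by
    have : (4 : ℝ) ^ (s - s') < 1 := Real.rpow_lt_one_of_one_lt_of_neg (by norm_num) (by linarith)
    have := inv_pos.mpr (sub_pos.mpr this)
    positivity
  refine ⟨√(8 ^ s * (1 + 16 * (1 - 4 ^ (s - s'))⁻¹)) * K, by positivity, ?_⟩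
  intro S μ hμ w hw hwM
  obtain ⟨J, hJ⟩ := pow_unbounded_of_one_lt (∑ k ∈ S, |(k : ℝ)|) one_lt_two
  have hSJ (k : ℤ) (hk : k ∈ S) : |(k : ℝ)| < 2 ^ J :=
    (Finset.single_le_sum (f := fun k : ℤ => |(k : ℝ)|) (fun _ _ => abs_nonneg _) hk).trans_lt hJ
  refine BoundedHalfHolder.of_propagates (I := Finset.range (J + 1)) (c := dyadicCoeff s)
    (m := dyadicSymbol) (fun i _ => dyadicCoeff_nonneg s i) (by positivity) hC hK
    (fun k hk => norm_sobolevSymbol_sq_le_sum_dyadic hs (hSJ k hk))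
    (fun k _ => sum_dyadic_le (hs.trans hss.le) hs1 hss J k) fun i _ => ?_
  cases i with
  | zero => exact hstab.propagates_one hμ hw hwM
  | succ j => exact hstab.propagates_fourier_sub_one hμ hw hwM _

/-! ### Sobolev norms of high order -/

section Matching

variable {ι κ : Type*} [Fintype κ]

theorem sum_ite_rightUnique_le {r : ι → κ → Prop} [∀ i, DecidablePred (r i)]
    (hr : Relator.RightUnique r) (i : ι) {c : ℝ} (hc : 0 ≤ c) :
    ∑ k, (if r i k then c else 0) ≤ c := by
  have hcard : ({k | r i k} : Finset κ).card ≤ 1 :=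
    Finset.card_le_one.mpr fun k hk l hl => hr (by simpa using hk) (by simpa using hl)
  rw [← Finset.sum_filter, Finset.sum_const, nsmul_eq_mul]
  exact mul_le_of_le_one_left hc (by exact_mod_cast hcard)

variable [Fintype ι]

theorem sum_matching_le {r : ι → κ → Prop} [∀ i, DecidablePred (r i)] (hr : Relator.BiUnique r)
    (α : ι → ℝ) (δ : κ → ℝ) :
    ∑ i, ∑ k, (if r i k then α i * δ k else 0) ≤ √(∑ i, α i ^ 2) * √(∑ k, δ k ^ 2) := by
  have hsplit (p : ι × κ) : (if r p.1 p.2 then α p.1 * δ p.2 else 0) =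
      (if r p.1 p.2 then α p.1 else 0) * (if r p.1 p.2 then δ p.2 else 0) := by
    split_ifs <;> simp
  have hsq (q : Prop) [Decidable q] (c : ℝ) :
      (if q then c else 0) ^ 2 = if q then c ^ 2 else 0 := by
    split_ifs <;> simp
  rw [← Fintype.sum_prod_type']
  simp_rw [hsplit]
  refine (Real.sum_mul_le_sqrt_mul_sqrt _ _ _).trans ?_
  simp_rw [hsq]
  gcongr
  · rw [Fintype.sum_prod_type]
    exact Finset.sum_le_sum fun i _ => sum_ite_rightUnique_le hr.2 i (sq_nonneg (α i))
  · rw [Fintype.sum_prod_type_right]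
    exact Finset.sum_le_sum fun k _ => sum_ite_rightUnique_le (r := fun k i => r i k)
      (fun _ _ _ h h' => hr.1 h h') k (sq_nonneg (δ k))

theorem sum_sum_matching_le {ι' κ' : Type*} [Fintype ι'] [Fintype κ']
    {r : ι → κ → ι' → κ' → Prop} [∀ i j a, DecidablePred (r i j a)]
    (hr : ∀ i j, Relator.BiUnique (r i j)) {β : ι → ℝ} {γ : κ → ℝ} (hβ : ∀ i, 0 ≤ β i)
    (hγ : ∀ j, 0 ≤ γ j) (α : ι' → ℝ) (δ : κ' → ℝ) :
    ∑ i, ∑ j, ∑ a, ∑ k, (if r i j a k then β i * γ j * (α a * δ k) else 0) ≤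
      (∑ i, β i) * (∑ j, γ j) * (√(∑ a, α a ^ 2) * √(∑ k, δ k ^ 2)) := by
  simp_rw [Finset.sum_mul_sum, Finset.sum_mul]
  refine Finset.sum_le_sum fun i _ => Finset.sum_le_sum fun j _ => ?_
  calc ∑ a, ∑ k, (if r i j a k then β i * γ j * (α a * δ k) else 0)
      = β i * γ j * ∑ a, ∑ k, (if r i j a k then α a * δ k else 0) := by
        simp_rw [Finset.mul_sum, mul_ite_zero]
    _ ≤ β i * γ j * (√(∑ a, α a ^ 2) * √(∑ k, δ k ^ 2)) :=
        mul_le_mul_of_nonneg_left (sum_matching_le (hr i j) α δ) (mul_nonneg (hβ i) (hγ j))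

end Matching

theorem cubicMap_eq (c : ℂ) : cubicMap c = c * c * starRingEnd ℂ c := by
  rw [cubicMap, ← conj_mul']; ring

theorem norm_integral_planeWave_eq (p q : ℤ × ℤ) (t : ℝ) :
    ‖∫ x, planeWave p.1 (t, x) * planeWave p.2 (t, x) *
      starRingEnd ℂ (planeWave q.1 (t, x) * planeWave q.2 (t, x)) ∂haarAddCircle‖ =
        if p.1 + p.2 = q.1 + q.2 then 1 else 0 := by
  simp_rw [planeWave_mul_mul_conj, integral_const_mul, integral_fourier, sub_eq_zero]
  rw [norm_mul, norm_exp_neg_I_mul_ofReal_mul_ofReal, one_mul]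
  split_ifs <;> simp

theorem norm_profileNonlinearity_apply_le (z : Profile S) (t : ℝ) (k : S) :
    ‖profileNonlinearity z t k‖ ≤ ∑ a : S, ∑ b : S, ∑ c : S,
      if (a + b : ℤ) = c + k then ‖z a‖ * ‖z b‖ * ‖z c‖ else 0 := by
  have hexpand (x : Torus) :
      cubicMap (freeWave z (t, x)) * starRingEnd ℂ (planeWave k (t, x)) =
        ∑ a : S, ∑ b : S, ∑ c : S, z a * z b * starRingEnd ℂ (z c) *
          (planeWave a (t, x) * planeWave b (t, x) *
            starRingEnd ℂ (planeWave c (t, x) * planeWave k (t, x))) := by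
    rw [cubicMap_eq, freeWave, map_sum, Finset.sum_mul_sum, Finset.sum_mul, Finset.sum_mul]
    refine Finset.sum_congr rfl fun a _ => ?_
    rw [Finset.sum_mul, Finset.sum_mul]
    refine Finset.sum_congr rfl fun b _ => ?_
    rw [Finset.mul_sum, Finset.sum_mul]
    exact Finset.sum_congr rfl fun c _ => by rw [map_mul, map_mul]; ring
  have hintegrable (a b c : S) : Integrable (fun x : Torus => z a * z b * starRingEnd ℂ (z c) *
      (planeWave a (t, x) * planeWave b (t, x) *
        starRingEnd ℂ (planeWave c (t, x) * planeWave k (t, x)))) haarAddCircle :=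
    integrable_haarAddCircle_of_continuous (by fun_prop)
  simp only [profileNonlinearity, hexpand]
  rw [integral_finsetSum _ fun a _ => integrable_finsetSum _ fun b _ =>
    integrable_finsetSum _ fun c _ => hintegrable a b c]
  refine norm_sum_le_of_le _ fun a _ => ?_
  rw [integral_finsetSum _ fun b _ => integrable_finsetSum _ fun c _ => hintegrable a b c]
  refine norm_sum_le_of_le _ fun b _ => ?_
  rw [integral_finsetSum _ fun c _ => hintegrable a b c]
  refine norm_sum_le_of_le _ fun c _ => ?_
  rw [integral_const_mul, norm_mul, norm_integral_planeWave_eq (a, b) (c, k) t]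
  simp

theorem abs_le_jbr (x : ℝ) : |x| ≤ jbr x :=
  Real.abs_le_sqrt (by linarith)

theorem jbr_add_le (x y : ℝ) : jbr (x + y) ≤ jbr x + jbr y := by
  refine Real.sqrt_le_iff.mpr ⟨by linarith [one_le_jbr x, one_le_jbr y], ?_⟩
  have hxy : x * y ≤ jbr x * jbr y :=
    (le_abs_self _).trans <| (abs_mul x y).trans_le <|
      mul_le_mul (abs_le_jbr x) (abs_le_jbr y) (abs_nonneg y) (Real.sqrt_nonneg _)
  nlinarith [jbr_sq x, jbr_sq y]

theorem jbr_neg (x : ℝ) : jbr (-x) = jbr x := by rw [jbr, jbr, neg_sq]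

theorem jbr_rpow_le_of_add_eq {s : ℝ} (hs : 0 ≤ s) {a b c k : ℝ} (h : a + b = c + k) :
    jbr k ^ s ≤ 3 ^ s * (jbr a ^ s + jbr b ^ s + jbr c ^ s) := by
  have hpos (x : ℝ) : 0 ≤ jbr x ^ s := Real.rpow_nonneg (Real.sqrt_nonneg _) s
  have hmax : jbr k ≤ 3 * max (max (jbr a) (jbr b)) (jbr c) := by
    have hab := (jbr_add_le (a + b) (-c)).trans (add_le_add_left (jbr_add_le a b) _)
    rw [jbr_neg, show a + b + -c = k by linarith] at hab
    linarith [le_max_left (max (jbr a) (jbr b)) (jbr c), le_max_left (jbr a) (jbr b),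
      le_max_right (max (jbr a) (jbr b)) (jbr c), le_max_right (jbr a) (jbr b)]
  calc jbr k ^ s ≤ (3 * max (max (jbr a) (jbr b)) (jbr c)) ^ s :=
        Real.rpow_le_rpow (Real.sqrt_nonneg _) hmax hs
    _ = 3 ^ s * max (max (jbr a) (jbr b)) (jbr c) ^ s :=
        Real.mul_rpow (by norm_num) (le_max_of_le_right (Real.sqrt_nonneg _))
    _ ≤ 3 ^ s * (jbr a ^ s + jbr b ^ s + jbr c ^ s) := by
        gcongr
        rcases max_choice (max (jbr a) (jbr b)) (jbr c) with hmax | hmax <;> rw [hmax]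
        · rcases max_choice (jbr a) (jbr b) with hmax | hmax <;> rw [hmax] <;>
            linarith [hpos a, hpos b, hpos c]
        · linarith [hpos a, hpos b]

theorem norm_multiplier_sobolevSymbol (s : ℝ) (z : Profile S) :
    ‖multiplier (sobolevSymbol s) z‖ = √(∑ k : S, (jbr k ^ s * ‖z k‖) ^ 2) := by
  rw [← Real.sqrt_sq (norm_nonneg (multiplier _ z)), norm_multiplier_sq]
  simp_rw [norm_sobolevSymbol, mul_pow]

/-- The sum of `α a * β b * (γ c * δ k)` over the frequencies with `a + b = c + k`. -/
def resonantSum (α β γ δ : S → ℝ) : ℝ :=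
  ∑ a : S, ∑ b : S, ∑ c : S, ∑ k : S,
    if (a + b : ℤ) = c + k then α a * β b * (γ c * δ k) else 0

section ResonantSum

variable {α β γ : S → ℝ}

theorem resonantSum_swap (α β γ δ : S → ℝ) : resonantSum α β γ δ = resonantSum β α γ δ := by
  rw [resonantSum, Finset.sum_comm]
  simp only [resonantSum, add_comm, mul_comm (α _)]

theorem resonantSum_le (hα : ∀ a, 0 ≤ α a) (hβ : ∀ b, 0 ≤ β b) (γ δ : S → ℝ) :
    resonantSum α β γ δ ≤
      (∑ a, α a) * (∑ b, β b) * (√(∑ c, γ c ^ 2) * √(∑ k, δ k ^ 2)) :=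
  sum_sum_matching_le (r := fun a b c k : S => (a + b : ℤ) = c + k)
    (fun a b => ⟨fun c k c' h h' => by grind, fun c k k' h h' => by grind⟩) hα hβ γ δ

theorem resonantSum_le' (hα : ∀ a, 0 ≤ α a) (hγ : ∀ c, 0 ≤ γ c) (β δ : S → ℝ) :
    resonantSum α β γ δ ≤
      (∑ a, α a) * (∑ c, γ c) * (√(∑ b, β b ^ 2) * √(∑ k, δ k ^ 2)) := by
  have hcomm : resonantSum α β γ δ = ∑ a : S, ∑ c : S, ∑ b : S, ∑ k : S,
      if (a + b : ℤ) = c + k then α a * γ c * (β b * δ k) else 0 :=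
    Finset.sum_congr rfl fun a _ => by
      rw [Finset.sum_comm]
      simp only [mul_assoc, mul_left_comm]
  rw [hcomm]
  exact sum_sum_matching_le (r := fun a c b k : S => (a + b : ℤ) = c + k)
    (fun a c => ⟨fun b k b' h h' => by grind, fun b k k' h h' => by grind⟩) hα hγ β δ

end ResonantSum

theorem jbr_rpow_mul_norm_profileNonlinearity_apply_le {s : ℝ} (hs : 0 ≤ s) (z : Profile S) (t : ℝ)
    (k : S) : jbr k ^ s * ‖profileNonlinearity z t k‖ ≤
      3 ^ s * ∑ a : S, ∑ b : S, ∑ c : S, if (a + b : ℤ) = c + k then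
        (jbr a ^ s * ‖z a‖) * ‖z b‖ * ‖z c‖ + ‖z a‖ * (jbr b ^ s * ‖z b‖) * ‖z c‖ +
          ‖z a‖ * ‖z b‖ * (jbr c ^ s * ‖z c‖) else 0 := by
  refine (mul_le_mul_of_nonneg_left (norm_profileNonlinearity_apply_le z t k)
    (Real.rpow_nonneg (Real.sqrt_nonneg _) s)).trans ?_
  simp_rw [Finset.mul_sum]
  refine Finset.sum_le_sum fun a _ => Finset.sum_le_sum fun b _ => Finset.sum_le_sum fun c _ => ?_
  split_ifs with h
  · have hjbr := jbr_rpow_le_of_add_eq hs (a := a) (b := b) (c := c) (k := k) (by exact_mod_cast h)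
    calc jbr k ^ s * (‖z a‖ * ‖z b‖ * ‖z c‖)
        ≤ 3 ^ s * (jbr a ^ s + jbr b ^ s + jbr c ^ s) * (‖z a‖ * ‖z b‖ * ‖z c‖) := by
          gcongr ?_ * _
      _ = _ := by ring
  · simp

theorem sum_sq_jbr_rpow_mul_norm_profileNonlinearity_le {s : ℝ} (hs : 0 ≤ s) {z : Profile S}
    {t : ℝ} {ζ v g : S → ℝ} (hζ : ζ = fun k => ‖z k‖) (hv : v = fun k : S => jbr k ^ s * ‖z k‖)
    (hg : g = fun k : S => jbr k ^ s * ‖profileNonlinearity z t k‖) :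
    ∑ k, g k ^ 2 ≤
      3 ^ s * (resonantSum v ζ ζ g + resonantSum ζ v ζ g + resonantSum ζ ζ v g) := by
  have hg0 (k : S) : 0 ≤ g k := by
    rw [hg]; exact mul_nonneg (Real.rpow_nonneg (Real.sqrt_nonneg _) s) (norm_nonneg _)
  calc ∑ k, g k ^ 2
      ≤ ∑ k : S, (3 ^ s * ∑ a : S, ∑ b : S, ∑ c : S, if (a + b : ℤ) = c + k then
          v a * ζ b * ζ c + ζ a * v b * ζ c + ζ a * ζ b * v c else 0) * g k := by
        refine Finset.sum_le_sum fun k _ => ?_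
        rw [sq]
        refine mul_le_mul_of_nonneg_right ?_ (hg0 k)
        rw [hζ, hv, hg]
        exact jbr_rpow_mul_norm_profileNonlinearity_apply_le hs z t k
    _ = 3 ^ s * ∑ a : S, ∑ b : S, ∑ c : S, ∑ k : S, (if (a + b : ℤ) = c + k then
          v a * ζ b * ζ c + ζ a * v b * ζ c + ζ a * ζ b * v c else 0) * g k := by
        simp_rw [mul_assoc, ← Finset.mul_sum, Finset.sum_mul]
        rw [Finset.sum_comm]
        congr 1
        refine Finset.sum_congr rfl fun a _ => ?_
        rw [Finset.sum_comm]
        refine Finset.sum_congr rfl fun b _ => ?_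
        rw [Finset.sum_comm]
    _ = 3 ^ s * (resonantSum v ζ ζ g + resonantSum ζ v ζ g + resonantSum ζ ζ v g) := by
        simp only [resonantSum, ← Finset.sum_add_distrib]
        congr 1
        refine Finset.sum_congr rfl fun a _ => Finset.sum_congr rfl fun b _ =>
          Finset.sum_congr rfl fun c _ => Finset.sum_congr rfl fun k _ => ?_
        split_ifs <;> ring

theorem norm_multiplier_sobolevSymbol_profileNonlinearity_le {s A : ℝ} (hs : 0 ≤ s)
    {z : Profile S} (hA : ∑ k : S, ‖z k‖ ≤ A) (t : ℝ) :
    ‖multiplier (sobolevSymbol s) (profileNonlinearity z t)‖ ≤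
      3 ^ s * (3 * A ^ 2) * ‖multiplier (sobolevSymbol s) z‖ := by
  set ζ : S → ℝ := fun k => ‖z k‖ with hζ
  set v : S → ℝ := fun k => jbr k ^ s * ‖z k‖ with hv
  set g : S → ℝ := fun k => jbr k ^ s * ‖profileNonlinearity z t k‖ with hg
  have hζ0 (k : S) : 0 ≤ ζ k := norm_nonneg _
  have hsplit := sum_sq_jbr_rpow_mul_norm_profileNonlinearity_le hs hζ hv hg
  have hbound : ∑ k, g k ^ 2 ≤
      3 ^ s * (3 * A ^ 2) * √(∑ k, v k ^ 2) * √(∑ k, g k ^ 2) := by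
    have hAsq : (∑ k, ζ k) * (∑ k, ζ k) ≤ A ^ 2 := by
      rw [sq]
      exact mul_self_le_mul_self (Finset.sum_nonneg fun k _ => hζ0 k) hA
    have hle := mul_le_mul_of_nonneg_right hAsq
      (mul_nonneg (Real.sqrt_nonneg (∑ k, v k ^ 2)) (Real.sqrt_nonneg (∑ k, g k ^ 2)))
    rw [resonantSum_swap v] at hsplit
    have hweightLeft := resonantSum_le' hζ0 hζ0 v g
    have hweightRight := resonantSum_le hζ0 hζ0 v g
    refine hsplit.trans ?_
    rw [mul_assoc (3 ^ s), mul_assoc (3 ^ s)]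
    gcongr
    linarith
  rw [norm_multiplier_sobolevSymbol, norm_multiplier_sobolevSymbol]
  refine le_of_sq_le_mul_self (by positivity) ?_
  rwa [Real.sq_sqrt (Finset.sum_nonneg fun k _ => sq_nonneg _)]

theorem BoundedHalfHolder.mono {E : Type*} [NormedAddCommGroup E] {D : ℝ → E} {R B B' : ℝ}
    (h : BoundedHalfHolder D R B) (hB : B ≤ B') : BoundedHalfHolder D R B' where
  norm_le _ ht := (h.norm_le ht).trans hB
  halfHolderOn _ _ hs hst ht := (h.halfHolderOn hs hst ht).trans (by gcongr)

section Gronwall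

variable {E : Type*} [NormedAddCommGroup E] [NormedSpace ℝ E] {f f' : ℝ → E} {L R : ℝ}

theorem norm_le_norm_mul_exp_of_norm_deriv_le (hf : ∀ t, HasDerivAt f (f' t) t) (hL : 0 ≤ L)
    (hf' : ∀ ⦃t⦄, 0 ≤ t → t ≤ R → ‖f' t‖ ≤ L * ‖f t‖) {t : ℝ} (ht : 0 ≤ t) (htR : t ≤ R) :
    ‖f t‖ ≤ ‖f 0‖ * Real.exp (L * R) := by
  have hgronwall := norm_le_gronwallBound_of_norm_deriv_right_le (a := 0) (b := R) (ε := 0)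
    (fun s _ => (hf s).continuousAt.continuousWithinAt)
    (fun s _ => (hf s).hasDerivWithinAt) le_rfl
    (fun s hs => by simpa only [add_zero] using hf' hs.1 hs.2.le) t ⟨ht, htR⟩
  rw [gronwallBound_ε0, sub_zero] at hgronwall
  refine hgronwall.trans ?_
  gcongr

theorem norm_le_norm_mul_exp_of_norm_deriv_le_of_abs_le (hf : ∀ t, HasDerivAt f (f' t) t)
    (hL : 0 ≤ L) (hf' : ∀ ⦃t⦄, |t| ≤ R → ‖f' t‖ ≤ L * ‖f t‖) {t : ℝ} (ht : |t| ≤ R) :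
    ‖f t‖ ≤ ‖f 0‖ * Real.exp (L * R) := by
  rcases le_total 0 t with h0 | h0
  · exact norm_le_norm_mul_exp_of_norm_deriv_le hf hL
      (fun s hs hsR => hf' (by rwa [abs_of_nonneg hs])) h0 ((le_abs_self t).trans ht)
  · have hreflect (s : ℝ) : HasDerivAt (fun r => f (-r)) (-f' (-s)) s := by
      simpa [Function.comp_def] using (hf (-s)).scomp s (hasDerivAt_neg s)
    have hbound := norm_le_norm_mul_exp_of_norm_deriv_le hreflect hL
      (fun s hs hsR => by
        rw [norm_neg]
        exact hf' (by rwa [abs_neg, abs_of_nonneg hs]))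
      (neg_nonneg.mpr h0) ((neg_le_abs t).trans ht)
    simpa only [neg_neg, neg_zero] using hbound

theorem BoundedHalfHolder.of_norm_deriv_le (hf : ∀ t, HasDerivAt f (f' t) t) (hL : 0 ≤ L)
    (hf' : ∀ ⦃t⦄, |t| ≤ R → ‖f' t‖ ≤ L * ‖f t‖) :
    BoundedHalfHolder f R (‖f 0‖ * Real.exp (L * R) * (1 + L * √(2 * R))) := by
  have hbound ⦃t : ℝ⦄ (ht : |t| ≤ R) : ‖f t‖ ≤ ‖f 0‖ * Real.exp (L * R) :=
    norm_le_norm_mul_exp_of_norm_deriv_le_of_abs_le hf hL hf' ht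
  refine ⟨fun t ht => (hbound ht).trans (le_mul_of_one_le_right (by positivity) ?_), ?_⟩
  · exact le_add_of_nonneg_right (by positivity)
  intro s t hs hst ht
  have hlip : ‖f t - f s‖ ≤ L * (‖f 0‖ * Real.exp (L * R)) * (t - s) := by
    refine norm_image_sub_le_of_norm_deriv_le_segment' (fun x _ => (hf x).hasDerivWithinAt)
      (fun x hx => ?_) t ⟨hst, le_rfl⟩
    have hxR : |x| ≤ R := abs_le.mpr ⟨hs.trans hx.1, hx.2.le.trans ht⟩
    exact (hf' hxR).trans (mul_le_mul_of_nonneg_left (hbound hxR) hL)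
  have hsqrt : t - s ≤ √(2 * R) * √(t - s) := by
    nth_rw 1 [← Real.mul_self_sqrt (sub_nonneg.mpr hst)]
    gcongr
    linarith
  calc ‖f t - f s‖ ≤ L * (‖f 0‖ * Real.exp (L * R)) * (√(2 * R) * √(t - s)) := by
        refine hlip.trans ?_
        gcongr
    _ = ‖f 0‖ * Real.exp (L * R) * (L * √(2 * R)) * √(t - s) := by ring
    _ ≤ ‖f 0‖ * Real.exp (L * R) * (1 + L * √(2 * R)) * √(t - s) := by
        gcongr
        linarith

end Gronwall

section HighRegularity

variable {μ s s₀ s₁ A R : ℝ} {w : ℝ → Profile S}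

theorem IsProfileSolution.boundedHalfHolder_of_sum_norm_le (hw : IsProfileSolution μ w)
    (hμ : |μ| ≤ 1) (hs : 0 ≤ s) (hA : ∀ ⦃t⦄, |t| ≤ R → ∑ k : S, ‖w t k‖ ≤ A) :
    BoundedHalfHolder (fun t => multiplier (sobolevSymbol s) (w t)) R
      (‖multiplier (sobolevSymbol s) (w 0)‖ * Real.exp (3 ^ s * (3 * A ^ 2) * R) *
        (1 + 3 ^ s * (3 * A ^ 2) * √(2 * R))) := by
  refine BoundedHalfHolder.of_norm_deriv_le (fun t => (multiplier (sobolevSymbol s)).restrictScalars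
    ℝ |>.hasFDerivAt.comp_hasDerivAt t (hw t)) (by positivity) fun t ht => ?_
  have hcoeff : ‖I * (μ : ℂ)‖ ≤ 1 := by simpa using hμ
  rw [ContinuousLinearMap.coe_restrictScalars', map_smul, norm_smul]
  exact (mul_le_of_le_one_left (norm_nonneg _) hcoeff).trans
    (norm_multiplier_sobolevSymbol_profileNonlinearity_le hs (hA ht) t)

theorem summable_jbr_rpow_neg {p : ℝ} (hp : 1 < p) : Summable fun k : ℤ => jbr k ^ (-p) := by
  have hzero : Summable fun k : ℤ => if k = 0 then (1 : ℝ) else 0 :=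
    summable_of_hasFiniteSupport <| (Set.finite_singleton 0).subset fun k hk => by
      simpa using hk
  refine .of_nonneg_of_le (fun k => Real.rpow_nonneg (Real.sqrt_nonneg _) _) (fun k => ?_)
    ((Real.summable_abs_int_rpow hp).add hzero)
  rcases eq_or_ne k 0 with rfl | hk
  · simp [jbr, Real.rpow_nonneg]
  · rw [if_neg hk, add_zero]
    exact Real.rpow_le_rpow_of_nonpos (by simpa using hk) (abs_le_jbr k) (by linarith)

theorem sum_norm_le_sqrt_tsum_mul_norm_multiplier_sobolevSymbol (hs : 1 / 2 < s) (z : Profile S) :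
    ∑ k : S, ‖z k‖ ≤ √(∑' k : ℤ, jbr k ^ (-(2 * s))) * ‖multiplier (sobolevSymbol s) z‖ := by
  have hsplit (k : S) : ‖z k‖ = jbr k ^ (-s) * (jbr k ^ s * ‖z k‖) := by
    rw [← mul_assoc, ← Real.rpow_add (by linarith [one_le_jbr k]), neg_add_cancel, Real.rpow_zero,
      one_mul]
  have hsum : ∑ k : S, (jbr k ^ (-s)) ^ 2 ≤ ∑' k : ℤ, jbr k ^ (-(2 * s)) := by
    simp_rw [jbr_rpow_sq, mul_neg]
    rw [Finset.sum_coe_sort S fun k : ℤ => jbr k ^ (-(2 * s))]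
    exact (summable_jbr_rpow_neg (by linarith)).sum_le_tsum _ fun k _ =>
      Real.rpow_nonneg (Real.sqrt_nonneg _) _
  rw [Finset.sum_congr rfl fun k _ => hsplit k, norm_multiplier_sobolevSymbol]
  refine (Real.sum_mul_le_sqrt_mul_sqrt _ _ _).trans ?_
  gcongr

theorem norm_multiplier_sobolevSymbol_mono (h : s₁ ≤ s₀) (z : Profile S) :
    ‖multiplier (sobolevSymbol s₁) z‖ ≤ ‖multiplier (sobolevSymbol s₀) z‖ := by
  rw [norm_multiplier_sobolevSymbol, norm_multiplier_sobolevSymbol]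
  have hone (k : S) := one_le_jbr k
  gcongr with k
  · exact mul_nonneg (Real.rpow_nonneg (Real.sqrt_nonneg _) _) (norm_nonneg _)
  · exact hone k

theorem norm_le_norm_multiplier_sobolevSymbol (hs : 0 ≤ s) (z : Profile S) :
    ‖z‖ ≤ ‖multiplier (sobolevSymbol s) z‖ := by
  have hzero : sobolevSymbol 0 = fun _ => 1 := by ext; simp [sobolevSymbol]
  simpa only [hzero, multiplier_one] using norm_multiplier_sobolevSymbol_mono hs z

end HighRegularity

/-- `K` controls the `H^{s₁}` norm of profiles, uniformly and as a `1/2`-Hölder function of time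
in `[-R, R]`, for all solutions whose initial `H^{s₀}` norm is at most `N`. -/
def IsRegularityConstant (s₀ s₁ N R K : ℝ) : Prop :=
  ∀ ⦃S : Finset ℤ⦄ ⦃μ : ℝ⦄, |μ| ≤ 1 → ∀ ⦃w : ℝ → Profile S⦄, IsProfileSolution μ w →
    ‖multiplier (sobolevSymbol s₀) (w 0)‖ ≤ N →
      BoundedHalfHolder (fun t => multiplier (sobolevSymbol s₁) (w t)) R K

section Regularity

variable {s₀ s₁ : ℝ}

theorem exists_isRegularityConstant_of_lt_one (hs₁ : 0 ≤ s₁) (hs : s₁ < s₀) (hone : s₁ < 1)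
    (N R : ℝ) : ∃ K, IsRegularityConstant s₀ s₁ N R K := by
  obtain ⟨K, hK, hsob⟩ := exists_isSobolevConstant_of_le_one hs₁ (lt_min hs hone)
    (min_le_right s₀ 1) (le_max_right N 1) R
  refine ⟨K * N, fun S μ hμ w hw hN => (hsob hμ hw ?_).mono ?_⟩
  · exact (norm_le_norm_multiplier_sobolevSymbol (hs₁.trans hs.le) _).trans (le_max_of_le_left hN)
  · gcongr
    exact (norm_multiplier_sobolevSymbol_mono (min_le_left s₀ 1) _).trans hN

/-- Above the first derivative the bound of order `3 / 4` controls the absolute sum of the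
coefficients, so that the nonlinearity is Lipschitz in every `H^{s₁}`. -/
theorem exists_isRegularityConstant (hs₁ : 0 ≤ s₁) (hs : s₁ < s₀) (N R : ℝ) :
    ∃ K, IsRegularityConstant s₀ s₁ N R K := by
  rcases lt_or_ge s₁ 1 with hone | hone
  · exact exists_isRegularityConstant_of_lt_one hs₁ hs hone N R
  obtain ⟨K, hlow⟩ := exists_isRegularityConstant_of_lt_one (s₀ := s₀) (s₁ := 3 / 4) (by norm_num)
    (by linarith) (by norm_num) N R
  set A := √(∑' k : ℤ, jbr k ^ (-(2 * (3 / 4) : ℝ))) * K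
  refine ⟨N * Real.exp (3 ^ s₁ * (3 * A ^ 2) * R) * (1 + 3 ^ s₁ * (3 * A ^ 2) * √(2 * R)),
    fun S μ hμ w hw hN => ?_⟩
  have hA ⦃t : ℝ⦄ (ht : |t| ≤ R) : ∑ k : S, ‖w t k‖ ≤ A :=
    (sum_norm_le_sqrt_tsum_mul_norm_multiplier_sobolevSymbol (by norm_num) (w t)).trans <|
      mul_le_mul_of_nonneg_left ((hlow hμ hw hN).norm_le ht) (Real.sqrt_nonneg _)
  refine (hw.boundedHalfHolder_of_sum_norm_le hμ hs₁ hA).mono ?_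
  gcongr
  exact (norm_multiplier_sobolevSymbol_mono hs.le _).trans hN

end Regularity

/-! ### From the projected equation to the profile equation -/

/-- The frequencies `|k| ≤ τ^{-1/2}` kept by `projC τ`. -/
def cutoffModes (τ : ℝ) : Finset ℤ :=
  Finset.Icc (-⌊τ ^ (-(1 : ℝ) / 2)⌋) ⌊τ ^ (-(1 : ℝ) / 2)⌋

theorem mem_cutoffModes {τ : ℝ} {k : ℤ} :
    k ∈ cutoffModes τ ↔ |(k : ℝ)| ≤ τ ^ (-(1 : ℝ) / 2) := by
  rw [cutoffModes, Finset.mem_Icc, ← abs_le, Int.le_floor, Int.cast_abs]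

theorem projC_apply (τ : ℝ) (f : Torus → ℂ) (x : Torus) :
    projC τ f x = ∑ k ∈ cutoffModes τ, fourierCoeff f k * fourier k x := by
  simp_rw [projC, ← mem_cutoffModes]
  rw [tsum_eq_sum fun k hk => if_neg hk]
  exact Finset.sum_congr rfl fun k hk => if_pos hk

theorem fourierCoeff_sum_mul_fourier {ι : Type*} (I : Finset ι) (a : ι → ℂ) (n : ι → ℤ) (k : ℤ) :
    fourierCoeff (fun x : Torus => ∑ i ∈ I, a i * fourier (n i) x) k =
      ∑ i ∈ I, if n i = k then a i else 0 := by
  have hsum : (fun x : Torus => ∑ i ∈ I, a i * fourier (n i) x) =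
      ∑ i ∈ I, fun x => a i * fourier (n i) x := by
    ext x; rw [Finset.sum_apply]
  rw [hsum, fourierCoeff.sum _ _ fun i _ =>
    integrable_haarAddCircle_of_continuous (by fun_prop)]
  simp [fourierCoeff.const_mul, fourierCoeff_fourier, Pi.single_apply, eq_comm, -fourier_apply]

theorem fourierCoeff_projC (τ : ℝ) (f : Torus → ℂ) (k : ℤ) :
    fourierCoeff (projC τ f) k = if k ∈ cutoffModes τ then fourierCoeff f k else 0 := by
  rw [funext (projC_apply τ f), fourierCoeff_sum_mul_fourier _ _ fun k => k,
    Finset.sum_ite_eq']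

theorem fourierCoeff_freeWave (z : Profile S) (t : ℝ) (k : ℤ) :
    fourierCoeff (fun x => freeWave z (t, x)) k =
      ∑ j : S, if (j : ℤ) = k then z j * exp (-I * t * (j : ℂ) ^ 2) else 0 := by
  simp_rw [freeWave, planeWave, ← mul_assoc]
  exact fourierCoeff_sum_mul_fourier _ _ (fun j : S => (j : ℤ)) k

theorem schrod_projC_apply (t τ : ℝ) (f : Torus → ℂ) (x : Torus) :
    schrod t (projC τ f) x =
      ∑ k ∈ cutoffModes τ, exp (-I * t * (k : ℂ) ^ 2) * fourierCoeff f k * fourier k x := by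
  simp_rw [schrod, fourierCoeff_projC]
  rw [tsum_eq_sum fun k hk => by rw [if_neg hk, mul_zero, zero_mul]]
  exact Finset.sum_congr rfl fun k hk => by rw [if_pos hk]

theorem norm_fourierCoeff_le {g : Torus → ℂ} (hg : MemLp g 2 haarAddCircle) (k : ℤ) :
    ‖fourierCoeff g k‖ ≤ (eLpNorm g 2 haarAddCircle).toReal :=
  calc ‖fourierCoeff g k‖ ≤ ∫ x, ‖fourier (-k) x • g x‖ ∂haarAddCircle :=
        norm_integral_le_integral_norm _
    _ = (eLpNorm g 1 haarAddCircle).toReal := by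
        simp_rw [norm_smul, norm_fourier, one_mul]
        rw [eLpNorm_one_eq_lintegral_enorm, integral_norm_eq_lintegral_enorm hg.1]
    _ ≤ (eLpNorm g 2 haarAddCircle).toReal :=
        ENNReal.toReal_mono hg.2.ne
          (eLpNorm_le_eLpNorm_of_exponent_le one_le_two hg.1)

theorem fourierCoeff_sub {f g : Torus → ℂ} (hf : Integrable f haarAddCircle)
    (hg : Integrable g haarAddCircle) (k : ℤ) :
    fourierCoeff (f - g) k = fourierCoeff f k - fourierCoeff g k := by
  rw [sub_eq_add_neg, ← neg_one_smul ℂ g, fourierCoeff.add hf (hg.smul _),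
    Pi.add_apply, fourierCoeff.const_smul, neg_one_smul, sub_eq_add_neg]

theorem continuous_fourierCoeff_of_contL2On {v : ℝ → Torus → ℂ} (hv : ContL2On Set.univ v)
    (k : ℤ) : Continuous fun t => fourierCoeff (v t) k := by
  have hmem (t : ℝ) : MemLp (v t) 2 haarAddCircle := hv.1 t (Set.mem_univ t)
  have hintegrable (t : ℝ) : Integrable (v t) haarAddCircle := (hmem t).integrable one_le_two
  refine continuous_iff_continuousAt.mpr fun t => ?_
  have hlim : Tendsto (fun t' => (eLpNorm (v t' - v t) 2 haarAddCircle).toReal) (𝓝 t) (𝓝 0) := by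
    have := hv.2 t (Set.mem_univ t)
    rw [nhdsWithin_univ] at this
    exact ENNReal.toReal_zero ▸ (ENNReal.tendsto_toReal ENNReal.zero_ne_top).comp this
  refine tendsto_iff_norm_sub_tendsto_zero.mpr (squeeze_zero (fun _ => norm_nonneg _) ?_ hlim)
  intro t'
  rw [← fourierCoeff_sub (hintegrable t') (hintegrable t)]
  exact norm_fourierCoeff_le ((hmem t').sub (hmem t)) k

/-- The interaction-picture Fourier coefficients `e^{itk²} v̂(t, k)`, `k ∈ S`, of `v`. -/
def profile (S : Finset ℤ) (v : ℝ → Torus → ℂ) (t : ℝ) : Profile S :=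
  WithLp.toLp 2 fun k : S => exp (I * t * (k : ℂ) ^ 2) * fourierCoeff (v t) k

theorem profile_apply (v : ℝ → Torus → ℂ) (t : ℝ) (k : S) :
    profile S v t k = exp (I * t * (k : ℂ) ^ 2) * fourierCoeff (v t) k := rfl

theorem continuous_profile {v : ℝ → Torus → ℂ} (hv : ContL2On Set.univ v) :
    Continuous (profile S v) := by
  have := continuous_fourierCoeff_of_contL2On hv
  unfold profile
  fun_prop

theorem exp_I_mul_mul_exp_neg_I_mul (t : ℝ) (k : ℤ) :
    exp (I * t * (k : ℂ) ^ 2) * exp (-I * t * (k : ℂ) ^ 2) = 1 := by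
  rw [← exp_add, neg_mul, neg_mul, add_neg_cancel, exp_zero]

theorem freeWave_profile (τ : ℝ) (v : ℝ → Torus → ℂ) (t : ℝ) (x : Torus) :
    freeWave (profile (cutoffModes τ) v t) (t, x) = projC τ (v t) x := by
  rw [projC_apply, ← Finset.sum_coe_sort, freeWave]
  refine Finset.sum_congr rfl fun k _ => ?_
  rw [profile_apply, planeWave, mul_mul_mul_comm, exp_I_mul_mul_exp_neg_I_mul, one_mul]

theorem profileNonlinearity_profile_apply (τ : ℝ) (v : ℝ → Torus → ℂ) (t : ℝ)
    (k : cutoffModes τ) :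
    profileNonlinearity (profile (cutoffModes τ) v t) t k =
      exp (I * t * (k : ℂ) ^ 2) * fourierCoeff (cubic (projC τ (v t))) k := by
  simp_rw [profileNonlinearity, fourierCoeff, freeWave_profile, conj_planeWave]
  rw [← integral_const_mul]
  refine integral_congr_ae (Eventually.of_forall fun x => ?_)
  simp only [cubic, cubicMap, smul_eq_mul]
  ring

theorem continuous_profileNonlinearity_apply {w : ℝ → Profile S} (hw : Continuous w) (k : S) :
    Continuous fun t => profileNonlinearity (w t) t k := by
  have hu := continuous_freeWave_path hw
  simpa [profileNonlinearity] using continuous_parametric_integral_of_continuous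
    (μ := haarAddCircle) (f := fun t x =>
      cubicMap (freeWave (w t) (t, x)) * starRingEnd ℂ (planeWave k (t, x)))
    (by fun_prop) isCompact_univ

section Duhamel

variable {μ τ : ℝ} {u₀ : Torus → ℂ} {v : ℝ → Torus → ℂ}

theorem schrod_projCubic_apply (t s : ℝ) (x : Torus) :
    schrod (t - s) (projCubic τ (v s)) x = ∑ k : cutoffModes τ,
      planeWave k (t, x) * profileNonlinearity (profile (cutoffModes τ) v s) s k := by
  rw [projCubic, schrod_projC_apply, ← Finset.sum_coe_sort]
  refine Finset.sum_congr rfl fun k _ => ?_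
  have hexp : exp (-I * ((t - s : ℝ) : ℂ) * (k : ℂ) ^ 2) =
      exp (-I * t * (k : ℂ) ^ 2) * exp (I * s * (k : ℂ) ^ 2) := by
    rw [← exp_add]; push_cast; ring_nf
  rw [hexp, profileNonlinearity_profile_apply, planeWave]
  ring

/-- The right-hand side of Duhamel's formula in the interaction picture. -/
def duhamelProfile (μ τ : ℝ) (u₀ : Torus → ℂ) (v : ℝ → Torus → ℂ) (t : ℝ) :
    Profile (cutoffModes τ) :=
  WithLp.toLp 2 fun k => fourierCoeff u₀ k +
    I * μ * ∫ s in (0 : ℝ)..t, profileNonlinearity (profile (cutoffModes τ) v s) s k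

theorem eq_freeWave_duhamelProfile (hv : IsProjSolution μ τ u₀ v) (t : ℝ) :
    v t = fun x => freeWave (duhamelProfile μ τ u₀ v t) (t, x) := by
  ext x
  have hintegrable (k : cutoffModes τ) : IntervalIntegrable (fun s => planeWave k (t, x) *
      profileNonlinearity (profile (cutoffModes τ) v s) s k) volume 0 t :=
    ((continuous_profileNonlinearity_apply (continuous_profile hv.1) k).const_mul _
      ).intervalIntegrable 0 t
  rw [hv.2 t x, schrod_projC_apply, ← Finset.sum_coe_sort]
  simp_rw [schrod_projCubic_apply]
  rw [intervalIntegral.integral_finsetSum fun k _ => hintegrable k, Finset.mul_sum,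
    ← Finset.sum_add_distrib]
  refine Finset.sum_congr rfl fun k _ => ?_
  rw [intervalIntegral.integral_const_mul, duhamelProfile, planeWave]
  ring

theorem fourierCoeff_eq_zero_of_notMem_cutoffModes (hv : IsProjSolution μ τ u₀ v) (t : ℝ) {k : ℤ}
    (hk : k ∉ cutoffModes τ) : fourierCoeff (v t) k = 0 := by
  rw [eq_freeWave_duhamelProfile hv t, fourierCoeff_freeWave]
  exact Finset.sum_eq_zero fun j _ => if_neg fun (hjk : (j : ℤ) = k) => hk (hjk ▸ j.2)

theorem profile_eq_duhamelProfile (hv : IsProjSolution μ τ u₀ v) :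
    profile (cutoffModes τ) v = duhamelProfile μ τ u₀ v := by
  ext t k
  have hcoeff : fourierCoeff (v t) k =
      duhamelProfile μ τ u₀ v t k * exp (-I * t * (k : ℂ) ^ 2) := by
    rw [eq_freeWave_duhamelProfile hv t, fourierCoeff_freeWave, Finset.sum_eq_single k
      (fun j _ hjk => if_neg fun h => hjk (Subtype.ext h)) (by simp), if_pos rfl]
  rw [profile_apply, hcoeff, mul_left_comm, exp_I_mul_mul_exp_neg_I_mul, mul_one]

theorem isProfileSolution_profile (hv : IsProjSolution μ τ u₀ v) :
    IsProfileSolution μ (profile (cutoffModes τ) v) := by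
  intro t
  have hcoord (k : cutoffModes τ) : HasDerivAt (fun t => duhamelProfile μ τ u₀ v t k)
      (I * μ * profileNonlinearity (profile (cutoffModes τ) v t) t k) t := by
    have hcont := continuous_profileNonlinearity_apply (continuous_profile hv.1) k
    exact ((hcont.integral_hasStrictDerivAt 0 t).hasDerivAt.const_mul _).const_add _
  nth_rw 1 [profile_eq_duhamelProfile hv]
  exact (PiLp.continuousLinearEquiv 2 ℝ _).symm.hasFDerivAt.comp_hasDerivAt t
    (hasDerivAt_pi.mpr hcoord)

theorem profile_zero_apply (hv : IsProjSolution μ τ u₀ v) (k : cutoffModes τ) :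
    profile (cutoffModes τ) v 0 k = fourierCoeff u₀ k := by
  rw [profile_eq_duhamelProfile hv]
  simp [duhamelProfile]

end Duhamel

/-! ### The discrete modulation weight -/

/-- The weight `⟨(e^{iy} - 1) / τ⟩^{2b}` of the discrete Bourgain norm, as a function of the
rescaled modulation `y = τ (σ - k²)`. -/
def modulationWeight (τ b : ℝ) (y : Torus) : ℝ := jbr (‖fourier 1 y - 1‖ / τ) ^ (2 * b)

@[fun_prop]
theorem continuous_modulationWeight (τ b : ℝ) : Continuous (modulationWeight τ b) := by
  refine Continuous.rpow_const ?_ fun y => Or.inl (zero_lt_one.trans_le (one_le_jbr _)).ne'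
  unfold jbr
  fun_prop

theorem exists_two_le_norm_fourier_two_pow_sub_one_sq {y : Torus} (hy : y ≠ 0) :
    ∃ j : ℕ, 2 ≤ ‖fourier (2 ^ j) y - 1‖ ^ 2 ∧ 2 ^ j * ‖fourier 1 y - 1‖ ≤ 4 := by
  obtain ⟨θ, ⟨hlow, hhigh⟩, rfl⟩ : y ∈ ((↑) : ℝ → Torus) '' Set.Icc (-Real.pi) (-Real.pi + _) := by
    rw [AddCircle.coe_image_Icc_eq]; trivial
  have hθ : 0 < |θ| := abs_pos.mpr (by rintro rfl; exact hy rfl)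
  have hθπ : |θ| ≤ Real.pi := abs_le.mpr ⟨hlow, by linarith⟩
  obtain ⟨j, hj, hj'⟩ := exists_nat_pow_near ((one_le_div hθ).mpr hθπ) one_lt_two
  rw [le_div_iff₀ hθ] at hj
  rw [div_lt_iff₀ hθ, pow_succ] at hj'
  refine ⟨j, ?_, ?_⟩
  · have hcos : Real.cos (2 ^ j * θ) ≤ 0 := by
      rw [← Real.cos_abs, abs_mul, abs_of_pos (by positivity : (0 : ℝ) < 2 ^ j)]
      exact Real.cos_nonpos_of_pi_div_two_le_of_le (by linarith) (by linarith [Real.pi_pos])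
    rw [norm_fourier_coe_sub_one_sq]
    push_cast
    linarith
  · have hchord : ‖fourier 1 (θ : Torus) - 1‖ ≤ |θ| := by
      refine abs_le_of_sq_le_sq' ?_ (abs_nonneg _) |>.2
      rw [norm_fourier_coe_sub_one_sq, Int.cast_one, one_mul, sq_abs]
      linarith [Real.one_sub_sq_div_two_le_cos (x := θ)]
    calc 2 ^ j * ‖fourier 1 (θ : Torus) - 1‖ ≤ 2 ^ j * |θ| := by gcongr
      _ ≤ 4 := hj.trans Real.pi_le_four

section ModulationWeight

variable {τ b : ℝ} {J : ℕ}

theorem jbr_rpow_le_one_add_rpow {x : ℝ} (hx : 0 ≤ x) (hb : 0 ≤ b) (hb' : b ≤ 1 / 2) :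
    jbr x ^ (2 * b) ≤ 1 + x ^ (2 * b) := by
  have hjbr : jbr x ≤ 1 + x :=
    (Real.sqrt_le_left (by positivity)).mpr (by nlinarith)
  calc jbr x ^ (2 * b) ≤ (1 + x) ^ (2 * b) :=
        Real.rpow_le_rpow (Real.sqrt_nonneg _) hjbr (by positivity)
    _ ≤ 1 ^ (2 * b) + x ^ (2 * b) :=
        Real.rpow_add_le_add_rpow zero_le_one hx (by positivity) (by linarith)
    _ = 1 + x ^ (2 * b) := by rw [Real.one_rpow]

theorem div_rpow_le_of_two_pow_mul_le {x : ℝ} (hx : 0 ≤ x) (hτ : 0 < τ) (hb : 0 ≤ b)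
    (hb' : b ≤ 1 / 2) {j : ℕ} (hj : 2 ^ j * x ≤ 4) :
    (x / τ) ^ (2 * b) ≤ 4 * (2 ^ j * τ) ^ (-(2 * b)) := by
  have hdiv : x / τ ≤ 4 * (2 ^ j * τ)⁻¹ := by
    rw [← div_eq_mul_inv, div_le_div_iff₀ hτ (by positivity)]
    nlinarith
  have hfour : (4 : ℝ) ^ (2 * b) ≤ 4 := by
    simpa using Real.rpow_le_rpow_of_exponent_le (x := 4) (by norm_num) (by linarith : 2 * b ≤ 1)
  calc (x / τ) ^ (2 * b) ≤ (4 * (2 ^ j * τ)⁻¹) ^ (2 * b) := by gcongr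
    _ = 4 ^ (2 * b) * (2 ^ j * τ) ^ (-(2 * b)) := by
        rw [Real.mul_rpow (by norm_num) (by positivity), Real.inv_rpow (by positivity),
          Real.rpow_neg (by positivity)]
    _ ≤ 4 * (2 ^ j * τ) ^ (-(2 * b)) := by gcongr

theorem modulationWeight_le (hτ : 0 < τ) (hb : 0 ≤ b) (hb' : b ≤ 1 / 2)
    (hJ : 1 < 2 ^ (J + 1) * τ) (y : Torus) :
    modulationWeight τ b y ≤ 5 * (1 + ∑ j ∈ Finset.range (J + 1),
      (2 ^ j * τ) ^ (-(2 * b)) * ‖fourier (2 ^ j) y - 1‖ ^ 2) := by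
  have hterm (j : ℕ) : 0 ≤ (2 ^ j * τ) ^ (-(2 * b)) * ‖fourier (2 ^ j) y - 1‖ ^ 2 := by positivity
  have hsum := Finset.sum_nonneg fun j (_ : j ∈ Finset.range (J + 1)) => hterm j
  refine (jbr_rpow_le_one_add_rpow (by positivity) hb hb').trans ?_
  rcases eq_or_ne y 0 with rfl | hy
  · have hone : ((0 : ℝ) / τ) ^ (2 * b) ≤ 1 := by rw [zero_div]; exact Real.zero_rpow_le_one _
    rw [fourier_eval_zero, sub_self, norm_zero]
    linarith
  obtain ⟨j, hchord, hj⟩ := exists_two_le_norm_fourier_two_pow_sub_one_sq hy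
  have hpow := div_rpow_le_of_two_pow_mul_le (norm_nonneg _) hτ hb hb' hj
  rcases lt_or_ge j (J + 1) with hjJ | hjJ
  · have hsingle := Finset.single_le_sum (fun j _ => hterm j) (Finset.mem_range.mpr hjJ)
    have hlow := mul_le_mul_of_nonneg_left hchord
      (by positivity : 0 ≤ (2 ^ j * τ) ^ (-(2 * b)))
    linarith
  · have hlarge : 1 ≤ 2 ^ j * τ := hJ.le.trans (by gcongr; norm_num)
    have := Real.rpow_le_one_of_one_le_of_nonpos hlarge (by linarith : -(2 * b) ≤ 0)
    linarith

theorem sum_two_pow_mul_rpow_le {p : ℝ} (hp : 0 < p) (hτ : 0 < τ) (hJ : 2 ^ J * τ ≤ 1) :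
    ∑ j ∈ Finset.range (J + 1), (2 ^ j * τ) ^ p ≤ (1 - (2⁻¹ : ℝ) ^ p)⁻¹ := by
  have hr0 : 0 ≤ (2⁻¹ : ℝ) ^ p := by positivity
  have hr1 : (2⁻¹ : ℝ) ^ p < 1 := Real.rpow_lt_one (by norm_num) (by norm_num) hp
  calc ∑ j ∈ Finset.range (J + 1), ((2 : ℝ) ^ j * τ) ^ p
      = ∑ j ∈ Finset.range (J + 1), (2 ^ (J - j) * τ) ^ p :=
        (Finset.sum_range_reflect _ _).symm
    _ ≤ ∑ j ∈ Finset.range (J + 1), ((2⁻¹ : ℝ) ^ p) ^ j := by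
        refine Finset.sum_le_sum fun j hj => ?_
        have hjJ : j ≤ J := Nat.lt_succ_iff.mp (Finset.mem_range.mp hj)
        have hscale : 2 ^ (J - j) * τ ≤ (2⁻¹ : ℝ) ^ j := by
          rw [inv_pow, ← one_div, le_div_iff₀ (by positivity), mul_right_comm,
            pow_sub_mul_pow _ hjJ]
          exact hJ
        rw [Real.rpow_pow_comm (by norm_num)]
        gcongr
    _ ≤ (1 - (2⁻¹ : ℝ) ^ p)⁻¹ := by
        rw [← tsum_geometric_of_lt_one hr0 hr1]
        exact (summable_geometric_of_lt_one hr0 hr1).sum_le_tsum _ fun _ _ => by positivity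

theorem exists_two_pow_mul_near_one (hτ : 0 < τ) (hτ' : τ ≤ 1) :
    ∃ J : ℕ, 2 ^ J * τ ≤ 1 ∧ 1 < 2 ^ (J + 1) * τ := by
  obtain ⟨J, hJ, hJ'⟩ := exists_nat_pow_near ((one_le_div hτ).mpr hτ') one_lt_two
  exact ⟨J, (le_div_iff₀ hτ).mp hJ, (div_lt_iff₀ hτ).mp hJ'⟩

end ModulationWeight

/-! ### Vector-valued Fourier series -/

section FourierSeries

variable {E : Type*} [NormedAddCommGroup E] [InnerProductSpace ℂ E] {a : ℤ → E}

/-- The vector-valued Fourier series `∑ₘ e^{imy} a m`, with the junk value `0` where it is not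
summable. -/
def fourierSeries (a : ℤ → E) (y : Torus) : E := ∑' m : ℤ, (fourier m y : ℂ) • a m

theorem fourierSeries_eq_sum {F : Finset ℤ} (hF : ∀ m ∉ F, a m = 0) (y : Torus) :
    fourierSeries a y = ∑ m ∈ F, (fourier m y : ℂ) • a m :=
  tsum_eq_sum fun m hm => by rw [hF m hm, smul_zero]

theorem continuous_fourierSeries (ha : a.HasFiniteSupport) :
    Continuous (fourierSeries a) := by
  have hF (m : ℤ) (hm : m ∉ ha.toFinset) : a m = 0 :=
    not_not.mp fun h => hm (ha.mem_toFinset.mpr h)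
  rw [funext (fourierSeries_eq_sum hF)]
  fun_prop

theorem integral_inner_sum_fourier_smul (F : Finset ℤ) (a : ℤ → E) :
    ∫ y, inner ℂ (∑ m ∈ F, (fourier m y : ℂ) • a m) (∑ n ∈ F, (fourier n y : ℂ) • a n)
      ∂(haarAddCircle : Measure Torus) = ∑ m ∈ F, inner ℂ (a m) (a m) := by
  have hexpand (y : Torus) :
      inner ℂ (∑ m ∈ F, (fourier m y : ℂ) • a m) (∑ n ∈ F, (fourier n y : ℂ) • a n)
        = ∑ m ∈ F, ∑ n ∈ F, fourier (n - m) y * inner ℂ (a m) (a n) := by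
    simp_rw [sum_inner, inner_sum, inner_smul_left, inner_smul_right, sub_eq_neg_add, fourier_add,
      fourier_neg, mul_assoc]
  simp_rw [hexpand]
  rw [integral_finsetSum _ fun m _ => integrable_haarAddCircle_of_continuous (by fun_prop)]
  refine Finset.sum_congr rfl fun m hm => ?_
  rw [integral_finsetSum _ fun n _ => integrable_haarAddCircle_of_continuous (by fun_prop)]
  simp_rw [integral_mul_const, integral_fourier, sub_eq_zero, ite_mul, one_mul, zero_mul]
  exact Finset.sum_ite_eq' F m _ |>.trans (if_pos hm)

theorem integral_norm_fourierSeries_sq (ha : a.HasFiniteSupport) :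
    ∫ y, ‖fourierSeries a y‖ ^ 2 ∂haarAddCircle = ∑' m, ‖a m‖ ^ 2 := by
  have hF (m : ℤ) (hm : m ∉ ha.toFinset) : a m = 0 :=
    not_not.mp fun h => hm (ha.mem_toFinset.mpr h)
  rw [tsum_eq_sum (s := ha.toFinset) fun m hm => by simp [hF m hm]]
  have hparseval := integral_inner_sum_fourier_smul ha.toFinset a
  simp_rw [← fourierSeries_eq_sum hF, inner_self_eq_norm_sq_to_K] at hparseval
  norm_cast at hparseval

theorem fourier_sub_one_smul_fourierSeries (ha : a.HasFiniteSupport) (n : ℤ) (y : Torus) :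
    ((fourier n y : ℂ) - 1) • fourierSeries a y = fourierSeries (fun m => a (m - n) - a m) y := by
  have hsum : Summable fun m : ℤ => (fourier m y : ℂ) • a m :=
    summable_of_hasFiniteSupport (ha.fun_smul_right _)
  have hshift : (fourier n y : ℂ) • fourierSeries a y
      = ∑' m : ℤ, (fourier m y : ℂ) • a (m - n) := by
    rw [fourierSeries, ← hsum.tsum_const_smul,
      ← (Equiv.subRight n).tsum_eq fun m : ℤ => (fourier n y : ℂ) • (fourier m y : ℂ) • a m]
    refine tsum_congr fun m => ?_
    rw [Equiv.subRight_apply, smul_smul, ← fourier_add, add_sub_cancel]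
  have hsum' : Summable fun m : ℤ => (fourier m y : ℂ) • a (m - n) :=
    summable_of_hasFiniteSupport ((ha.fun_comp_of_injective sub_left_injective).fun_smul_right _)
  rw [sub_smul, one_smul, hshift, fourierSeries, fourierSeries, ← hsum'.tsum_sub hsum]
  simp_rw [smul_sub]

theorem integral_norm_fourier_sub_one_sq_mul (ha : a.HasFiniteSupport) (n : ℤ) :
    ∫ y, ‖(fourier n y : ℂ) - 1‖ ^ 2 * ‖fourierSeries a y‖ ^ 2 ∂(haarAddCircle : Measure Torus)
      = ∑' m, ‖a (m - n) - a m‖ ^ 2 := by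
  rw [← integral_norm_fourierSeries_sq]
  · simp_rw [← fourier_sub_one_smul_fourierSeries ha, norm_smul, mul_pow]
  · exact (ha.fun_comp_of_injective sub_left_injective).fun_sub ha

theorem integral_modulationWeight_mul_norm_fourierSeries_sq_le {τ b : ℝ} {J : ℕ}
    (ha : a.HasFiniteSupport) (hτ : 0 < τ) (hb : 0 ≤ b) (hb' : b ≤ 1 / 2)
    (hJ : 1 < 2 ^ (J + 1) * τ) :
    ∫ y, modulationWeight τ b y * ‖fourierSeries a y‖ ^ 2 ∂haarAddCircle
      ≤ 5 * (∑' m, ‖a m‖ ^ 2 + ∑ j ∈ Finset.range (J + 1),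
        (2 ^ j * τ) ^ (-(2 * b)) * ∑' m, ‖a (m - 2 ^ j) - a m‖ ^ 2) := by
  have hcont := continuous_fourierSeries ha
  have hintegrable {f : Torus → ℝ} (hf : Continuous f) := integrable_haarAddCircle_of_continuous hf
  calc ∫ y, modulationWeight τ b y * ‖fourierSeries a y‖ ^ 2 ∂haarAddCircle
      ≤ ∫ y, 5 * (‖fourierSeries a y‖ ^ 2 + ∑ j ∈ Finset.range (J + 1), (2 ^ j * τ) ^ (-(2 * b)) *
          (‖(fourier (2 ^ j) y : ℂ) - 1‖ ^ 2 * ‖fourierSeries a y‖ ^ 2)) ∂haarAddCircle := by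
        refine integral_mono (hintegrable (by fun_prop)) (hintegrable (by fun_prop)) fun y => ?_
        refine (mul_le_mul_of_nonneg_right (modulationWeight_le hτ hb hb' hJ y)
          (by positivity)).trans_eq ?_
        simp_rw [← mul_assoc, ← Finset.sum_mul]
        ring
    _ = _ := by
        rw [integral_const_mul,
          integral_add (hintegrable (by fun_prop)) (hintegrable (by fun_prop)),
          integral_finsetSum _ fun j _ => hintegrable (by fun_prop),
          integral_norm_fourierSeries_sq ha]
        simp_rw [integral_const_mul, integral_norm_fourier_sub_one_sq_mul ha]

end FourierSeries

/-! ### Grid sequences of compactly supported Hölder functions -/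

section Grid

variable {τ ρ B : ℝ}

theorem mem_Icc_ceil_floor_div_iff (hτ : 0 < τ) {m : ℤ} :
    m ∈ Finset.Icc ⌈-(ρ / τ)⌉ ⌊ρ / τ⌋ ↔ |m * τ| ≤ ρ := by
  rw [abs_mul, abs_of_pos hτ, ← le_div_iff₀ hτ, abs_le, Finset.mem_Icc, Int.ceil_le, Int.le_floor]

theorem card_Icc_ceil_floor_le {x : ℝ} (hx : 0 ≤ x) :
    ((Finset.Icc ⌈-x⌉ ⌊x⌋).card : ℝ) ≤ 2 * x + 1 := by
  have hle : ⌈-x⌉ ≤ ⌊x⌋ := (Int.ceil_le.mpr (by simpa)).trans (Int.floor_nonneg.mpr hx)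
  rw [← Int.cast_natCast, Int.card_Icc_of_le _ _ (by linarith)]
  push_cast
  linarith [Int.le_ceil (-x), Int.floor_le x]

theorem mul_tsum_le_of_eq_zero_of_lt_abs_mul {f : ℤ → ℝ} (hτ : 0 < τ) (hτ' : τ ≤ 1) (hρ : 0 ≤ ρ)
    (hB : 0 ≤ B) (hf0 : ∀ m : ℤ, ρ < |m * τ| → f m = 0) (hf : ∀ m, f m ≤ B) :
    τ * ∑' m, f m ≤ (2 * ρ + 1) * B := by
  have hsum : ∑' m, f m ≤ (2 * (ρ / τ) + 1) * B := by
    rw [tsum_eq_sum fun m hm => hf0 m (not_le.mp ((mem_Icc_ceil_floor_div_iff hτ).not.mp hm))]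
    refine (Finset.sum_le_card_nsmul _ _ _ fun m _ => hf m).trans ?_
    rw [nsmul_eq_mul]
    gcongr
    exact card_Icc_ceil_floor_le (by positivity)
  calc τ * ∑' m, f m ≤ τ * ((2 * (ρ / τ) + 1) * B) := by gcongr
    _ = (2 * ρ + τ) * B := by field_simp
    _ ≤ (2 * ρ + 1) * B := by gcongr

variable {E : Type*} [NormedAddCommGroup E] {g : ℝ → E} {R : ℝ}

theorem hasFiniteSupport_comp_int_mul (hτ : 0 < τ) (hg0 : ∀ t, R < |t| → g t = 0) :
    (fun m : ℤ => g (m * τ)).HasFiniteSupport := by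
  refine (Finset.finite_toSet (Finset.Icc ⌈-(R / τ)⌉ ⌊R / τ⌋)).subset fun m hm => ?_
  rw [Finset.mem_coe, mem_Icc_ceil_floor_div_iff hτ]
  exact not_lt.mp fun h => hm (hg0 _ h)

theorem mul_tsum_norm_sub_sq_le (hτ : 0 < τ) (hτ' : τ ≤ 1) (hR : 0 ≤ R)
    (hg0 : ∀ t, R < |t| → g t = 0)
    (hincr : ∀ t h, 0 ≤ h → h ≤ 1 → ‖g (t - h) - g t‖ ≤ B * √h) {n : ℤ} (hn : 0 ≤ n)
    (hnτ : n * τ ≤ 1) :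
    τ * ∑' m : ℤ, ‖g ((m - n : ℤ) * τ) - g (m * τ)‖ ^ 2 ≤ (2 * R + 3) * B ^ 2 * (n * τ) := by
  have hnτ' : 0 ≤ n * τ := by positivity
  have hgrid (m : ℤ) : ((m - n : ℤ) : ℝ) * τ = m * τ - n * τ := by push_cast; ring
  refine (mul_tsum_le_of_eq_zero_of_lt_abs_mul (ρ := R + 1) (B := B ^ 2 * (n * τ)) hτ hτ'
    (by positivity) (by positivity) (fun m hm => ?_) fun m => ?_).trans_eq (by ring)
  · rw [hgrid, hg0 (m * τ) (by linarith), hg0 (m * τ - n * τ), sub_zero, norm_zero, sq, zero_mul]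
    have := abs_sub_abs_le_abs_sub (m * τ) (n * τ)
    rw [abs_of_nonneg hnτ'] at this
    linarith
  · calc ‖g ((m - n : ℤ) * τ) - g (m * τ)‖ ^ 2 ≤ (B * √(n * τ)) ^ 2 := by
          rw [hgrid]
          gcongr
          exact hincr _ _ hnτ' hnτ
      _ = B ^ 2 * (n * τ) := by rw [mul_pow, Real.sq_sqrt hnτ']

theorem rpow_mul_tsum_norm_sub_two_pow_sq_le (hτ : 0 < τ) (hτ' : τ ≤ 1) (hR : 0 ≤ R)
    (hg0 : ∀ t, R < |t| → g t = 0)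
    (hincr : ∀ t h, 0 ≤ h → h ≤ 1 → ‖g (t - h) - g t‖ ≤ B * √h) (b : ℝ) {j : ℕ}
    (hj : 2 ^ j * τ ≤ 1) :
    (2 ^ j * τ) ^ (-(2 * b)) * (τ * ∑' m : ℤ, ‖g ((m - 2 ^ j : ℤ) * τ) - g (m * τ)‖ ^ 2)
      ≤ (2 * R + 3) * B ^ 2 * (2 ^ j * τ) ^ (1 - 2 * b) := by
  have hincr_j := mul_tsum_norm_sub_sq_le hτ hτ' hR hg0 hincr (n := 2 ^ j) (by positivity)
    (by exact_mod_cast hj)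
  refine (mul_le_mul_of_nonneg_left hincr_j (by positivity)).trans_eq ?_
  rw [sub_eq_neg_add, Real.rpow_add_one (by positivity)]
  push_cast
  ring

theorem mul_integral_modulationWeight_mul_norm_fourierSeries_sq_le [InnerProductSpace ℂ E] {b : ℝ}
    (hτ : 0 < τ) (hτ' : τ ≤ 1) (hb : 0 ≤ b) (hb' : b < 1 / 2) (hR : 0 ≤ R)
    (hg0 : ∀ t, R < |t| → g t = 0) (hgB : ∀ t, ‖g t‖ ≤ B)
    (hincr : ∀ t h, 0 ≤ h → h ≤ 1 → ‖g (t - h) - g t‖ ≤ B * √h) :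
    τ * ∫ y, modulationWeight τ b y * ‖fourierSeries (fun m : ℤ => g (m * τ)) y‖ ^ 2 ∂haarAddCircle
      ≤ 5 * (2 * R + 3) * (1 + (1 - (2⁻¹ : ℝ) ^ (1 - 2 * b))⁻¹) * B ^ 2 := by
  obtain ⟨J, hJ, hJ'⟩ := exists_two_pow_mul_near_one hτ hτ'
  have hscale (j : ℕ) (hj : j ∈ Finset.range (J + 1)) : 2 ^ j * τ ≤ 1 := by
    have hjJ : j ≤ J := Nat.lt_succ_iff.mp (Finset.mem_range.mp hj)
    exact le_trans (by gcongr; norm_num) hJ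
  have hzeroth : τ * ∑' m : ℤ, ‖g (m * τ)‖ ^ 2 ≤ (2 * R + 1) * B ^ 2 :=
    mul_tsum_le_of_eq_zero_of_lt_abs_mul hτ hτ' hR (by positivity)
      (fun m hm => by rw [hg0 _ hm, norm_zero, sq, zero_mul]) fun m => by gcongr; exact hgB _
  calc τ * ∫ y, modulationWeight τ b y * ‖fourierSeries (fun m : ℤ => g (m * τ)) y‖ ^ 2
        ∂haarAddCircle
      ≤ τ * (5 * (∑' m : ℤ, ‖g (m * τ)‖ ^ 2 + ∑ j ∈ Finset.range (J + 1), (2 ^ j * τ) ^ (-(2 * b)) *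
          ∑' m : ℤ, ‖g ((m - 2 ^ j : ℤ) * τ) - g (m * τ)‖ ^ 2)) := by
        gcongr
        exact integral_modulationWeight_mul_norm_fourierSeries_sq_le
          (hasFiniteSupport_comp_int_mul hτ hg0) hτ hb hb'.le hJ'
    _ = 5 * (τ * ∑' m : ℤ, ‖g (m * τ)‖ ^ 2 + ∑ j ∈ Finset.range (J + 1), (2 ^ j * τ) ^ (-(2 * b)) *
          (τ * ∑' m : ℤ, ‖g ((m - 2 ^ j : ℤ) * τ) - g (m * τ)‖ ^ 2)) := by
        simp_rw [mul_left_comm _ τ, ← Finset.mul_sum, ← mul_add]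
        exact mul_left_comm _ _ _
    _ ≤ 5 * ((2 * R + 1) * B ^ 2 + ∑ j ∈ Finset.range (J + 1),
          (2 * R + 3) * B ^ 2 * (2 ^ j * τ) ^ (1 - 2 * b)) := by
        gcongr ?_ * (?_ + ?_)
        exact Finset.sum_le_sum fun j hj =>
          rpow_mul_tsum_norm_sub_two_pow_sq_le hτ hτ' hR hg0 hincr b (hscale j hj)
    _ ≤ 5 * ((2 * R + 3) * B ^ 2 + (2 * R + 3) * B ^ 2 * (1 - (2⁻¹ : ℝ) ^ (1 - 2 * b))⁻¹) := by
        rw [← Finset.mul_sum]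
        gcongr
        · norm_num
        · exact sum_two_pow_mul_rpow_le (by linarith) hτ hJ
    _ = 5 * (2 * R + 3) * (1 + (1 - (2⁻¹ : ℝ) ^ (1 - 2 * b))⁻¹) * B ^ 2 := by ring

end Grid

/-! ### The discrete Bourgain norm as an integral over the torus -/

section DiscreteBourgainNorm

variable {τ : ℝ}

theorem jbr_norm_dtau_rpow (hτ : 0 < τ) (b σ : ℝ) :
    jbr ‖dtau τ σ‖ ^ (2 * b) = modulationWeight τ b ((τ * σ : ℝ) : Torus) := by
  have hfourier : fourier 1 ((τ * σ : ℝ) : Torus) = exp (I * τ * σ) := by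
    rw [fourier_coe_apply]
    congr 1
    push_cast
    field_simp
  rw [modulationWeight, hfourier, dtau, norm_div, norm_real, Real.norm_of_nonneg hτ.le]

theorem integral_comp_coe_mul_sub (hτ : 0 < τ) (c : ℝ) (f : Torus → ℝ) :
    ∫ σ in (-(Real.pi / τ))..(Real.pi / τ), f ((τ * (σ - c) : ℝ) : Torus)
      = 2 * Real.pi / τ * ∫ y, f y ∂haarAddCircle := by
  have hend : τ * (Real.pi / τ) - τ * c = τ * -(Real.pi / τ) - τ * c + 2 * Real.pi := by
    field_simp
    ring
  simp_rw [mul_sub]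
  rw [intervalIntegral.integral_comp_mul_sub (fun y => f (y : Torus)) hτ.ne', hend,
    AddCircle.intervalIntegral_preimage, volume_eq_smul_haarAddCircle, integral_smul_measure,
    ENNReal.toReal_ofReal Real.two_pi_pos.le, smul_smul, smul_eq_mul]
  ring

theorem fourierSeries_apply {a : ℤ → Profile S} (ha : a.HasFiniteSupport) (y : Torus) (k : S) :
    fourierSeries a y k = ∑' m : ℤ, fourier m y * a m k :=
  (EuclideanSpace.proj k : Profile S →L[ℂ] ℂ).map_tsum
    (summable_of_hasFiniteSupport (ha.fun_smul_right _))

variable {s b : ℝ} {V : ℝ → Torus → ℂ}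

/-- The `H^s`-weighted interaction-picture coefficients of `V` at the grid times `m τ`. -/
def gridProfile (S : Finset ℤ) (τ s : ℝ) (V : ℝ → Torus → ℂ) (m : ℤ) : Profile S :=
  multiplier (sobolevSymbol s) (profile S V (m * τ))

theorem jbr_rpow_mul_jbr_norm_dtau_rpow_mul_norm_sq_eq (hτ : 0 < τ)
    (ha : (gridProfile S τ s V).HasFiniteSupport) (σ : ℝ) (k : S) :
    jbr k ^ (2 * s) * jbr ‖dtau τ (σ - (k : ℝ) ^ 2)‖ ^ (2 * b) *
        ‖(τ : ℂ) * ∑' m : ℤ, fourierCoeff (V (m * τ)) k * exp (I * m * τ * σ)‖ ^ 2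
      = τ ^ 2 * (modulationWeight τ b ((τ * (σ - (k : ℝ) ^ 2) : ℝ) : Torus) *
        ‖fourierSeries (gridProfile S τ s V) ((τ * (σ - (k : ℝ) ^ 2) : ℝ) : Torus) k‖ ^ 2) := by
  have hphase (m : ℤ) : fourier m ((τ * (σ - (k : ℝ) ^ 2) : ℝ) : Torus) * gridProfile S τ s V m k
      = sobolevSymbol s k * (fourierCoeff (V (m * τ)) k * exp (I * m * τ * σ)) := by
    have hexp : fourier m ((τ * (σ - (k : ℝ) ^ 2) : ℝ) : Torus) *
        exp (I * (m * τ : ℝ) * (k : ℂ) ^ 2) = exp (I * m * τ * σ) := by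
      rw [fourier_coe_apply, ← exp_add]
      congr 1
      push_cast
      field_simp
      ring
    rw [gridProfile, multiplier_apply, profile_apply, ← hexp]
    ring
  rw [fourierSeries_apply ha, tsum_congr hphase, tsum_mul_left, jbr_norm_dtau_rpow hτ, norm_mul,
    norm_mul, norm_sobolevSymbol, norm_real, Real.norm_of_nonneg hτ.le, mul_pow, mul_pow,
    jbr_rpow_sq]
  ring

theorem XdNorm_eq_sqrt_integral (hτ : 0 < τ) (hV : ∀ t, ∀ k ∉ S, fourierCoeff (V t) k = 0)
    (ha : (gridProfile S τ s V).HasFiniteSupport) :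
    XdNorm τ s b (fun m => V (m * τ)) = √(2 * Real.pi *
      (τ * ∫ y, modulationWeight τ b y * ‖fourierSeries (gridProfile S τ s V) y‖ ^ 2
        ∂haarAddCircle)) := by
  have hpi : 0 < Real.pi / τ := div_pos Real.pi_pos hτ
  let f (k : S) (y : Torus) : ℝ :=
    modulationWeight τ b y * ‖fourierSeries (gridProfile S τ s V) y k‖ ^ 2
  have hf (k : S) : Continuous (f k) := by
    have := continuous_fourierSeries ha
    fun_prop
  have hintegrand (σ : ℝ) : ∑' k : ℤ, jbr k ^ (2 * s) *
      jbr ‖dtau τ (σ - (k : ℝ) ^ 2)‖ ^ (2 * b) *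
        ‖(τ : ℂ) * ∑' m : ℤ, fourierCoeff (V (m * τ)) k * exp (I * m * τ * σ)‖ ^ 2
      = ∑ k : S, τ ^ 2 * f k ((τ * (σ - (k : ℝ) ^ 2) : ℝ) : Torus) := by
    rw [tsum_eq_sum (s := S) fun k hk => by simp [hV _ k hk], ← Finset.sum_coe_sort]
    exact Finset.sum_congr rfl fun k _ =>
      jbr_rpow_mul_jbr_norm_dtau_rpow_mul_norm_sq_eq hτ ha σ k
  have hintegrable (k : S) : IntervalIntegrable
      (fun σ => τ ^ 2 * f k ((τ * (σ - (k : ℝ) ^ 2) : ℝ) : Torus)) volume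
      (-(Real.pi / τ)) (Real.pi / τ) := by
    refine (((hf k).comp ?_).const_mul _).intervalIntegrable _ _
    exact (AddCircle.continuous_mk' _).comp (by fun_prop)
  have hnorm (y : Torus) : modulationWeight τ b y * ‖fourierSeries (gridProfile S τ s V) y‖ ^ 2
      = ∑ k, f k y := by
    rw [EuclideanSpace.norm_sq_eq, Finset.mul_sum]
  rw [XdNorm, integral_congr_ae (Eventually.of_forall hintegrand),
    ← intervalIntegral.integral_of_le (by linarith),
    intervalIntegral.integral_finsetSum fun k _ => hintegrable k,
    integral_congr_ae (Eventually.of_forall hnorm),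
    integral_finsetSum _ fun k _ => integrable_haarAddCircle_of_continuous (hf k), Finset.mul_sum,
    Finset.mul_sum]
  congr 1
  refine Finset.sum_congr rfl fun k _ => ?_
  rw [intervalIntegral.integral_const_mul, integral_comp_coe_mul_sub hτ _ (f k)]
  field_simp

end DiscreteBourgainNorm

/-! ### Time cutoffs of the projected solution -/

section Cutoff

variable {E : Type*} [NormedAddCommGroup E] {D : ℝ → E} {R K A h t : ℝ}

theorem BoundedHalfHolder.comp_add_right {T t' : ℝ} (hD : BoundedHalfHolder D (R + T) K)
    (ht' : |t'| ≤ T) : BoundedHalfHolder (fun t => D (t + t')) R K where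
  norm_le t ht := hD.norm_le ((abs_add_le t t').trans (add_le_add ht ht'))
  halfHolderOn s t hs hst ht := by
    have ⟨hlow, hhigh⟩ := abs_le.mp ht'
    simpa using hD.halfHolderOn (by linarith : -(R + T) ≤ s + t') (by linarith)
      (by linarith : t + t' ≤ R + T)

variable [NormedSpace ℂ E] {η : ℝ → ℝ} {L : NNReal}

theorem BoundedHalfHolder.norm_smul_le (hD : BoundedHalfHolder D (R + 1) K) (hR : 0 ≤ R)
    (hηA : ∀ t, ‖η t‖ ≤ A) (hη0 : ∀ t, R ≤ |t| → η t = 0) (t : ℝ) :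
    ‖(η t : ℂ) • D t‖ ≤ A * K := by
  have hA : 0 ≤ A := (norm_nonneg _).trans (hηA 0)
  have hK : 0 ≤ K := (norm_nonneg _).trans (hD.norm_le (by rw [abs_zero]; positivity))
  rcases le_total R |t| with ht | ht
  · rw [hη0 t ht, ofReal_zero, zero_smul, norm_zero]
    positivity
  · rw [norm_smul, norm_real]
    gcongr
    exacts [hηA t, hD.norm_le (by linarith)]

theorem norm_smul_sub_smul_le (hη : LipschitzWith L η) (hηA : ∀ t, ‖η t‖ ≤ A) {s t : ℝ} (x y : E) :
    ‖(η s : ℂ) • x - (η t : ℂ) • y‖ ≤ A * ‖x - y‖ + L * |s - t| * ‖y‖ := by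
  calc ‖(η s : ℂ) • x - (η t : ℂ) • y‖
      = ‖(η s : ℂ) • (x - y) + ((η s - η t : ℝ) : ℂ) • y‖ := by
        rw [ofReal_sub, smul_sub, sub_smul, sub_add_sub_cancel]
    _ ≤ ‖η s‖ * ‖x - y‖ + ‖η s - η t‖ * ‖y‖ := by
        refine (norm_add_le _ _).trans_eq ?_
        rw [norm_smul, norm_smul, norm_real, norm_real]
    _ ≤ A * ‖x - y‖ + L * |s - t| * ‖y‖ := by
        gcongr
        exacts [hηA s, hη.norm_sub_le s t]

theorem BoundedHalfHolder.norm_smul_sub_smul_le (hD : BoundedHalfHolder D (R + 1) K) (hR : 0 ≤ R)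
    (hη : LipschitzWith L η) (hηA : ∀ t, ‖η t‖ ≤ A) (hη0 : ∀ t, R ≤ |t| → η t = 0)
    (hh : 0 ≤ h) (hh1 : h ≤ 1) :
    ‖(η (t - h) : ℂ) • D (t - h) - (η t : ℂ) • D t‖ ≤ (A + L) * K * √h := by
  have hA : 0 ≤ A := (norm_nonneg _).trans (hηA 0)
  have hK : 0 ≤ K := (norm_nonneg _).trans (hD.norm_le (by rw [abs_zero]; positivity))
  rcases lt_or_ge (t - h) (-(R + 1)) with hlow | hlow
  · rw [hη0 (t - h) (le_abs.mpr (.inr (by linarith))), hη0 t (le_abs.mpr (.inr (by linarith)))]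
    simpa using by positivity
  rcases lt_or_ge (R + 1) t with hhigh | hhigh
  · rw [hη0 (t - h) (le_abs.mpr (.inl (by linarith))), hη0 t (le_abs.mpr (.inl (by linarith)))]
    simpa using by positivity
  have hincr : ‖D (t - h) - D t‖ ≤ K * √h := by
    rw [norm_sub_rev]
    simpa using hD.halfHolderOn hlow (by linarith : t - h ≤ t) hhigh
  have hnorm : ‖D t‖ ≤ K := hD.norm_le (abs_le.mpr ⟨by linarith, hhigh⟩)
  have hsqrt : h ≤ √h := Real.le_sqrt_of_sq_le (by nlinarith)
  calc ‖(η (t - h) : ℂ) • D (t - h) - (η t : ℂ) • D t‖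
      ≤ A * ‖D (t - h) - D t‖ + L * |t - h - t| * ‖D t‖ :=
        ProjectedNLS.norm_smul_sub_smul_le hη hηA _ _
    _ = A * ‖D (t - h) - D t‖ + L * h * ‖D t‖ := by
        rw [sub_sub_cancel_left, abs_neg, abs_of_nonneg hh]
    _ ≤ A * (K * √h) + L * √h * K := by gcongr
    _ = (A + L) * K * √h := by ring

end Cutoff

section Solution

variable {τ μ s₀ s₁ b R K A t' : ℝ} {u₀ : Torus → ℂ} {v : ℝ → Torus → ℂ} {η : ℝ → ℝ} {L : NNReal}

theorem BoundedHalfHolder.multiplier {D : ℝ → Profile S} (hD : BoundedHalfHolder D R K)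
    {m : ℤ → ℂ} (hm : ∀ k, ‖m k‖ = 1) :
    BoundedHalfHolder (fun t => ProjectedNLS.multiplier m (D t)) R K where
  norm_le t ht := (norm_multiplier_of_norm_eq_one hm _).trans_le (hD.norm_le ht)
  halfHolderOn s t hs hst ht := by
    rw [← map_sub, norm_multiplier_of_norm_eq_one hm]
    exact hD.halfHolderOn hs hst ht

theorem norm_multiplier_profile_zero_le_hsNorm (hu₀ : InHs s₀ u₀) (hv : IsProjSolution μ τ u₀ v) :
    ‖multiplier (sobolevSymbol s₀) (profile (cutoffModes τ) v 0)‖ ≤ hsNorm s₀ u₀ := by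
  rw [norm_multiplier_sobolevSymbol]
  refine Real.sqrt_le_sqrt ?_
  simp_rw [profile_zero_apply hv, mul_pow, jbr_rpow_sq]
  rw [Finset.sum_coe_sort (cutoffModes τ) fun k => jbr k ^ (2 * s₀) * ‖fourierCoeff u₀ k‖ ^ 2]
  exact hu₀.2.sum_le_tsum _ fun k _ =>
    mul_nonneg (Real.rpow_nonneg (Real.sqrt_nonneg _) _) (sq_nonneg _)

theorem multiplier_profile_mul_translate (s t' t : ℝ) :
    multiplier (sobolevSymbol s) (profile S (fun t x => (η t : ℂ) * v (t + t') x) t)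
      = (η t : ℂ) • multiplier (fun k => exp (-I * t' * (k : ℂ) ^ 2))
        (multiplier (sobolevSymbol s) (profile S v (t + t'))) := by
  ext k
  have hexp : exp (I * t * (k : ℂ) ^ 2)
      = exp (-I * t' * (k : ℂ) ^ 2) * exp (I * (t + t' : ℝ) * (k : ℂ) ^ 2) := by
    rw [← exp_add]; push_cast; ring_nf
  simp only [PiLp.smul_apply, multiplier_apply, profile_apply, smul_eq_mul, hexp,
    fourierCoeff.const_mul]
  ring

theorem XdNorm_mul_translate_le (hτ : 0 < τ) (hτ' : τ ≤ 1) (hb : 0 ≤ b) (hb' : b < 1 / 2)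
    (hv : ∀ t, ∀ k ∉ S, fourierCoeff (v t) k = 0)
    (hD : BoundedHalfHolder (fun t => multiplier (sobolevSymbol s₁) (profile S v (t + t')))
      (R + 1) K)
    (hR : 0 ≤ R) (hη : LipschitzWith L η) (hηA : ∀ t, ‖η t‖ ≤ A) (hη0 : ∀ t, R ≤ |t| → η t = 0) :
    XdNorm τ s₁ b (fun n x => (η (n * τ) : ℂ) * v (n * τ + t') x) ≤
      √(2 * Real.pi * (5 * (2 * R + 3) * (1 + (1 - (2⁻¹ : ℝ) ^ (1 - 2 * b))⁻¹) *
        ((A + L) * K) ^ 2)) := by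
  have hphase (k : ℤ) : ‖exp (-I * t' * (k : ℂ) ^ 2)‖ = 1 := by
    have hnorm := norm_exp_neg_I_mul_ofReal_mul_ofReal t' ((k : ℝ) ^ 2)
    push_cast at hnorm
    exact hnorm
  have hD' := hD.multiplier hphase
  have hK : 0 ≤ K := (norm_nonneg _).trans (hD.norm_le (by rw [abs_zero]; positivity) : _ ≤ K)
  have hAK : A * K ≤ (A + L) * K := by
    gcongr
    exact le_add_of_nonneg_right L.coe_nonneg
  let g (t : ℝ) : Profile S := (η t : ℂ) • multiplier (fun k => exp (-I * t' * (k : ℂ) ^ 2))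
    (multiplier (sobolevSymbol s₁) (profile S v (t + t')))
  have hg0 (t : ℝ) (ht : R < |t|) : g t = 0 := by
    simp only [g, hη0 t ht.le, ofReal_zero, zero_smul]
  have hgrid : gridProfile S τ s₁ (fun t x => (η t : ℂ) * v (t + t') x)
      = fun m : ℤ => g (m * τ) :=
    funext fun m => multiplier_profile_mul_translate s₁ t' (m * τ)
  have hfinite := hgrid ▸ hasFiniteSupport_comp_int_mul hτ hg0
  have hV (t : ℝ) (k : ℤ) (hk : k ∉ S) :
      fourierCoeff (fun x => (η t : ℂ) * v (t + t') x) k = 0 := by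
    rw [fourierCoeff.const_mul, hv _ k hk, mul_zero]
  rw [XdNorm_eq_sqrt_integral (V := fun t x => (η t : ℂ) * v (t + t') x) hτ hV hfinite, hgrid]
  refine Real.sqrt_le_sqrt (mul_le_mul_of_nonneg_left ?_ Real.two_pi_pos.le)
  exact mul_integral_modulationWeight_mul_norm_fourierSeries_sq_le hτ hτ' hb hb' hR hg0
    (fun t => (hD'.norm_smul_le hR hηA hη0 t).trans hAK) fun t h hh hh1 =>
      hD'.norm_smul_sub_smul_le hR hη hηA hη0 hh hh1

end Solution

end ProjectedNLS

open ProjectedNLS in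
theorem projected_solution_discrete_bound_general {μ : ℝ} (hμ : |μ| ≤ 1) {s₀ s₁ : ℝ} (hs₁ : 0 ≤ s₁)
    (hs₁lt : s₁ < s₀) {u₀ : Torus → ℂ} (hu₀ : InHs s₀ u₀) {η : ℝ → ℝ} {L : NNReal}
    (hη : LipschitzWith L η) (hηc : HasCompactSupport η) {b : ℝ} (hb : 0 ≤ b) (hb' : b < 1 / 2)
    (T : ℝ) :
    ∃ C > (0 : ℝ), ∀ τ ∈ Set.Ioc (0 : ℝ) 1, ∀ v : ℝ → Torus → ℂ, IsProjSolution μ τ u₀ v →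
      ∀ t' : ℝ, |t'| ≤ T →
        XdNorm τ s₁ b (fun n x => (η ((n : ℝ) * τ) : ℂ) * v ((n : ℝ) * τ + t') x) ≤ C := by
  obtain ⟨A, hηA⟩ := hηc.exists_bound_of_continuous hη.continuous
  obtain ⟨R, hR, hη0⟩ := hηc.exists_pos_le_norm
  obtain ⟨K, hK⟩ := exists_isRegularityConstant hs₁ hs₁lt (hsNorm s₀ u₀) (R + 1 + T)
  refine ⟨√(2 * Real.pi * (5 * (2 * R + 3) * (1 + (1 - (2⁻¹ : ℝ) ^ (1 - 2 * b))⁻¹) *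
    ((A + L) * K) ^ 2)) + 1, by positivity,
    fun τ ⟨hτ, hτ1⟩ v hv t' ht' => le_add_of_le_of_nonneg ?_ zero_le_one⟩
  have hregular := hK hμ (isProfileSolution_profile hv)
    (norm_multiplier_profile_zero_le_hsNorm hu₀ hv)
  exact XdNorm_mul_translate_le hτ hτ1 hb hb'
    (fun t _ => fourierCoeff_eq_zero_of_notMem_cutoffModes hv t) (hregular.comp_add_right ht')
    hR.le hη hηA hη0

/-- Uniform-in-`τ` discrete Bourgain bound for the time-shifted grid
restrictions of the projected solution. -/
theorem projected_solution_discrete_bound (μ : ℝ) (hμ : μ = 1 ∨ μ = -1)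
    (s₀ : ℝ) (hs₀ : 0 < s₀) (u₀ : Torus → ℂ) (hu₀ : InHs s₀ u₀)
    (η : ℝ → ℝ) (hη : ContDiff ℝ (⊤ : ℕ∞) η) (hηc : HasCompactSupport η)
    (s₁ : ℝ) (hs₁ : 0 ≤ s₁) (hs₁lt : s₁ < s₀) :
    ∃ C > (0 : ℝ), ∀ τ ∈ Set.Ioc (0 : ℝ) 1, ∀ v : ℝ → Torus → ℂ,
      IsProjSolution μ τ u₀ v → ContHsOn s₀ Set.univ v →
      ∀ t' ∈ Set.Icc (0 : ℝ) (4 * τ),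
        XdNorm τ s₁ (3 / 8) (fun n x => (η ((n : ℝ) * τ) : ℂ) * v ((n : ℝ) * τ + t') x)
          ≤ C := by
  obtain ⟨L, hL⟩ := hη.lipschitzWith_of_hasCompactSupport hηc (by simp)
  have hμ1 : |μ| ≤ 1 := by rcases hμ with rfl | rfl <;> simp
  obtain ⟨C, hC, hbound⟩ := projected_solution_discrete_bound_general hμ1 hs₁ hs₁lt hu₀ hL hηc
    (b := 3 / 8) (by norm_num) (by norm_num) 4
  refine ⟨C, hC, fun τ hτ v hv _ t' ht' => hbound τ hτ v hv t' ?_⟩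
  rw [abs_of_nonneg ht'.1]
  linarith [ht'.2, hτ.2]
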